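/- Let $a$, $b$, $c$ be distinct primes with $a < b$, and suppose the equation $a^x + b^y = c^z$ has more than one solution in positive integers $(x,y,z)$. If $(a,b,c)$ is not one of $(2,3,5)$, $(2,3,11)$, $(2,5,3)$, $(2,7,3)$, $(3,5,2)$, $(3,13,2)$, then the equation has exactly two solutions $(x_1,y_1,z_1)$ and $(x_2,y_2,z_2)$, with $2 \mid x_1$, $2 \mid y_1$, $z_1 = 1$, $2 \nmid y_2$, and moreover $z_2 > 1$. -/

import Mathlib

namespace QD
open QuadraticAlgebra

lemma dvd_re (p : ℤ) (hp : Prime p) (A B : ℤ) : ∀ (m : ℕ) (r s : ℤ),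
    p ^ (2 * m) ∣ r * r + B * r * s - A * s * s → p ^ m ∣ s → p ^ m ∣ r := by
  intro m
  induction m with
  | zero => intro r s _ _; simp
  | succ m ih =>
    intro r s h1 h2
    have hps : p ∣ s := dvd_trans (dvd_pow_self p (by omega)) h2
    have hpN : p ∣ r * r + B * r * s - A * s * s := dvd_trans (dvd_pow_self p (by omega)) h1
    obtain ⟨s', rfl⟩ := hps
    have hrr : p ∣ r * r := by
      obtain ⟨t, ht⟩ := hpN
      exact ⟨t - B * r * s' + A * s' * (p * s'), by linear_combination ht⟩
    have hr : p ∣ r := by rcases hp.dvd_or_dvd hrr with h | h <;> exact h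
    obtain ⟨r', rfl⟩ := hr
    have hp0 : p ≠ 0 := hp.ne_zero
    have h3 : p ^ m ∣ s' := by
      rw [pow_succ'] at h2
      exact (mul_dvd_mul_iff_left hp0).1 h2
    have h4 : p ^ (2 * m) ∣ r' * r' + B * r' * s' - A * s' * s' := by
      have h5 : p ^ 2 * p ^ (2 * m) ∣ p ^ 2 * (r' * r' + B * r' * s' - A * s' * s') := by
        have e : p ^ 2 * p ^ (2 * m) = p ^ (2 * (m + 1)) := by ring
        rw [e]
        convert h1 using 1
        ring
      exact (mul_dvd_mul_iff_left (pow_ne_zero 2 hp0)).1 h5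
    rw [pow_succ']
    exact mul_dvd_mul_left p (ih r' s' h4 h3)

variable {A B : ℤ}

def tr (x : QuadraticAlgebra ℤ A B) : ℤ := 2 * x.re + B * x.im

lemma cancel_int (c : ℤ) (hc : c ≠ 0) (x y : QuadraticAlgebra ℤ A B)
    (h1 : c * x.re = c * y.re) (h2 : c * x.im = c * y.im) : x = y := by
  ext
  · exact mul_left_cancel₀ hc h1
  · exact mul_left_cancel₀ hc h2

lemma step1 (p : ℤ) (hp : Prime p) (m n : ℕ) (hmn : m ≤ n) (α β : QuadraticAlgebra ℤ A B)
    (hα : norm α = p ^ m) (hβ : norm β = p ^ n)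
    (him : p ^ m ∣ (β * star α).im) : ∃ κ, β = α * κ ∧ norm κ = p ^ (n - m) := by
  have hN : norm (β * star α) = p ^ m * p ^ n := by
    rw [map_mul, QuadraticAlgebra.norm_star, hα, hβ]; ring
  have hre : p ^ m ∣ (β * star α).re := by
    apply dvd_re p hp A B m _ (β * star α).im _ him
    rw [← norm_def, hN, two_mul, pow_add]
    exact mul_dvd_mul_left _ (pow_dvd_pow _ hmn)
  obtain ⟨k1, hk1⟩ := hre
  obtain ⟨k2, hk2⟩ := him
  have hpm : p ^ m ≠ 0 := pow_ne_zero _ hp.ne_zero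
  have hκ : β = α * ⟨k1, k2⟩ := by
    rw [norm_def] at hα
    simp only [re_mul, im_mul, re_star, im_star] at hk1 hk2
    apply cancel_int (p ^ m) hpm
    · simp only [re_mul]
      linear_combination (-β.re) * hα + α.re * hk1 + A * α.im * hk2
    · simp only [im_mul]
      linear_combination (-β.im) * hα + α.re * hk2 + α.im * hk1 + B * α.im * hk2
  refine ⟨⟨k1, k2⟩, hκ, ?_⟩
  have : p ^ m * norm (⟨k1, k2⟩ : QuadraticAlgebra ℤ A B) = p ^ m * p ^ (n - m) := by
    rw [← hα, ← map_mul, ← hκ, hα, hβ, ← pow_add]; congr 1; omega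
  exact mul_left_cancel₀ hpm this

lemma step2 (p : ℤ) (hp : Prime p)
    (H : ∀ x : QuadraticAlgebra ℤ A B, p ∣ norm x → p ∣ tr x → p ∣ x.im)
    (m n : ℕ) (hmn : m ≤ n) (hn : 1 ≤ n) (α β : QuadraticAlgebra ℤ A B)
    (hα : norm α = p ^ m) (hβ : norm β = p ^ n) (ha : ¬ p ∣ α.im) (hb : ¬ p ∣ β.im) :
    ∃ κ, (β = α * κ ∨ β = star α * κ) ∧ norm κ = p ^ (n - m) := by
  have htr : ¬ p ∣ tr β := fun h => hb (H β (by rw [hβ]; exact dvd_pow_self p (by omega)) h)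
  have hprod : p ^ m ∣ (β * star α).im * (β * star (star α)).im := by
    rw [star_star]
    have : (β * star α).im * (β * α).im = β.im ^ 2 * norm α - α.im ^ 2 * norm β := by
      simp only [norm_def, re_mul, im_mul, re_star, im_star]; ring
    rw [this, hα, hβ]
    exact dvd_sub (dvd_mul_left _ _) (dvd_mul_of_dvd_right (pow_dvd_pow _ hmn) _)
  have hdiff : (β * star (star α)).im - (β * star α).im = α.im * tr β := by
    rw [star_star]
    simp only [tr, re_mul, im_mul, re_star, im_star]; ring
  by_cases h1 : p ∣ (β * star α).im
  · have h2 : ¬ p ∣ (β * star (star α)).im := by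
      intro h2
      have := dvd_sub h2 h1
      rw [hdiff] at this
      rcases hp.dvd_or_dvd this with h | h
      · exact ha h
      · exact htr h
    obtain ⟨κ, h3, h4⟩ := step1 p hp m n hmn α β hα hβ
      (hp.pow_dvd_of_dvd_mul_right m h2 hprod)
    exact ⟨κ, Or.inl h3, h4⟩
  · obtain ⟨κ, h3, h4⟩ := step1 p hp m n hmn (star α) β (by rw [QuadraticAlgebra.norm_star, hα]) hβ
      (hp.pow_dvd_of_dvd_mul_left m h1 hprod)
    exact ⟨κ, Or.inr h3, h4⟩

/-- `x` has norm a positive power of `p` and is not divisible by `p`. -/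
def Good (p : ℤ) (n : ℕ) (x : QuadraticAlgebra ℤ A B) : Prop :=
  1 ≤ n ∧ norm x = p ^ n ∧ ¬ p ∣ x.im

/-- equal up to sign and conjugation -/
def Sim (x y : QuadraticAlgebra ℤ A B) : Prop := x = y ∨ x = -y ∨ x = star y ∨ x = - star y

lemma descent (p : ℤ) (hp : Prime p)
    (H : ∀ x : QuadraticAlgebra ℤ A B, p ∣ norm x → p ∣ tr x → p ∣ x.im)
    (U : ∀ x : QuadraticAlgebra ℤ A B, norm x = 1 → x = 1 ∨ x = -1)
    (m : ℕ) (ε : QuadraticAlgebra ℤ A B) (hε : Good p m ε)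
    (hmin : ∀ n (x : QuadraticAlgebra ℤ A B), Good p n x → m ≤ n) :
    ∀ (n : ℕ) (β : QuadraticAlgebra ℤ A B), Good p n β → ∃ k, 1 ≤ k ∧ n = m * k ∧ Sim β (ε ^ k) := by
  intro n
  induction n using Nat.strong_induction_on with
  | _ n ih =>
  intro β hβ
  have hmn := hmin n β hβ
  obtain ⟨κ, hκ, hN⟩ := step2 p hp H m n hmn hβ.1 ε β hε.2.1 hβ.2.1 hε.2.2 hβ.2.2
  rcases Nat.eq_or_lt_of_le hmn with heq | hlt
  · subst heq
    refine ⟨1, le_rfl, by simp, ?_⟩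
    have := U κ (by simpa using hN)
    rw [pow_one]
    unfold Sim
    rcases hκ with h | h <;> rcases this with h' | h' <;> rw [h, h'] <;> simp
  · have hgκ : Good p (n - m) κ := by
      refine ⟨by omega, hN, ?_⟩
      intro hd
      have hd2 : p ∣ κ.re := by
        have h1 : p ∣ norm κ := by rw [hN]; exact dvd_pow_self p (by omega)
        rw [norm_def] at h1
        have h2 : p ∣ κ.re * κ.re := by
          have h3 : κ.re * κ.re = (κ.re * κ.re + B * κ.re * κ.im - A * κ.im * κ.im)
            - (B * κ.re - A * κ.im) * κ.im := by ring
          rw [h3]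
          exact dvd_sub h1 (dvd_mul_of_dvd_right hd _)
        rcases hp.dvd_or_dvd h2 with h | h <;> exact h
      apply hβ.2.2
      rcases hκ with h | h <;> rw [h, im_mul] <;>
      exact dvd_add (dvd_add (dvd_mul_of_dvd_right hd _) (dvd_mul_of_dvd_right hd2 _))
        (dvd_mul_of_dvd_right hd _)
    obtain ⟨k, hk1, hnk, hk⟩ := ih (n - m) (by have := hε.1; omega) κ hgκ
    refine ⟨k + 1, by omega, by rw [mul_add]; omega, ?_⟩
    have key : ∀ y : QuadraticAlgebra ℤ A B, β ≠ ε * star ε * y := by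
      intro y hy
      apply hβ.2.2
      rw [← algebraMap_norm_eq_mul_star, hε.2.1] at hy
      rw [hy]
      obtain ⟨m', rfl⟩ : ∃ m', m = m' + 1 := ⟨m - 1, by have := hε.1; omega⟩
      refine ⟨p ^ m' * y.im, ?_⟩
      rw [im_mul, algebraMap_re, algebraMap_im]
      ring
    obtain ⟨k', rfl⟩ : ∃ k', k = k' + 1 := ⟨k - 1, by omega⟩
    unfold Sim at hk ⊢
    simp only [star_pow] at hk ⊢
    rcases hκ with h | h <;> rcases hk with hk | hk | hk | hk
    · left; rw [h, hk]; ring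
    · right; left; rw [h, hk]; ring
    · exact absurd (by rw [h, hk]; ring) (key (star ε ^ k'))
    · exact absurd (by rw [h, hk]; ring) (key (-star ε ^ k'))
    · exact absurd (by rw [h, hk]; ring) (key (ε ^ k'))
    · exact absurd (by rw [h, hk]; ring) (key (-ε ^ k'))
    · right; right; left; rw [h, hk]; ring
    · right; right; right; rw [h, hk]; ring

lemma descent' (p : ℤ) (hp : Prime p)
    (H : ∀ x : QuadraticAlgebra ℤ A B, p ∣ norm x → p ∣ tr x → p ∣ x.im)
    (U : ∀ x : QuadraticAlgebra ℤ A B, norm x = 1 → x = 1 ∨ x = -1)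
    (n0 : ℕ) (x0 : QuadraticAlgebra ℤ A B) (h0 : Good p n0 x0) :
    ∃ m, ∃ ε : QuadraticAlgebra ℤ A B, Good p m ε ∧ 
    ∀ (n : ℕ) (β : QuadraticAlgebra ℤ A B), Good p n β → ∃ k, 1 ≤ k ∧ n = m * k ∧ Sim β (ε ^ k) := by
  classical
  have hex : ∃ m, ∃ ε : QuadraticAlgebra ℤ A B, Good p m ε := ⟨n0, x0, h0⟩
  obtain ⟨ε, hε⟩ := Nat.find_spec hex
  exact ⟨Nat.find hex, ε, hε, descent p hp H U _ ε hε (fun n x hx => Nat.find_min' hex ⟨x, hx⟩)⟩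

lemma Sim.tr {x y : QuadraticAlgebra ℤ A B} (h : Sim x y) : |tr x| = |tr y| := by
  rcases h with rfl | rfl | rfl | rfl
  · rfl
  · rw [← abs_neg]; congr 1; simp [QD.tr]; ring
  · congr 1; simp [QD.tr]; ring
  · rw [← abs_neg]; congr 1; simp [QD.tr]; ring

lemma Sim.im {x y : QuadraticAlgebra ℤ A B} (h : Sim x y) : |x.im| = |y.im| := by
  rcases h with rfl | rfl | rfl | rfl <;> simp

/-- P and Q sequences -/
def pq (r E : ℤ) : ℕ → ℤ × ℤ
  | 0 => (1, 0)
  | n + 1 => (r * (pq r E n).1 + E * (pq r E n).2, (pq r E n).1 + r * (pq r E n).2)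

def P (r E : ℤ) (n : ℕ) : ℤ := (pq r E n).1
def Q (r E : ℤ) (n : ℕ) : ℤ := (pq r E n).2

@[simp] lemma P_zero (r E : ℤ) : P r E 0 = 1 := rfl
@[simp] lemma Q_zero (r E : ℤ) : Q r E 0 = 0 := rfl
lemma P_succ (r E : ℤ) (n : ℕ) : P r E (n + 1) = r * P r E n + E * Q r E n := rfl
lemma Q_succ (r E : ℤ) (n : ℕ) : Q r E (n + 1) = P r E n + r * Q r E n := rfl

lemma pow_tr_im (x : QuadraticAlgebra ℤ A B) (n : ℕ) :
    2 ^ n * tr (x ^ n) = 2 * P (tr x) ((4 * A + B ^ 2) * x.im ^ 2) n ∧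
    2 ^ n * (x ^ n).im = 2 * (x.im * Q (tr x) ((4 * A + B ^ 2) * x.im ^ 2) n) := by
  induction n with
  | zero => constructor <;> simp [tr]
  | succ n ih =>
    obtain ⟨h1, h2⟩ := ih
    rw [P_succ, Q_succ]
    simp only [tr, pow_succ, re_mul, im_mul] at *
    constructor
    · linear_combination (2 * x.re + B * x.im) * h1 + (4 * A + B ^ 2) * x.im * h2
    · linear_combination x.im * h1 + (2 * x.re + B * x.im) * h2

lemma pow_re_im (x : QuadraticAlgebra ℤ A 0) (n : ℕ) :
    (x ^ n).re = P x.re (A * x.im ^ 2) n ∧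
    (x ^ n).im = x.im * Q x.re (A * x.im ^ 2) n := by
  induction n with
  | zero => constructor <;> simp
  | succ n ih =>
    obtain ⟨h1, h2⟩ := ih
    rw [P_succ, Q_succ]
    simp only [pow_succ, re_mul, im_mul] at *
    constructor
    · linear_combination (x.re) * h1 + A * x.im * h2
    · linear_combination x.im * h1 + x.re * h2

end QD


namespace QD
open QuadraticAlgebra

section PQ

lemma PQ_norm (r E : ℤ) (n : ℕ) : P r E n ^ 2 - E * Q r E n ^ 2 = (r ^ 2 - E) ^ n := by
  induction n with
  | zero => simp
  | succ n ih => rw [P_succ, Q_succ, pow_succ (r ^ 2 - E), ← ih]; ring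

lemma PQ_odd (r E : ℤ) (i : ℕ) : (∃ t, P r E (2 * i + 1) = r * ((2 * i + 1) * E ^ i + r ^ 2 * t)) ∧
    (∃ t, Q r E (2 * i + 1) = E ^ i + r ^ 2 * t) := by
  induction i with
  | zero => exact ⟨⟨0, by simp [P_succ]⟩, ⟨0, by simp [Q_succ]⟩⟩
  | succ i ih =>
    obtain ⟨⟨t, ht⟩, ⟨t', ht'⟩⟩ := ih
    have e : 2 * (i + 1) + 1 = (2 * i + 1) + 1 + 1 := by ring
    rw [e]
    constructor
    · refine ⟨(2 * i + 1) * E ^ i + r ^ 2 * t + E * t + 2 * E * t', ?_⟩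
      rw [P_succ _ _ (2 * i + 1 + 1), P_succ _ _ (2 * i + 1), Q_succ _ _ (2 * i + 1), ht, ht']; push_cast; ring
    · refine ⟨2 * ((2 * i + 1) * E ^ i + r ^ 2 * t) + E ^ i + r ^ 2 * t' + E * t', ?_⟩
      rw [Q_succ _ _ (2 * i + 1 + 1), P_succ _ _ (2 * i + 1), Q_succ _ _ (2 * i + 1), ht, ht']; push_cast; ring

lemma Q_odd' (r E : ℤ) (n : ℕ) : (∃ t, P r E (n + 1) = r ^ (n + 1) + E * t) ∧
    (∃ t, Q r E (n + 1) = (n + 1) * r ^ n + E * t) := by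
  induction n with
  | zero => exact ⟨⟨0, by simp [P_succ]⟩, ⟨0, by simp [Q_succ]⟩⟩
  | succ i ih =>
    obtain ⟨⟨t, ht⟩, ⟨t', ht'⟩⟩ := ih
    constructor
    · refine ⟨r * t + Q r E (i + 1), ?_⟩
      rw [P_succ, ht]; push_cast; ring
    · refine ⟨t + r * t', ?_⟩
      rw [Q_succ, ht, ht']; push_cast; ring

lemma Q_three (r E : ℤ) (n : ℕ) :
    (∃ t, P r E (n + 3) = r ^ (n + 3) + (n + 3).choose 2 * r ^ (n + 1) * E + E ^ 2 * t) ∧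
    (∃ t, Q r E (n + 3) = (n + 3) * r ^ (n + 2) + (n + 3).choose 3 * r ^ n * E + E ^ 2 * t) := by
  induction n with
  | zero =>
    refine ⟨⟨0, ?_⟩, ⟨0, ?_⟩⟩ <;> simp [P_succ, Q_succ, Nat.choose] <;> ring
  | succ i ih =>
    obtain ⟨⟨t, ht⟩, ⟨t', ht'⟩⟩ := ih
    have e : i + 1 + 3 = (i + 3) + 1 := by ring
    have e2 : ((i + 3 + 1).choose 2 : ℤ) = (i + 3) + (i + 3).choose 2 := by
      have := Nat.choose_succ_succ (i + 3) 1
      rw [Nat.choose_one_right] at this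
      exact_mod_cast this
    have e3 : ((i + 3 + 1).choose 3 : ℤ) = (i + 3).choose 2 + (i + 3).choose 3 := by
      exact_mod_cast Nat.choose_succ_succ (i + 3) 2
    rw [e]
    constructor
    · refine ⟨r * t + (i + 3).choose 3 * r ^ i + E * t', ?_⟩
      rw [P_succ, ht, ht', e2]; push_cast; ring
    · refine ⟨t + r * t', ?_⟩
      rw [Q_succ, ht, ht', e3]; push_cast; ring

/-- p-adic behaviour of the real part -/
lemma P_adic (p q : ℕ) (hp : p.Prime) (hq : q.Prime) (hq2 : q ≠ 2) (r E : ℤ) (h1 : (p : ℤ) ∣ r)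
    (h2 : ¬ (p : ℤ) ∣ E) : ∃ W, P r E q = r * W ∧ (p ≠ q → ¬ (p : ℤ) ∣ W) ∧ ¬ ((p : ℤ) ^ 2 ∣ W) := by
  obtain ⟨i, hi⟩ := hq.odd_of_ne_two hq2
  obtain ⟨⟨t, ht⟩, -⟩ := PQ_odd r E i
  rw [← hi] at ht
  have hpp : Prime (p : ℤ) := Nat.prime_iff_prime_int.1 hp
  have hqi : (2 * (i : ℤ) + 1) = q := by rw [hi]; push_cast; ring
  rw [hqi] at ht
  have hr2 : (p : ℤ) ^ 2 ∣ r ^ 2 * t := dvd_mul_of_dvd_left (pow_dvd_pow_of_dvd h1 2) _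
  refine ⟨_, ht, ?_, ?_⟩
  · intro hpq h
    have h3 : (p : ℤ) ∣ q * E ^ i :=
      (dvd_add_left (dvd_trans (dvd_pow_self _ two_ne_zero) hr2)).1 h
    rcases hpp.dvd_or_dvd h3 with h | h
    · exact hpq ((Nat.prime_dvd_prime_iff_eq hp hq).1 (by exact_mod_cast h))
    · exact h2 (hpp.dvd_of_dvd_pow h)
  · intro h
    have h3 : (p : ℤ) ^ 2 ∣ q * E ^ i := (dvd_add_left hr2).1 h
    have h4 : (p : ℤ) ^ 2 ∣ q := hpp.pow_dvd_of_dvd_mul_right 2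
      (fun h => h2 (hpp.dvd_of_dvd_pow h)) h3
    have h5 : p ^ 2 ∣ q := by exact_mod_cast h4
    have h6 : p = q := (Nat.prime_dvd_prime_iff_eq hp hq).1 (dvd_trans (dvd_pow_self _ two_ne_zero) h5)
    subst h6
    have := Nat.le_of_dvd hp.pos h5
    nlinarith [hp.two_le]

lemma Q_adic (p q : ℕ) (hp : p.Prime) (hq : q.Prime) (r E : ℤ) (h1 : (p : ℤ) ∣ E)
    (h2 : ¬ (p : ℤ) ∣ r) : (p ≠ q → ¬ (p : ℤ) ∣ Q r E q) ∧ (5 ≤ q → ¬ ((p : ℤ) ^ 2 ∣ Q r E q)) := by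
  have hpp : Prime (p : ℤ) := Nat.prime_iff_prime_int.1 hp
  have A1 : p ≠ q → ¬ (p : ℤ) ∣ Q r E q := by
    intro hpq h
    obtain ⟨-, ⟨t, ht⟩⟩ := Q_odd' r E (q - 1)
    have e : q - 1 + 1 = q := by have := hq.pos; omega
    have e' : (((q - 1 : ℕ) : ℤ) + 1) = q := by exact_mod_cast e
    rw [e, e'] at ht
    rw [ht] at h
    have h3 := (dvd_add_left (dvd_mul_of_dvd_left h1 t)).1 h
    rcases hpp.dvd_or_dvd h3 with h | h
    · exact hpq ((Nat.prime_dvd_prime_iff_eq hp hq).1 (by exact_mod_cast h))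
    · exact h2 (hpp.dvd_of_dvd_pow h)
  refine ⟨A1, ?_⟩
  intro hq5 h
  by_cases hpq : p = q
  · subst hpq
    obtain ⟨-, ⟨t, ht⟩⟩ := Q_three r E (p - 3)
    have e : p - 3 + 3 = p := by omega
    have e' : (((p - 3 : ℕ) : ℤ) + 3) = p := by exact_mod_cast e
    rw [e, e'] at ht
    rw [ht] at h
    have h3 : (p : ℤ) ^ 2 ∣ E ^ 2 * t := dvd_mul_of_dvd_left (pow_dvd_pow_of_dvd h1 2) _
    have h4 : (p : ℤ) ∣ (p.choose 3 : ℤ) := by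
      exact_mod_cast hp.dvd_choose_self (by norm_num) (by omega)
    have h5 : (p : ℤ) ^ 2 ∣ (p.choose 3 : ℤ) * r ^ (p - 3) * E := by
      rw [pow_two]; exact mul_dvd_mul (dvd_mul_of_dvd_left h4 _) h1
    have h6 := (dvd_add_left h5).1 ((dvd_add_left h3).1 h)
    rw [pow_two] at h6
    have h7 := (mul_dvd_mul_iff_left hpp.ne_zero).1 h6
    exact h2 (hpp.dvd_of_dvd_pow h7)
  · exact A1 hpq (dvd_trans (dvd_pow_self _ two_ne_zero) h)

end PQ

section uniq
variable {A B : ℤ}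

lemma im_not_dvd_of_pow (p : ℤ) (hp : Prime p) (x : QuadraticAlgebra ℤ A B) (q : ℕ) (hq : 1 ≤ q)
    (hN : p ∣ norm x) (h : ¬ p ∣ (x ^ q).im) : ¬ p ∣ x.im := by
  intro hd
  have hd2 : p ∣ x.re := by
    rw [norm_def] at hN
    have h2 : p ∣ x.re * x.re := by
      have h3 : x.re * x.re = (x.re * x.re + B * x.re * x.im - A * x.im * x.im)
        - (B * x.re - A * x.im) * x.im := by ring
      rw [h3]
      exact dvd_sub hN (dvd_mul_of_dvd_right hd _)
    rcases hp.dvd_or_dvd h2 with h | h <;> exact h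
  apply h
  obtain ⟨k, rfl⟩ : ∃ k, q = k + 1 := ⟨q - 1, by omega⟩
  rw [pow_succ, im_mul]
  exact dvd_add (dvd_add (dvd_mul_of_dvd_right hd _) (dvd_mul_of_dvd_right hd2 _))
        (dvd_mul_of_dvd_right hd _)

lemma good_of_pow (p : ℤ) (hp : Prime p) (x : QuadraticAlgebra ℤ A B) (n m q : ℕ) (hq : 1 ≤ q)
    (hm : 1 ≤ m) (hN : norm x = p ^ m) (β : QuadraticAlgebra ℤ A B) (hβ : Good p n β)
    (hs : Sim β (x ^ q)) : Good p m x := by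
  refine ⟨hm, hN, im_not_dvd_of_pow p hp x q hq (by rw [hN]; exact dvd_pow_self _ (by omega)) ?_⟩
  intro h
  apply hβ.2.2
  rw [← dvd_abs, hs.im, dvd_abs]
  exact h

lemma prim_unique (p : ℤ) (hp : Prime p)
    (H : ∀ x : QuadraticAlgebra ℤ A B, p ∣ norm x → p ∣ tr x → p ∣ x.im)
    (U : ∀ x : QuadraticAlgebra ℤ A B, norm x = 1 → x = 1 ∨ x = -1)
    (n₁ n₂ : ℕ) (x y : QuadraticAlgebra ℤ A B) (hx : Good p n₁ x) (hy : Good p n₂ y)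
    (px : ∀ (q j : ℕ) (δ : QuadraticAlgebra ℤ A B), q.Prime → n₁ = j * q → Good p j δ →
      Sim x (δ ^ q) → False)
    (py : ∀ (q j : ℕ) (δ : QuadraticAlgebra ℤ A B), q.Prime → n₂ = j * q → Good p j δ →
      Sim y (δ ^ q) → False) : n₁ = n₂ ∧ |tr x| = |tr y| ∧ |x.im| = |y.im| := by
  obtain ⟨m, ε, hε, hall⟩ := descent' p hp H U n₁ x hx
  have key : ∀ (n : ℕ) (x : QuadraticAlgebra ℤ A B), Good p n x → 
    (∀ (q j : ℕ) (δ : QuadraticAlgebra ℤ A B), q.Prime → n = j * q → Good p j δ →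
      Sim x (δ ^ q) → False) → n = m ∧ Sim x ε := by
    intro n x hx px
    obtain ⟨k, hk1, hnk, hs⟩ := hall n x hx
    by_cases hk : k = 1
    · subst hk
      rw [pow_one] at hs
      exact ⟨by omega, hs⟩
    · exfalso
      obtain ⟨q, hq, l, rfl⟩ := Nat.exists_prime_and_dvd hk
      have hl : 1 ≤ l := by
        rcases Nat.eq_zero_or_pos l with h | h
        · subst h; simp at hk1
        · exact h
      have hs' : Sim x ((ε ^ l) ^ q) := by rw [← pow_mul, mul_comm l q]; exact hs
      refine px q (m * l) (ε ^ l) hq (by rw [hnk]; ring) ?_ hs'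
      refine good_of_pow p hp (ε ^ l) n (m * l) q hq.one_le ?_ ?_ x hx hs'
      · exact Nat.mul_pos hε.1 hl
      · rw [map_pow, hε.2.1, pow_mul]
  obtain ⟨h1, h2⟩ := key n₁ x hx px
  obtain ⟨h3, h4⟩ := key n₂ y hy py
  exact ⟨by omega, by rw [h2.tr, h4.tr], by rw [h2.im, h4.im]⟩

end uniq

/-! ### interface for forms `r^2 + D s^2`, odd prime -/

def GZ (D p : ℤ) (n : ℕ) (r s : ℤ) : Prop := 1 ≤ n ∧ r ^ 2 + D * s ^ 2 = p ^ n ∧ ¬ p ∣ s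

lemma GZ_iff (D p : ℤ) (n : ℕ) (x : QuadraticAlgebra ℤ (-D) 0) :
    Good p n x ↔ GZ D p n x.re x.im := by
  unfold Good GZ
  rw [norm_def]
  have : x.re * x.re + 0 * x.re * x.im - -D * x.im * x.im = x.re ^ 2 + D * x.im ^ 2 := by ring
  rw [this]

lemma HZ (D p : ℤ) (hp : Prime p) (h2 : ¬ p ∣ 2) (hD : ¬ p ∣ D) :
    ∀ x : QuadraticAlgebra ℤ (-D) 0, p ∣ norm x → p ∣ tr x → p ∣ x.im := by
  intro x hN ht
  have h1 : p ∣ x.re := by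
    unfold tr at ht
    rw [zero_mul, add_zero] at ht
    exact (hp.dvd_or_dvd ht).resolve_left h2
  rw [norm_def] at hN
  have h3 : p ∣ D * (x.im * x.im) := by
    have e : D * (x.im * x.im) = (x.re * x.re + 0 * x.re * x.im - -D * x.im * x.im) - x.re * x.re := by
      ring
    rw [e]
    exact dvd_sub hN (dvd_mul_of_dvd_left h1 _)
  rcases hp.dvd_or_dvd ((hp.dvd_or_dvd h3).resolve_left hD) with h | h <;> exact h

lemma UZ (D : ℤ) (hD : 2 ≤ D) :
    ∀ x : QuadraticAlgebra ℤ (-D) 0, norm x = 1 → x = 1 ∨ x = -1 := by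
  intro x hN
  rw [norm_def] at hN
  have him : x.im = 0 := by
    by_contra h
    have : 1 ≤ x.im * x.im := by
      have := mul_self_pos.2 h
      omega
    nlinarith [mul_self_nonneg x.re]
  rw [him] at hN
  have : x.re * x.re = 1 := by linarith
  rcases mul_self_eq_one_iff.1 this with h | h
  · left; ext <;> simp [h, him]
  · right; ext <;> simp [h, him]

lemma Sim_Z (D : ℤ) (x y : QuadraticAlgebra ℤ (-D) 0) (k : ℕ) (h : Sim x (y ^ k)) :
    |x.re| = |P y.re (-D * y.im ^ 2) k| ∧ |x.im| = |y.im * Q y.re (-D * y.im ^ 2) k| := by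
  obtain ⟨h1, h2⟩ := pow_re_im y k
  rw [← h1, ← h2]
  refine ⟨?_, h.im⟩
  have := h.tr
  simp only [tr, zero_mul, add_zero, abs_mul] at this
  simpa using this

theorem G1Z (D p : ℤ) (hp : Prime p) (h2 : ¬ p ∣ 2) (hD : ¬ p ∣ D) (hD2 : 2 ≤ D)
    (n₀ : ℕ) (r₀ s₀ : ℤ) (h₀ : GZ D p n₀ r₀ s₀) :
    ∃ m u v, GZ D p m u v ∧ ∀ n r s, GZ D p n r s → ∃ k, 1 ≤ k ∧ n = m * k ∧
      |r| = |P u (-D * v ^ 2) k| ∧ |s| = |v * Q u (-D * v ^ 2) k| := by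
  obtain ⟨m, ε, hε, hall⟩ := descent' p hp (HZ D p hp h2 hD) (UZ D hD2) n₀ ⟨r₀, s₀⟩
    ((GZ_iff D p n₀ _).2 h₀)
  refine ⟨m, ε.re, ε.im, (GZ_iff D p m ε).1 hε, ?_⟩
  intro n r s h
  obtain ⟨k, hk, hn, hs⟩ := hall n ⟨r, s⟩ ((GZ_iff D p n _).2 h)
  exact ⟨k, hk, hn, Sim_Z D _ _ _ hs⟩

/-- no proper root -/
def PrimZ (D p : ℤ) (n : ℕ) (r s : ℤ) : Prop := ∀ (q j : ℕ) (u v : ℤ), q.Prime → n = j * q →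
  GZ D p j u v → |r| = |P u (-D * v ^ 2) q| → |s| = |v * Q u (-D * v ^ 2) q| → False

theorem G2Z (D p : ℤ) (hp : Prime p) (h2 : ¬ p ∣ 2) (hD : ¬ p ∣ D) (hD2 : 2 ≤ D)
    (n₁ n₂ : ℕ) (r₁ s₁ r₂ s₂ : ℤ) (h₁ : GZ D p n₁ r₁ s₁) (h₂ : GZ D p n₂ r₂ s₂)
    (P₁ : PrimZ D p n₁ r₁ s₁) (P₂ : PrimZ D p n₂ r₂ s₂) :
    n₁ = n₂ ∧ |r₁| = |r₂| ∧ |s₁| = |s₂| := by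
  have := prim_unique p hp (HZ D p hp h2 hD) (UZ D hD2) n₁ n₂ ⟨r₁, s₁⟩ ⟨r₂, s₂⟩
    ((GZ_iff D p n₁ _).2 h₁) ((GZ_iff D p n₂ _).2 h₂) ?_ ?_
  · obtain ⟨ha, hb, hc⟩ := this
    refine ⟨ha, ?_, hc⟩
    simp only [tr, zero_mul, add_zero, abs_mul] at hb
    simpa using hb
  · intro q j δ hq hn hg hs
    obtain ⟨hr, hi⟩ := Sim_Z D _ _ _ hs
    exact P₁ q j _ _ hq hn ((GZ_iff D p j δ).1 hg) hr hi
  · intro q j δ hq hn hg hs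
    obtain ⟨hr, hi⟩ := Sim_Z D _ _ _ hs
    exact P₂ q j _ _ hq hn ((GZ_iff D p j δ).1 hg) hr hi

/-! ### interface for `p = 2`: `u^2 + D v^2 = 2^(n+2)`, `D = 4 K - 1`, `K` even -/

def GT (D : ℤ) (n : ℕ) (u v : ℤ) : Prop := 1 ≤ n ∧ u ^ 2 + D * v ^ 2 = 2 ^ (n + 2) ∧ ¬ 2 ∣ v

lemma norm4 (K : ℤ) (x : QuadraticAlgebra ℤ (-K) 1) :
    4 * norm x = tr x ^ 2 + (4 * K - 1) * x.im ^ 2 := by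
  rw [norm_def, tr]; ring

lemma GT_of (K : ℤ) (n : ℕ) (x : QuadraticAlgebra ℤ (-K) 1) (h : Good 2 n x) :
    GT (4 * K - 1) n (tr x) x.im := by
  refine ⟨h.1, ?_, h.2.2⟩
  rw [← norm4, h.2.1]; ring

lemma exists_of_GT (K : ℤ) (n : ℕ) (u v : ℤ) (h : GT (4 * K - 1) n u v) :
    ∃ x : QuadraticAlgebra ℤ (-K) 1, Good 2 n x ∧ tr x = u ∧ x.im = v := by
  have hpar : ∃ w, u = 2 * w + v := by
    have h1 : (2 : ℤ) ∣ u ^ 2 + (4 * K - 1) * v ^ 2 := by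
      rw [h.2.1]; exact dvd_pow_self _ (by omega)
    have hv : v % 2 = 1 := by have := h.2.2; omega
    have hu : u % 2 = 1 := by
      by_contra hu
      obtain ⟨u', rfl⟩ : ∃ u', u = 2 * u' := ⟨u / 2, by omega⟩
      obtain ⟨v', rfl⟩ : ∃ v', v = 2 * v' + 1 := ⟨v / 2, by omega⟩
      obtain ⟨t, ht⟩ := h1
      ring_nf at ht
      omega
    exact ⟨(u - v) / 2, by omega⟩
  obtain ⟨w, rfl⟩ := hpar
  have htr : tr (⟨w, v⟩ : QuadraticAlgebra ℤ (-K) 1) = 2 * w + v := by simp [tr]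
  refine ⟨⟨w, v⟩, ⟨h.1, ?_, h.2.2⟩, htr, rfl⟩
  have := norm4 K ⟨w, v⟩
  rw [htr] at this
  have h2 := h.2.1
  rw [pow_add] at h2
  simp only at this
  linarith

lemma HT (K : ℤ) : ∀ x : QuadraticAlgebra ℤ (-K) 1, (2 : ℤ) ∣ norm x → (2 : ℤ) ∣ tr x → (2 : ℤ) ∣ x.im := by
  intro x _ h
  unfold tr at h
  omega

lemma UT (K : ℤ) (hK : 2 ≤ K) : ∀ x : QuadraticAlgebra ℤ (-K) 1, norm x = 1 → x = 1 ∨ x = -1 := by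
  intro x hN
  have h4 := norm4 K x
  rw [hN] at h4
  have him : x.im = 0 := by
    by_contra h
    have : 1 ≤ x.im ^ 2 := by
      have := pow_two_pos_of_ne_zero h
      omega
    nlinarith [sq_nonneg (tr x)]
  rw [norm_def, him] at hN
  have : x.re * x.re = 1 := by linarith
  rcases mul_self_eq_one_iff.1 this with h | h
  · left; ext <;> simp [h, him]
  · right; ext <;> simp [h, him]

lemma Sim_T (K : ℤ) (x y : QuadraticAlgebra ℤ (-K) 1) (k : ℕ) (h : Sim x (y ^ k)) :
    2 ^ k * |tr x| = 2 * |P (tr y) (-(4 * K - 1) * y.im ^ 2) k| ∧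
    2 ^ k * |x.im| = 2 * |y.im * Q (tr y) (-(4 * K - 1) * y.im ^ 2) k| := by
  obtain ⟨h1, h2⟩ := pow_tr_im y k
  have e : 4 * -K + 1 ^ 2 = -(4 * K - 1) := by ring
  rw [e] at h1 h2
  rw [h.tr, h.im]
  constructor
  · have := congrArg abs h1
    rw [abs_mul, abs_mul, abs_pow] at this
    simpa using this
  · have := congrArg abs h2
    rw [abs_mul, abs_mul, abs_pow] at this
    simpa using this

theorem G1T (K : ℤ) (hK : 2 ≤ K) (n₀ : ℕ) (r₀ s₀ : ℤ) (h₀ : GT (4 * K - 1) n₀ r₀ s₀) :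
    ∃ m, ∃ ε : QuadraticAlgebra ℤ (-K) 1, Good 2 m ε ∧ 
      ∀ n r s, GT (4 * K - 1) n r s → ∃ k, 1 ≤ k ∧ n = m * k ∧
      |r| = |tr (ε ^ k)| ∧ |s| = |(ε ^ k).im| := by
  obtain ⟨x₀, hx₀, -⟩ := exists_of_GT K n₀ r₀ s₀ h₀
  obtain ⟨m, ε, hε, hall⟩ := descent' 2 Int.prime_two (HT K) (UT K hK) n₀ x₀ hx₀
  refine ⟨m, ε, hε, ?_⟩
  intro n r s h
  obtain ⟨x, hx, rfl, rfl⟩ := exists_of_GT K n r s h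
  obtain ⟨k, hk, hn, hs⟩ := hall n x hx
  exact ⟨k, hk, hn, hs.tr, hs.im⟩

def PrimT (D : ℤ) (n : ℕ) (r s : ℤ) : Prop := ∀ (q j : ℕ) (u v : ℤ), q.Prime → n = j * q →
  GT D j u v → 2 ^ q * |r| = 2 * |P u (-D * v ^ 2) q| → 2 ^ q * |s| = 2 * |v * Q u (-D * v ^ 2) q| → False

theorem G2T (K : ℤ) (hK : 2 ≤ K)
    (n₁ n₂ : ℕ) (r₁ s₁ r₂ s₂ : ℤ) (h₁ : GT (4 * K - 1) n₁ r₁ s₁) (h₂ : GT (4 * K - 1) n₂ r₂ s₂)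
    (P₁ : PrimT (4 * K - 1) n₁ r₁ s₁) (P₂ : PrimT (4 * K - 1) n₂ r₂ s₂) :
    n₁ = n₂ ∧ |r₁| = |r₂| ∧ |s₁| = |s₂| := by
  obtain ⟨x, hx, rfl, rfl⟩ := exists_of_GT K n₁ r₁ s₁ h₁
  obtain ⟨y, hy, rfl, rfl⟩ := exists_of_GT K n₂ r₂ s₂ h₂
  refine prim_unique 2 Int.prime_two (HT K) (UT K hK) n₁ n₂ x y hx hy ?_ ?_
  · intro q j δ hq hn hg hs
    obtain ⟨hr, hi⟩ := Sim_T K _ _ _ hs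
    exact P₁ q j _ _ hq hn (GT_of K j δ hg) hr hi
  · intro q j δ hq hn hg hs
    obtain ⟨hr, hi⟩ := Sim_T K _ _ _ hs
    exact P₂ q j _ _ hq hn (GT_of K j δ hg) hr hi

end QD


namespace QD

lemma np {p : ℕ} (hp : p.Prime) : Prime (p : ℤ) := Nat.prime_iff_prime_int.1 hp

lemma odd_prime_not_dvd_two {p : ℕ} (hp : p.Prime) (h : p ≠ 2) : ¬ (p : ℤ) ∣ 2 := by
  intro hd
  have : p ∣ 2 := by exact_mod_cast hd
  exact h ((Nat.prime_dvd_prime_iff_eq hp Nat.prime_two).1 this)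

lemma prime_not_dvd {p q : ℕ} (hp : p.Prime) (hq : q.Prime) (h : p ≠ q) : ¬ (p : ℤ) ∣ q := by
  intro hd
  have : p ∣ q := by exact_mod_cast hd
  exact h ((Nat.prime_dvd_prime_iff_eq hp hq).1 this)

lemma prime_not_dvd_pow {p q : ℕ} (hp : p.Prime) (hq : q.Prime) (h : p ≠ q) (n : ℕ) :
    ¬ (p : ℤ) ∣ (q : ℤ) ^ n :=
  fun hd => prime_not_dvd hp hq h ((np hp).dvd_of_dvd_pow hd)

lemma abs_eq_pow_of_dvd {p : ℕ} (hp : p.Prime) {w : ℤ} {n : ℕ} (h : w ∣ (p : ℤ) ^ n) :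
    ∃ j, j ≤ n ∧ |w| = (p : ℤ) ^ j := by
  have h1 : w.natAbs ∣ p ^ n := by
    have := Int.natAbs_dvd_natAbs.2 h
    rwa [Int.natAbs_pow, Int.natAbs_natCast] at this
  obtain ⟨j, hj, e⟩ := (Nat.dvd_prime_pow hp).1 h1
  refine ⟨j, hj, ?_⟩
  rw [Int.abs_eq_natAbs, e]; push_cast; rfl

lemma abs_one_of_dvd {p : ℕ} (hp : p.Prime) {w : ℤ} {n : ℕ} (h : w ∣ (p : ℤ) ^ n)
    (h2 : ¬ (p : ℤ) ∣ w) : |w| = 1 := by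
  obtain ⟨j, -, e⟩ := abs_eq_pow_of_dvd hp h
  rcases Nat.eq_zero_or_pos j with rfl | hj
  · simpa using e
  · exact absurd (by rw [← dvd_abs, e]; exact dvd_pow_self _ (by omega)) h2

lemma size_dvd {p q X : ℕ} (hp : p.Prime) {u W : ℤ} (h : (p : ℤ) ^ X ∣ u * W)
    (h1 : p ≠ q → ¬ (p : ℤ) ∣ W) (h2 : ¬ (p : ℤ) ^ 2 ∣ W) : (p : ℤ) ^ X ∣ q * u := by
  by_cases hW : (p : ℤ) ∣ W
  · have hpq : p = q := by
      by_contra hne; exact h1 hne hW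
    subst hpq
    obtain ⟨W', rfl⟩ := hW
    have hW' : ¬ (p : ℤ) ∣ W' := by
      rintro ⟨W'', rfl⟩
      exact h2 ⟨W'', by ring⟩
    refine (np hp).pow_dvd_of_dvd_mul_right X hW' ?_
    rw [show (p : ℤ) * u * W' = u * (p * W') by ring]; exact h
  · exact dvd_mul_of_dvd_right ((np hp).pow_dvd_of_dvd_mul_right X hW h) _

lemma size1 (N : ℤ) (q : ℕ) (hN : 4 ≤ N) (hq : 3 ≤ q) : (q : ℤ) ^ 2 * N < N ^ q := by
  obtain ⟨k, rfl⟩ : ∃ k, q = k + 3 := ⟨q - 3, by omega⟩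
  have h : ∀ k : ℕ, ((k + 3 : ℕ) : ℤ) ^ 2 < N ^ (k + 2) := by
    intro k
    induction k with
    | zero => norm_num; nlinarith
    | succ k ih =>
      have e : N ^ (k + 1 + 2) = N * N ^ (k + 2) := by ring
      rw [e]
      push_cast at ih ⊢
      have h3 : 4 * N ^ (k + 2) ≤ N * N ^ (k + 2) :=
        mul_le_mul_of_nonneg_right hN (by positivity)
      nlinarith [sq_nonneg (k : ℤ), (Nat.cast_nonneg k : (0 : ℤ) ≤ k)]
  have e : N ^ (k + 3) = N ^ (k + 2) * N := by ring
  rw [e]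
  exact mul_lt_mul_of_pos_right (h k) (by linarith)

lemma size2 (N : ℤ) (q : ℕ) (hN : 6 ≤ N) (hq : 3 ≤ q) : (q : ℤ) ^ 4 * N ^ 2 < 16 * N ^ q := by
  obtain ⟨k, rfl⟩ : ∃ k, q = k + 3 := ⟨q - 3, by omega⟩
  have h : ∀ k : ℕ, ((k + 3 : ℕ) : ℤ) ^ 4 < 16 * N ^ (k + 1) := by
    intro k
    induction k with
    | zero => norm_num; nlinarith
    | succ k ih =>
      have e : 16 * N ^ (k + 1 + 1) = N * (16 * N ^ (k + 1)) := by ring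
      rw [e]
      have h1 : ((k + 1 + 3 : ℕ) : ℤ) ^ 4 ≤ 6 * ((k + 3 : ℕ) : ℤ) ^ 4 := by
        have e3 : (2 * (((k + 1 + 3 : ℕ) : ℤ))) ^ 4 ≤ (3 * ((k + 3 : ℕ) : ℤ)) ^ 4 :=
          pow_le_pow_left₀ (by positivity) (by push_cast; linarith) 4
        nlinarith [pow_nonneg (show (0 : ℤ) ≤ ((k + 3 : ℕ) : ℤ) by positivity) 4]
      have h2 : 6 * ((k + 3 : ℕ) : ℤ) ^ 4 < 6 * (16 * N ^ (k + 1)) := by linarith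
      have h3 : 6 * (16 * N ^ (k + 1)) ≤ N * (16 * N ^ (k + 1)) :=
        mul_le_mul_of_nonneg_right hN (by positivity)
      linarith
  have e : 16 * N ^ (k + 3) = (16 * N ^ (k + 1)) * N ^ 2 := by ring
  rw [e]
  exact mul_lt_mul_of_pos_right (h k) (by positivity)

lemma GZ.ne_zero {D p : ℤ} {n : ℕ} {r s : ℤ} (h : GZ D p n r s) : s ≠ 0 := by
  rintro rfl; exact h.2.2 (dvd_zero _)

lemma P_two (r E : ℤ) : P r E 2 = r ^ 2 + E := by
  simp [P_succ, Q_succ]; ring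
lemma Q_two (r E : ℤ) : Q r E 2 = 2 * r := by
  simp [P_succ, Q_succ]; ring
lemma P_three (r E : ℤ) : P r E 3 = r * (r ^ 2 + 3 * E) := by
  simp [P_succ, Q_succ]; ring
lemma Q_three' (r E : ℤ) : Q r E 3 = 3 * r ^ 2 + E := by
  simp [P_succ, Q_succ]; ring

lemma int_even_or_odd_pow {c : ℕ} (hc : c % 2 = 1) (n : ℕ) : ((c : ℤ) ^ n) % 2 = 1 := by
  have : Odd ((c : ℤ) ^ n) := Odd.pow (Int.odd_iff.2 (by omega))
  exact Int.odd_iff.1 this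

/-- common step for the classes with even `x` -/
lemma L5a (D : ℤ) (c : ℕ) (k : ℕ) (s : ℤ) (hk : 1 ≤ k) (hD : D % 2 = 1) (hs : s % 2 = 1)
    (hc : c % 2 = 1) (q j : ℕ) (u v : ℤ) (hq : q.Prime)
    (h : GZ D c j u v) (h1 : |(2 : ℤ) ^ k| = |P u (-D * v ^ 2) q|)
    (h2 : |s| = |v * Q u (-D * v ^ 2) q|) : q ≠ 2 ∧ |u| = 2 ^ k ∧ v % 2 = 1 := by
  have hN := int_even_or_odd_pow hc j
  rw [← h.2.1] at hN
  have hv : v % 2 = 1 := by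
    by_contra hv
    have : (2 : ℤ) ∣ s := by
      rw [← dvd_abs, h2, dvd_abs]
      exact dvd_mul_of_dvd_left (by omega) _
    omega
  have hu : u % 2 = 0 := by
    by_contra hu
    have e1 : u ^ 2 % 2 = 1 := Int.odd_iff.1 (Odd.pow (Int.odd_iff.2 (by omega)))
    have e2 : D * v ^ 2 % 2 = 1 := Int.odd_iff.1 (Odd.mul (Int.odd_iff.2 hD) (Odd.pow (Int.odd_iff.2 (by omega))))
    omega
  have hE : ¬ (2 : ℤ) ∣ (-D * v ^ 2) := by
    have : (-D * v ^ 2) % 2 = 1 := Int.odd_iff.1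
      (Odd.mul (Int.odd_iff.2 (by omega)) (Odd.pow (Int.odd_iff.2 (by omega))))
    omega
  have hq2 : q ≠ 2 := by
    rintro rfl
    rw [P_two] at h1
    have : (2 : ℤ) ∣ u ^ 2 + -D * v ^ 2 := by
      rw [← dvd_abs, ← h1, dvd_abs]; exact dvd_pow_self _ (by omega)
    exact hE ((dvd_add_right (dvd_pow (by omega) two_ne_zero)).1 this)
  obtain ⟨W, hW, hW1, -⟩ := P_adic 2 q Nat.prime_two hq hq2 u (-D * v ^ 2) (by push_cast; omega)
    (by push_cast; exact hE)
  refine ⟨hq2, ?_, hv⟩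
  have hWd : W ∣ ((2 : ℕ) : ℤ) ^ k := by
    push_cast
    rw [← dvd_abs, h1, dvd_abs, hW]; exact dvd_mul_left _ _
  have hW2 := abs_one_of_dvd Nat.prime_two hWd (hW1 (Ne.symm hq2))
  rw [hW, abs_mul, hW2, mul_one] at h1
  rw [← h1, abs_of_pos (by positivity)]

lemma sq_eq_of_abs {a b : ℤ} (h : |a| = |b|) : a ^ 2 = b ^ 2 := by
  rw [← sq_abs, h, sq_abs]

lemma prime_pow_inj {c : ℕ} (hc : c.Prime) {i j : ℕ} (h : (c : ℤ) ^ i = (c : ℤ) ^ j) : i = j := by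
  have h' : c ^ i = c ^ j := by exact_mod_cast h
  exact Nat.pow_right_injective hc.two_le h'

lemma exp_ne {z j q : ℕ} (h : z = j * q) (hq : q.Prime) (hj : 1 ≤ j) : j ≠ z := by
  intro e
  rw [← e] at h
  have := hq.two_le
  nlinarith

lemma L5prim (b c : ℕ) (hb : b.Prime) (hc : c.Prime) (hb2 : b ≠ 2) (hc2 : c ≠ 2) (hbc : b ≠ c)
    (k l z : ℕ) (hk : 1 ≤ k) (h : 2 ^ (2 * k) + b ^ (2 * l + 1) = c ^ z) :
    PrimZ b c z (2 ^ k) (b ^ l) := by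
  intro q j u v hq hz hg h1 h2
  have hbo := hb.eq_two_or_odd.resolve_left hb2
  have hco := hc.eq_two_or_odd.resolve_left hc2
  have hh : ((2 : ℤ) ^ k) ^ 2 + b * ((b : ℤ) ^ l) ^ 2 = c ^ z := by
    have : (2 : ℤ) ^ (2 * k) + (b : ℤ) ^ (2 * l + 1) = (c : ℤ) ^ z := by exact_mod_cast h
    rw [← this]; ring
  obtain ⟨hq2, hu, hv⟩ := L5a b c k (b ^ l) hk (by omega) (int_even_or_odd_pow hbo l) hco
    q j u v hq hg h1 h2
  have hv0 := hg.ne_zero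
  have hbu : ¬ (b : ℤ) ∣ u := by
    rw [← dvd_abs, hu]
    exact prime_not_dvd_pow hb Nat.prime_two hb2 k
  have hbE : (b : ℤ) ∣ -b * v ^ 2 := ⟨-v ^ 2, by ring⟩
  obtain ⟨hQ1, hQ2⟩ := Q_adic b q hb hq u _ hbE hbu
  have hq3 : 3 ≤ q := by have := hq.two_le; omega
  have hu2 : u ^ 2 = ((2 : ℤ) ^ k) ^ 2 := by rw [← sq_abs, hu]
  have hdv : (b : ℤ) ^ l ∣ v * Q u (-b * v ^ 2) q := by
    rw [← abs_dvd, h2, abs_dvd]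
  have hfin : ¬ ((b : ℤ) ^ 2 ∣ Q u (-b * v ^ 2) q) → False := by
    intro hQ3
    have hd := size_dvd hb hdv hQ1 hQ3
    have hle : ((b : ℤ) ^ l) ^ 2 ≤ (q : ℤ) ^ 2 * v ^ 2 := by
      have := Int.le_of_dvd (by positivity) (pow_dvd_pow_of_dvd hd 2)
      linarith
    have hN4 : 4 ≤ (c : ℤ) ^ j := by
      rw [← hg.2.1, hu2]
      have : (1 : ℤ) ≤ v ^ 2 := by have := pow_two_pos_of_ne_zero hv0; omega
      have h3 : (3 : ℤ) ≤ b := by have := hb.two_le; omega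
      have : (1 : ℤ) ≤ ((2 : ℤ) ^ k) ^ 2 := by have : (0 : ℤ) < ((2 : ℤ) ^ k) ^ 2 := by positivity
                                               omega
      nlinarith
    have hs := size1 _ q hN4 hq3
    rw [← pow_mul, ← hz, ← hh, ← hg.2.1, hu2] at hs
    have hb0 : (0 : ℤ) < b := by exact_mod_cast hb.pos
    have hq1 : (1 : ℤ) ≤ (q : ℤ) ^ 2 := by
      have : (1 : ℤ) ≤ q := by omega
      nlinarith
    nlinarith [mul_le_mul_of_nonneg_left hle hb0.le, mul_le_mul_of_nonneg_right hq1 (sq_nonneg ((2 : ℤ) ^ k))]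
  by_cases hbq : b = q
  · by_cases h5 : 5 ≤ q
    · exact hfin (hQ2 h5)
    · have : q = 3 := by
        have : q ≠ 4 := by rintro rfl; exact absurd hq (by norm_num)
        omega
      subst this
      subst hbq
      rw [P_three, abs_mul, hu, abs_of_pos (show (0 : ℤ) < 2 ^ k by positivity)] at h1
      have h5 : |u ^ 2 + 3 * (-(3 : ℕ) * v ^ 2)| = 1 := by
        have h0 : (2 : ℤ) ^ k ≠ 0 := by positivity
        have : (2 : ℤ) ^ k * |u ^ 2 + 3 * (-(3 : ℕ) * v ^ 2)| = 2 ^ k * 1 := by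
          rw [← h1]; ring
        exact mul_left_cancel₀ h0 this
      have hue : u % 2 = 0 := by
        have : (2 : ℤ) ∣ u := by rw [← dvd_abs, hu]; exact dvd_pow_self _ (by omega)
        omega
      obtain ⟨v', rfl⟩ : ∃ v', v = 2 * v' + 1 := ⟨v / 2, by omega⟩
      obtain ⟨u', rfl⟩ : ∃ u', u = 2 * u' := ⟨u / 2, by omega⟩
      rcases (abs_eq (by norm_num)).1 h5 with h | h
      · have : (4 : ℤ) * (u' ^ 2 - 9 * v' ^ 2 - 9 * v') = 10 := by push_cast at h; linarith
        omega
      · push_cast at h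
        have h7 : (2 * u') ^ 2 % 3 = 2 := by
          have : (2 * u') ^ 2 = 3 * (3 * (2 * v' + 1) ^ 2 - 1) + 2 := by linarith
          omega
        have h8 : (2 * u') % 3 = 0 ∨ (2 * u') % 3 = 1 ∨ (2 * u') % 3 = 2 := by omega
        rcases h8 with h8 | h8 | h8 <;> rw [pow_two, Int.mul_emod, h8] at h7 <;> norm_num at h7
  · have hQd : Q u (-b * v ^ 2) q ∣ (b : ℤ) ^ l := by
      rw [← dvd_abs, h2, dvd_abs]; exact dvd_mul_left _ _
    have hQ := abs_one_of_dvd hb hQd (hQ1 hbq)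
    rw [abs_mul, hQ, mul_one] at h2
    have hv2 := sq_eq_of_abs h2
    have : (c : ℤ) ^ j = (c : ℤ) ^ z := by rw [← hg.2.1, ← hh, hu2, hv2]
    exact exp_ne hz hq hg.1 (prime_pow_inj hc this)

lemma two_pow_inj {i j : ℕ} (h : (2 : ℤ) ^ i = 2 ^ j) : i = j :=
  prime_pow_inj Nat.prime_two (by exact_mod_cast h)

theorem L5 (b c : ℕ) (hb : b.Prime) (hc : c.Prime) (hb2 : b ≠ 2) (hc2 : c ≠ 2) (hbc : b ≠ c)
    (k l z k' l' z' : ℕ) (hk : 1 ≤ k) (hk' : 1 ≤ k') (hz : 1 ≤ z) (hz' : 1 ≤ z')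
    (h : 2 ^ (2 * k) + b ^ (2 * l + 1) = c ^ z) (h' : 2 ^ (2 * k') + b ^ (2 * l' + 1) = c ^ z') :
    k = k' ∧ l = l' ∧ z = z' := by
  have hg : ∀ k l z : ℕ, 1 ≤ z → 2 ^ (2 * k) + b ^ (2 * l + 1) = c ^ z → GZ b c z (2 ^ k) (b ^ l) := by
    intro k l z hz h
    refine ⟨hz, ?_, prime_not_dvd_pow hc hb (Ne.symm hbc) l⟩
    have : (2 : ℤ) ^ (2 * k) + (b : ℤ) ^ (2 * l + 1) = (c : ℤ) ^ z := by exact_mod_cast h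
    rw [← this]; ring
  obtain ⟨e1, e2, e3⟩ := G2Z b c (np hc) (odd_prime_not_dvd_two hc hc2)
    (prime_not_dvd hc hb (Ne.symm hbc)) (by exact_mod_cast hb.two_le) z z' _ _ _ _
    (hg k l z hz h) (hg k' l' z' hz' h') (L5prim b c hb hc hb2 hc2 hbc k l z hk h)
    (L5prim b c hb hc hb2 hc2 hbc k' l' z' hk' h')
  have hb0 : (0 : ℤ) < b := by exact_mod_cast hb.pos
  rw [abs_of_pos (by positivity), abs_of_pos (by positivity)] at e2 e3
  exact ⟨two_pow_inj e2, prime_pow_inj hb e3, e1⟩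

lemma L8prim (D : ℤ) (b : ℕ) (hb : b.Prime) (hb2 : b ≠ 2) (hD : D % 2 = 1)
    (k z : ℕ) (hk : 1 ≤ k) (h : ((2 : ℤ) ^ k) ^ 2 + D * 1 ^ 2 = b ^ z) :
    PrimZ D b z (2 ^ k) 1 := by
  intro q j u v hq hz hg h1 h2
  have hbo := hb.eq_two_or_odd.resolve_left hb2
  obtain ⟨hq2, hu, hv⟩ := L5a D b k 1 hk hD (by norm_num) hbo q j u v hq hg h1 h2
  have hv1 : v ∣ 1 := by rw [← dvd_abs, h2, dvd_abs]; exact dvd_mul_right _ _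
  have hv2 : v ^ 2 = 1 := by
    rcases Int.isUnit_iff.1 (isUnit_of_dvd_one hv1) with rfl | rfl <;> norm_num
  have : (b : ℤ) ^ j = (b : ℤ) ^ z := by
    rw [← hg.2.1, ← h, hv2, ← sq_abs u, hu]; ring
  exact exp_ne hz hq hg.1 (prime_pow_inj hb this)

theorem L8core (D : ℤ) (b : ℕ) (hb : b.Prime) (hb2 : b ≠ 2) (hD : D % 2 = 1) (hD2 : 2 ≤ D)
    (hbD : ¬ (b : ℤ) ∣ D) (k z k' z' : ℕ) (hk : 1 ≤ k) (hk' : 1 ≤ k') (hz : 1 ≤ z) (hz' : 1 ≤ z')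
    (h : ((2 : ℤ) ^ k) ^ 2 + D * 1 ^ 2 = b ^ z) (h' : ((2 : ℤ) ^ k') ^ 2 + D * 1 ^ 2 = b ^ z') :
    k = k' := by
  have h1 : ¬ (b : ℤ) ∣ 1 := by
    intro hd
    have : b ∣ 1 := by exact_mod_cast hd
    exact hb.one_lt.ne' (Nat.dvd_one.1 this)
  obtain ⟨e1, e2, e3⟩ := G2Z D b (np hb) (odd_prime_not_dvd_two hb hb2) hbD hD2 z z' _ _ _ _
    ⟨hz, h, h1⟩ ⟨hz', h', h1⟩ (L8prim D b hb hb2 hD k z hk h) (L8prim D b hb hb2 hD k' z' hk' h')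
  rw [abs_of_pos (by positivity), abs_of_pos (by positivity)] at e2
  exact two_pow_inj e2

end QD


namespace QD

/-! ### L2 -/

lemma L2prim (c : ℕ) (hc : c.Prime) (hc2 : c ≠ 2) (hc3 : c ≠ 3)
    (l Y z : ℕ) (hz : z % 2 = 1) (h : 2 ^ (2 * l + 1) + 3 ^ (2 * Y) = c ^ z) :
    PrimZ 2 c z (3 ^ Y) (2 ^ l) := by
  intro q j u v hq hzj hg h1 h2
  have hco := hc.eq_two_or_odd.resolve_left hc2
  have hh : ((3 : ℤ) ^ Y) ^ 2 + 2 * ((2 : ℤ) ^ l) ^ 2 = c ^ z := by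
    have : (2 : ℤ) ^ (2 * l + 1) + (3 : ℤ) ^ (2 * Y) = (c : ℤ) ^ z := by exact_mod_cast h
    rw [← this]; ring
  have hq2 : q ≠ 2 := by rintro rfl; omega
  have hq3 : 3 ≤ q := by have := hq.two_le; omega
  have hN := int_even_or_odd_pow hco j
  rw [← hg.2.1] at hN
  have hu : ¬ ((2 : ℕ) : ℤ) ∣ u := by
    intro hu
    have : (2 : ℤ) ∣ u ^ 2 := dvd_pow (by exact_mod_cast hu) two_ne_zero
    omega
  have hE2 : ((2 : ℕ) : ℤ) ∣ -2 * v ^ 2 := ⟨-v ^ 2, by push_cast; ring⟩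
  obtain ⟨hQ1, -⟩ := Q_adic 2 q Nat.prime_two hq u _ hE2 hu
  have hQd : Q u (-2 * v ^ 2) q ∣ ((2 : ℕ) : ℤ) ^ l := by
    push_cast
    rw [← dvd_abs, h2, dvd_abs]; exact dvd_mul_left _ _
  have hQ := abs_one_of_dvd Nat.prime_two hQd (hQ1 (Ne.symm hq2))
  rw [abs_mul, hQ, mul_one] at h2
  have hv2 := sq_eq_of_abs h2
  by_cases h3u : ((3 : ℕ) : ℤ) ∣ u
  · have hE3 : ¬ ((3 : ℕ) : ℤ) ∣ -2 * v ^ 2 := by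
      intro hd
      have hd' : ((3 : ℕ) : ℤ) ∣ (c : ℤ) ^ j := by
        rw [← hg.2.1]
        refine dvd_add (dvd_pow h3u two_ne_zero) ?_
        rw [← dvd_neg, show -(2 * v ^ 2) = -2 * v ^ 2 by ring]; exact hd
      exact prime_not_dvd_pow Nat.prime_three hc (Ne.symm hc3) j hd'
    obtain ⟨W, hW, hW1, hW2⟩ := P_adic 3 q Nat.prime_three hq hq2 u _ h3u hE3
    have hd : ((3 : ℕ) : ℤ) ^ Y ∣ q * u := by
      refine size_dvd Nat.prime_three ?_ hW1 hW2
      push_cast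
      rw [← hW, ← abs_dvd, h1, abs_dvd]
    have hu0 : u ≠ 0 := by rintro rfl; exact hu (dvd_zero _)
    have hle : ((3 : ℤ) ^ Y) ^ 2 ≤ (q : ℤ) ^ 2 * u ^ 2 := by
      have := Int.le_of_dvd (by positivity) (pow_dvd_pow_of_dvd hd 2)
      push_cast at this
      linarith
    have hN4 : 4 ≤ (c : ℤ) ^ j := by
      rw [← hg.2.1]
      obtain ⟨u', rfl⟩ := h3u
      have : (1 : ℤ) ≤ u' ^ 2 := by
        have : u' ≠ 0 := by rintro rfl; simp at hu0
        have := pow_two_pos_of_ne_zero this; omega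
      push_cast
      nlinarith [sq_nonneg v]
    have hs := size1 _ q hN4 hq3
    rw [← pow_mul, ← hzj, ← hh, ← hg.2.1, ← hv2] at hs
    have hq1 : (1 : ℤ) ≤ (q : ℤ) ^ 2 := by
      have : (1 : ℤ) ≤ q := by omega
      nlinarith
    nlinarith [mul_le_mul_of_nonneg_right hq1 (sq_nonneg ((2 : ℤ) ^ l))]
  · have hud : u ∣ ((3 : ℕ) : ℤ) ^ Y := by
      push_cast
      rw [← dvd_abs, h1, dvd_abs]
      obtain ⟨i, hi⟩ := hq.odd_of_ne_two hq2
      obtain ⟨⟨t, ht⟩, -⟩ := PQ_odd u (-2 * v ^ 2) i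
      rw [hi, ht]; exact dvd_mul_right _ _
    have hu1 := abs_one_of_dvd Nat.prime_three hud h3u
    have hN3 : (1 : ℤ) + 2 * (2 ^ l) ^ 2 = c ^ j := by
      rw [← hg.2.1, ← hv2, ← sq_abs u, hu1]; ring
    have hd : ((3 : ℕ) : ℤ) ∣ (c : ℤ) ^ j := by
      rw [← hN3, ← pow_mul, mul_comm l 2, pow_mul]
      have : ((3 : ℕ) : ℤ) ∣ (4 : ℤ) ^ l - 1 := by
        have := sub_one_dvd_pow_sub_one (4 : ℤ) l
        norm_num at this ⊢
        exact this
      have e : (1 : ℤ) + 2 * (2 ^ 2) ^ l = 2 * ((4 : ℤ) ^ l - 1) + (3 : ℕ) := by push_cast; ring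
      rw [e]
      exact dvd_add (dvd_mul_of_dvd_right this _) dvd_rfl
    exact prime_not_dvd_pow Nat.prime_three hc (Ne.symm hc3) j hd

theorem L2 (c : ℕ) (hc : c.Prime) (hc2 : c ≠ 2) (hc3 : c ≠ 3)
    (l Y z l' Y' z' : ℕ) (hz : z % 2 = 1) (hz' : z' % 2 = 1)
    (h : 2 ^ (2 * l + 1) + 3 ^ (2 * Y) = c ^ z) (h' : 2 ^ (2 * l' + 1) + 3 ^ (2 * Y') = c ^ z') :
    l = l' ∧ Y = Y' ∧ z = z' := by
  have hg : ∀ l Y z : ℕ, 1 ≤ z → 2 ^ (2 * l + 1) + 3 ^ (2 * Y) = c ^ z → GZ 2 c z (3 ^ Y) (2 ^ l) := by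
    intro l Y z hz h
    refine ⟨hz, ?_, prime_not_dvd_pow hc Nat.prime_two hc2 l⟩
    have : (2 : ℤ) ^ (2 * l + 1) + (3 : ℤ) ^ (2 * Y) = (c : ℤ) ^ z := by exact_mod_cast h
    rw [← this]; ring
  obtain ⟨e1, e2, e3⟩ := G2Z 2 c (np hc) (odd_prime_not_dvd_two hc hc2)
    (odd_prime_not_dvd_two hc hc2) (by norm_num) z z' _ _ _ _
    (hg l Y z (by omega) h) (hg l' Y' z' (by omega) h') (L2prim c hc hc2 hc3 l Y z hz h)
    (L2prim c hc hc2 hc3 l' Y' z' hz' h')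
  rw [abs_of_pos (by positivity), abs_of_pos (by positivity)] at e2 e3
  exact ⟨two_pow_inj e3, prime_pow_inj Nat.prime_three (by exact_mod_cast e2), e1⟩

/-! ### L4 -/

lemma odd_pow_not_sq {p : ℕ} (hp : p.Prime) (i : ℕ) (u : ℤ) (h : u ^ 2 = (p : ℤ) ^ (2 * i + 1)) : False := by
  have h1 : u.natAbs ^ 2 = p ^ (2 * i + 1) := by
    have := congrArg Int.natAbs h
    rwa [Int.natAbs_pow, Int.natAbs_pow, Int.natAbs_natCast] at this
  obtain ⟨j, -, e⟩ := (Nat.dvd_prime_pow hp).1 (show u.natAbs ∣ p ^ (2 * i + 1) by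
    rw [← h1]; exact dvd_pow_self _ two_ne_zero)
  rw [e, ← pow_mul] at h1
  have := Nat.pow_right_injective hp.two_le h1
  omega

lemma pow_coprime_mul_dvd {p q : ℕ} (hp : p.Prime) (hq : q.Prime) (h : p ≠ q) {i j : ℕ} {w : ℤ}
    (h1 : (p : ℤ) ^ i ∣ w) (h2 : (q : ℤ) ^ j ∣ w) : (p : ℤ) ^ i * (q : ℤ) ^ j ∣ w := by
  have : IsCoprime (p : ℤ) (q : ℤ) := Nat.isCoprime_iff_coprime.2 ((Nat.coprime_primes hp hq).2 h)
  exact this.pow.mul_dvd h1 h2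

lemma L4prim (b c : ℕ) (hb : b.Prime) (hc : c.Prime) (hb2 : b ≠ 2) (hc2 : c ≠ 2) (hbc : b ≠ c)
    (k l z : ℕ) (h : 2 ^ (2 * k + 1) + b ^ (2 * l + 1) = c ^ z) :
    PrimZ (2 * b) c (2 * z) (2 ^ (2 * k + 1) - b ^ (2 * l + 1)) (2 ^ (k + 1) * b ^ l) := by
  intro q j u v hq hzj hg h1 h2
  have hco := hc.eq_two_or_odd.resolve_left hc2
  have hh : (2 : ℤ) ^ (2 * k + 1) + (b : ℤ) ^ (2 * l + 1) = (c : ℤ) ^ z := by exact_mod_cast h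
  have hN := int_even_or_odd_pow hco j
  rw [← hg.2.1] at hN
  have hu : ¬ ((2 : ℕ) : ℤ) ∣ u := by
    intro hu
    have : (2 : ℤ) ∣ u ^ 2 := dvd_pow (by exact_mod_cast hu) two_ne_zero
    have h3 : (2 : ℤ) ∣ 2 * b * v ^ 2 := ⟨b * v ^ 2, by ring⟩
    omega
  have hub : ¬ (b : ℤ) ∣ u := by
    intro hu
    have : (b : ℤ) ∣ (c : ℤ) ^ j := by
      rw [← hg.2.1]
      exact dvd_add (dvd_pow hu two_ne_zero) ⟨2 * v ^ 2, by ring⟩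
    exact prime_not_dvd_pow hb hc hbc j this
  by_cases hq2 : q = 2
  · subst hq2
    have hjz : j = z := by omega
    subst hjz
    rw [P_two] at h1
    have e1 := hg.2.1
    rw [← hh] at e1
    rcases abs_eq_abs.1 h1 with h | h
    · refine odd_pow_not_sq Nat.prime_two k u ?_
      push_cast; linarith
    · refine odd_pow_not_sq hb l u ?_
      linarith
  · have hq3 : 3 ≤ q := by have := hq.two_le; omega
    have hE2 : ((2 : ℕ) : ℤ) ∣ -(2 * b) * v ^ 2 := ⟨-b * v ^ 2, by push_cast; ring⟩
    have hEb : (b : ℤ) ∣ -(2 * b) * v ^ 2 := ⟨-2 * v ^ 2, by ring⟩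
    obtain ⟨hQ1, -⟩ := Q_adic 2 q Nat.prime_two hq u _ hE2 hu
    obtain ⟨hQb, hQb2⟩ := Q_adic b q hb hq u _ hEb hub
    have hd : (2 : ℤ) ^ (k + 1) * (b : ℤ) ^ l ∣ v * Q u (-(2 * b) * v ^ 2) q := by
      rw [← abs_dvd, h2, abs_dvd]
    have hQ2 := hQ1 (Ne.symm hq2)
    have hQb3 : ¬ ((b : ℤ) ^ 2 ∣ Q u (-(2 * b) * v ^ 2) q) := by
      by_cases h5 : 5 ≤ q
      · exact hQb2 h5
      · have : q = 3 := by
          have : q ≠ 4 := by rintro rfl; exact absurd hq (by norm_num)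
          omega
        subst this
        by_cases hb3 : b = 3
        · subst hb3
          rw [Q_three']
          rintro ⟨t, ht⟩
          push_cast at ht hub
          have h6 : u ^ 2 + v ^ 2 = 3 * (t + v ^ 2) := by linarith
          have hu3 : u % 3 = 1 ∨ u % 3 = 2 := by omega
          have hv3 : v % 3 = 0 ∨ v % 3 = 1 ∨ v % 3 = 2 := by omega
          have h7 : (u ^ 2 + v ^ 2) % 3 = 0 := by omega
          rcases hu3 with hu3 | hu3 <;> rcases hv3 with hv3 | hv3 | hv3 <;>
          rw [pow_two, pow_two, Int.add_emod, Int.mul_emod u, Int.mul_emod v, hu3, hv3] at h7 <;>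
          norm_num at h7
        · intro hd
          exact hQb hb3 (dvd_trans (dvd_pow_self _ two_ne_zero) hd)
    have d1 : ((2 : ℕ) : ℤ) ^ (k + 1) ∣ q * v :=
      size_dvd Nat.prime_two (dvd_trans (by push_cast; exact dvd_mul_right _ _) hd) hQ1
        (fun hx => hQ2 (dvd_trans (dvd_pow_self _ two_ne_zero) hx))
    have d2 : (b : ℤ) ^ l ∣ q * v :=
      size_dvd hb (dvd_trans (dvd_mul_left _ _) hd) hQb hQb3
    have d3 := pow_coprime_mul_dvd Nat.prime_two hb (Ne.symm hb2) d1 d2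
    have hv0 := hg.ne_zero
    have hle := Int.le_of_dvd (by positivity) (pow_dvd_pow_of_dvd d3 2)
    push_cast at hle
    have hb3 : (3 : ℤ) ≤ b := by have := hb.two_le; omega
    have hv1 : (1 : ℤ) ≤ v ^ 2 := by have := pow_two_pos_of_ne_zero hv0; omega
    have hu0 : u ≠ 0 := by rintro rfl; exact hu (dvd_zero _)
    have hu1 : (1 : ℤ) ≤ u ^ 2 := by have := pow_two_pos_of_ne_zero hu0; omega
    have hN6 : 6 ≤ (c : ℤ) ^ j := by rw [← hg.2.1]; nlinarith
    have hs := size2 _ q hN6 hq3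
    rw [← pow_mul _ j q, ← hzj, mul_comm 2 z, pow_mul, ← hh] at hs
    have hA : (2 : ℤ) ≤ 2 ^ (2 * k + 1) := by
      rw [pow_succ]; have : (0 : ℤ) < 2 ^ (2 * k) := by positivity
      omega
    have hB : (2 : ℤ) ≤ (b : ℤ) ^ (2 * l + 1) := by
      rw [pow_succ]; have : (0 : ℤ) < (b : ℤ) ^ (2 * l) := by positivity
      nlinarith
    have hAB : 4 * ((2 : ℤ) ^ (2 * k + 1) * (b : ℤ) ^ (2 * l + 1)) = 2 * b * (2 ^ (k + 1) * b ^ l) ^ 2 := by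
      ring
    set A := (2 : ℤ) ^ (2 * k + 1)
    set B := (b : ℤ) ^ (2 * l + 1)
    have hle2 : 4 * (A * B) ≤ (q : ℤ) ^ 2 * (c : ℤ) ^ j := by
      rw [hAB, ← hg.2.1]
      have := mul_le_mul_of_nonneg_left hle (show (0 : ℤ) ≤ 2 * b by positivity)
      nlinarith [mul_nonneg (sq_nonneg (q : ℤ)) (sq_nonneg u)]
    have hab : A + B ≤ A * B := by nlinarith
    have hfin : (4 * (A + B)) ^ 2 ≤ ((q : ℤ) ^ 2 * (c : ℤ) ^ j) ^ 2 :=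
      pow_le_pow_left₀ (by positivity) (by linarith) 2
    have e : ((q : ℤ) ^ 2 * (c : ℤ) ^ j) ^ 2 = (q : ℤ) ^ 4 * ((c : ℤ) ^ j) ^ 2 := by ring
    rw [e] at hfin
    linarith

lemma sum_prod_eq {A B A' B' : ℤ} (h1 : A + B = A' + B') (h2 : |A - B| = |A' - B'|) :
    (A = A' ∧ B = B') ∨ (A = B' ∧ B = A') := by
  rcases abs_eq_abs.1 h2 with h | h
  · left; constructor <;> linarith
  · right; constructor <;> linarith

theorem L4 (b c : ℕ) (hb : b.Prime) (hc : c.Prime) (hb2 : b ≠ 2) (hc2 : c ≠ 2) (hbc : b ≠ c)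
    (k l z k' l' z' : ℕ) (hz : 1 ≤ z) (hz' : 1 ≤ z')
    (h : 2 ^ (2 * k + 1) + b ^ (2 * l + 1) = c ^ z)
    (h' : 2 ^ (2 * k' + 1) + b ^ (2 * l' + 1) = c ^ z') :
    k = k' ∧ l = l' ∧ z = z' := by
  have hcast : ∀ k l z : ℕ, 2 ^ (2 * k + 1) + b ^ (2 * l + 1) = c ^ z →
    (2 : ℤ) ^ (2 * k + 1) + (b : ℤ) ^ (2 * l + 1) = (c : ℤ) ^ z := by
    intro k l z h
    exact_mod_cast h
  have hg : ∀ k l z : ℕ, 1 ≤ z → 2 ^ (2 * k + 1) + b ^ (2 * l + 1) = c ^ z →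
      GZ (2 * b) c (2 * z) (2 ^ (2 * k + 1) - b ^ (2 * l + 1)) (2 ^ (k + 1) * b ^ l) := by
    intro k l z hz h
    refine ⟨by omega, ?_, ?_⟩
    · have := hcast k l z h
      rw [mul_comm 2 z, pow_mul, ← this]; ring
    · intro hd
      rcases (np hc).dvd_or_dvd hd with hd | hd
      · exact prime_not_dvd_pow hc Nat.prime_two hc2 _ (by exact_mod_cast hd)
      · exact prime_not_dvd_pow hc hb (Ne.symm hbc) _ hd
  have hcD : ¬ (c : ℤ) ∣ 2 * b := by
    intro hd
    rcases (np hc).dvd_or_dvd hd with hd | hd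
    · exact odd_prime_not_dvd_two hc hc2 hd
    · exact prime_not_dvd hc hb (Ne.symm hbc) hd
  obtain ⟨e1, e2, e3⟩ := G2Z (2 * b) c (np hc) (odd_prime_not_dvd_two hc hc2) hcD
    (by have := hb.two_le; omega) (2 * z) (2 * z') _ _ _ _
    (hg k l z hz h) (hg k' l' z' hz' h') (L4prim b c hb hc hb2 hc2 hbc k l z h)
    (L4prim b c hb hc hb2 hc2 hbc k' l' z' h')
  have hzz : z = z' := by omega
  subst hzz
  have hs := (hcast k l z h).trans (hcast k' l' z h').symm
  rcases sum_prod_eq hs e2 with ⟨ha, hb'⟩ | ⟨ha, hb'⟩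
  · have := two_pow_inj ha
    have := prime_pow_inj hb hb'
    exact ⟨by omega, by omega, rfl⟩
  · exfalso
    have : (b : ℤ) ∣ ((2 : ℕ) : ℤ) ^ (2 * k + 1) := by
      push_cast; rw [ha]; exact dvd_pow_self _ (by omega)
    exact prime_not_dvd_pow hb Nat.prime_two hb2 _ this

end QD


namespace QD

theorem sq_eq_one_iff_of_side (v : ℤ) (h : v^2 = 1) : v = 1 ∨ v = -1 := by
  have : (v-1)*(v+1) = 0 := by linear_combination h
  rcases mul_eq_zero.1 this with h | h
  · left; omega
  · right; omega

lemma PQ_add (r E : ℤ) (m n : ℕ) : P r E (m + n) = P r E m * P r E n + E * (Q r E m * Q r E n) ∧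
    Q r E (m + n) = P r E m * Q r E n + Q r E m * P r E n := by
  induction n with
  | zero => simp
  | succ n ih =>
    obtain ⟨h1, h2⟩ := ih
    rw [← add_assoc, P_succ _ _ (m + n), Q_succ _ _ (m + n), P_succ _ _ n, Q_succ _ _ n, h1, h2]
    constructor <;> ring

lemma Q_shift (r E : ℤ) (n j : ℕ) :
    Q r E (n + 2 * j) = (r ^ 2 - E) ^ j * Q r E n + 2 * (Q r E j * P r E (n + j)) := by
  rw [← PQ_norm, two_mul, (PQ_add r E n (j + j)).2, (PQ_add r E j j).1, (PQ_add r E j j).2,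
    (PQ_add r E n j).1]
  ring

lemma P_odd (r E : ℤ) (hr : r % 2 = 1) (hE : E % 2 = 0) (n : ℕ) : P r E n % 2 = 1 := by
  rcases n with _ | n
  · simp
  · obtain ⟨⟨t, ht⟩, -⟩ := Q_odd' r E n
    rw [ht]
    have h1 : r ^ (n + 1) % 2 = 1 := Int.odd_iff.1 (Odd.pow (Int.odd_iff.2 hr))
    have h2 : E * t % 2 = 0 := by rw [Int.mul_emod, hE]; simp
    omega

lemma Q_odd_index (r E : ℤ) (hr : r % 2 = 1) (hE : E % 2 = 0) (i : ℕ) : Q r E (2 * i + 1) % 2 = 1 := by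
  obtain ⟨-, ⟨t, ht⟩⟩ := Q_odd' r E (2 * i)
  rw [ht]
  have h1 : (((2 * i : ℕ) : ℤ) + 1) * r ^ (2 * i) % 2 = 1 :=
    Int.odd_iff.1 (Odd.mul (by push_cast; exact ⟨i, rfl⟩) (Odd.pow (Int.odd_iff.2 hr)))
  have h2 : E * t % 2 = 0 := by rw [Int.mul_emod, hE]; simp
  omega

lemma Q_double (r E : ℤ) (j : ℕ) : Q r E (2 * j) = 2 * (Q r E j * P r E j) := by
  have := Q_shift r E 0 j
  simpa using this

lemma odd_mul_mod {a b : ℤ} (ha : a % 2 = 1) (hb : b % 2 = 1) : a * b % 2 = 1 := 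
  Int.odd_iff.1 (Odd.mul (Int.odd_iff.2 ha) (Int.odd_iff.2 hb))

lemma Q_val (r E : ℤ) (hr : r % 2 = 1) (hE : E % 2 = 0) (e i : ℕ) :
    ∃ w, w % 2 = 1 ∧ Q r E (2 ^ e * (2 * i + 1)) = 2 ^ e * w := by
  induction e with
  | zero => exact ⟨_, Q_odd_index r E hr hE i, by simp⟩
  | succ e ih =>
    obtain ⟨w, hw, h⟩ := ih
    refine ⟨w * P r E (2 ^ e * (2 * i + 1)), odd_mul_mod hw (P_odd r E hr hE _), ?_⟩
    rw [pow_succ', mul_assoc, Q_double, h]; ring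

lemma pow_val (M : ℤ) (f : ℕ) (hf : 2 ≤ f) (w : ℤ) (hw : w % 2 = 1) (hM : M = 1 + 2 ^ f * w)
    (e i : ℕ) : ∃ w', w' % 2 = 1 ∧ M ^ (2 ^ e * (2 * i + 1)) = 1 + 2 ^ (f + e) * w' := by
  obtain ⟨g, rfl⟩ : ∃ g, f = g + 2 := ⟨f - 2, by omega⟩
  induction e with
  | zero =>
    induction i with
    | zero => exact ⟨w, hw, by simp [hM]⟩
    | succ i ih =>
      obtain ⟨w', hw', h⟩ := ih
      have e : (2 : ℕ) ^ 0 * (2 * (i + 1) + 1) = 2 ^ 0 * (2 * i + 1) + 2 := by ring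
      refine ⟨w' + 2 * (w + 2 ^ (g + 1) * w ^ 2) * (1 + 2 ^ (g + 2) * w'), ?_, ?_⟩
      · rw [mul_assoc]; omega
      · rw [e, pow_add, h, hM, add_zero]; ring
  | succ e ih =>
    obtain ⟨w', hw', h⟩ := ih
    refine ⟨w' + 2 * (2 ^ (g + e) * w' ^ 2), by omega, ?_⟩
    rw [pow_succ, mul_right_comm, pow_mul, h]
    ring

lemma odd_decomp (n : ℕ) (hn : n ≠ 0) : ∃ e i, n = 2 ^ e * (2 * i + 1) := by
  obtain ⟨e, m, hm, h⟩ := Nat.exists_eq_two_pow_mul_odd hn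
  obtain ⟨i, rfl⟩ := hm
  exact ⟨e, i, h⟩

/-- the valuation clash -/
lemma val_clash (r E M : ℤ) (f : ℕ) (hf : 2 ≤ f) (w : ℤ) (hw : w % 2 = 1) (hM : M = 1 + 2 ^ f * w)
    (hr : r % 2 = 1) (hE : E % 2 = 0) (j : ℕ) (hj : j ≠ 0) (T : ℤ) (hT : T % 2 = 1) (a : ℕ)
    (ha : a < f) (h : M ^ j - 1 = 2 ^ a * (Q r E j * T)) : False := by
  obtain ⟨e, i, rfl⟩ := odd_decomp j hj
  obtain ⟨w1, hw1, h1⟩ := Q_val r E hr hE e i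
  obtain ⟨w2, hw2, h2⟩ := pow_val M f hf w hw hM e i
  rw [h1, h2] at h
  obtain ⟨g, rfl⟩ : ∃ g, f = a + (g + 1) := ⟨f - a - 1, by omega⟩
  have h3 : (2 : ℤ) ^ (e + a) * (2 * (2 ^ g * w2)) = 2 ^ (e + a) * (w1 * T) := by
    rw [show (2 : ℤ) ^ (e + a) * (w1 * T) = 2 ^ a * (2 ^ e * w1 * T) by ring, ← h]; ring
  have h4 := mul_left_cancel₀ (by positivity) h3
  have h5 := odd_mul_mod hw1 hT
  omega

/-! ### L0 and L1 -/

lemma L0 (w h : ℕ) (e : 3 ^ w = 2 ^ h + 1) : h = 1 ∨ h = 3 := by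
  by_cases h4 : 4 ≤ h
  · exfalso
    obtain ⟨g, rfl⟩ : ∃ g, h = g + 4 := ⟨h - 4, by omega⟩
    have e1 : 3 ^ w % 16 = 1 := by rw [e, pow_add]; omega
    have hw : w = 4 * (w / 4) + w % 4 := by omega
    have hw4 : w % 4 < 4 := Nat.mod_lt _ (by norm_num)
    have e2 : 3 ^ w % 16 = 3 ^ (w % 4) % 16 := by
      conv_lhs => rw [hw, pow_add, pow_mul, Nat.mul_mod, Nat.pow_mod]
      norm_num
    have e3 : 3 ^ w % 5 = 3 ^ (w % 4) % 5 := by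
      conv_lhs => rw [hw, pow_add, pow_mul, Nat.mul_mod, Nat.pow_mod]
      norm_num
    rw [e1] at e2
    interval_cases hh : w % 4 <;> norm_num at e2
    norm_num at e3
    have : 5 ∣ 2 ^ (g + 4) := by omega
    have := Nat.Prime.dvd_of_dvd_pow (by norm_num) this
    omega
  · interval_cases h
    · exfalso
      have : 3 ^ w % 2 = 1 := by rw [Nat.pow_mod]; simp
      omega
    · left; rfl
    · exfalso
      have h5 : (5 : ℕ) ∣ 3 ^ w := by rw [e]; norm_num
      have := Nat.Prime.dvd_of_dvd_pow (by norm_num) h5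
      omega
    · right; rfl

lemma pow3_mod4 (j : ℕ) : (j % 2 = 0 → (3 : ℤ) ^ j % 4 = 1) ∧ (j % 2 = 1 → (3 : ℤ) ^ j % 4 = 3) := by
  induction j with
  | zero => simp
  | succ j ih => rw [pow_succ]; omega

/-- `r^2 = 1`, `E = -2`, `Q = ± 1` forces index at most three -/
lemma Q_neg_two (r : ℤ) (hr : r ^ 2 = 1) (z : ℕ) (hz : z % 2 = 1) (h : |Q r (-2) z| = 1) :
    z = 1 ∨ z = 3 := by
  have hr2 : r % 2 = 1 := by
    rcases sq_eq_one_iff_of_side r hr with rfl | rfl <;> norm_num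
  have hE : (-2 : ℤ) % 2 = 0 := by norm_num
  have hN : r ^ 2 - -2 = 3 := by rw [hr]; norm_num
  have h9 : ∀ i : ℕ, ∀ n, Q r (-2) n = 1 → i ≠ 0 → Q r (-2) (n + 2 * (2 * i)) = 1 → False := by
    intro i n hn hi h1
    rw [Q_shift, hN, hn, Q_double, pow_mul] at h1
    refine val_clash r (-2) 9 3 (by norm_num) 1 (by norm_num) (by norm_num) hr2 hE i hi
      (-(P r (-2) i * P r (-2) (n + 2 * i))) ?_ 2 (by norm_num) ?_
    · have := odd_mul_mod (P_odd r (-2) hr2 hE i) (P_odd r (-2) hr2 hE (n + 2 * i))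
      omega
    · norm_num at h1 ⊢
      linarith
  have hQ1 : Q r (-2) 1 = 1 := by simp [Q_succ]
  have hQ3 : Q r (-2) 3 = 1 := by rw [Q_three', hr]; norm_num
  obtain ⟨j, rfl⟩ : ∃ j, z = 1 + 2 * j := ⟨z / 2, by omega⟩
  rcases (abs_eq (by norm_num)).1 h with h | h
  · by_cases hj : j % 2 = 0
    · obtain ⟨i, rfl⟩ : ∃ i, j = 2 * i := ⟨j / 2, by omega⟩
      by_contra hne
      exact h9 i 1 hQ1 (by omega) h
    · obtain ⟨i, rfl⟩ : ∃ i, j = 2 * i + 1 := ⟨j / 2, by omega⟩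
      by_contra hne
      exact h9 i 3 hQ3 (by omega) (by rw [← h]; congr 1; ring)
  · exfalso
    rw [Q_shift, hN, hQ1] at h
    have hP := P_odd r (-2) hr2 hE (1 + j)
    obtain ⟨h3, h4⟩ := pow3_mod4 j
    rcases Nat.mod_two_eq_zero_or_one j with hj | hj
    · obtain ⟨i, rfl⟩ : ∃ i, j = 2 * i := ⟨j / 2, by omega⟩
      have := h3 hj
      rw [Q_double, mul_assoc] at h
      omega
    · obtain ⟨i, rfl⟩ : ∃ i, j = 2 * i + 1 := ⟨j / 2, by omega⟩
      have := h4 hj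
      have h5 := odd_mul_mod (Q_odd_index r (-2) hr2 hE i) hP
      omega

lemma prime_pow_eq {b p : ℕ} (hb : b.Prime) (hp : p.Prime) {n m : ℕ} (hm : m ≠ 0) (h : b ^ n = p ^ m) : b = p := by
  have : p ∣ b ^ n := by rw [h]; exact dvd_pow_self _ hm
  exact ((Nat.prime_dvd_prime_iff_eq hp hb).1 (hp.dvd_of_dvd_pow this)).symm

/-- difference of squares being a power of two -/
lemma two_pow_factor (C B x : ℕ) (hC : C % 2 = 1) (hB : B % 2 = 1) (h : 2 ^ x + B ^ 2 = C ^ 2) :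
    ∃ h, 1 ≤ h ∧ C = 2 ^ h + 1 ∧ B + 1 = 2 ^ h := by
  have hlt : B < C := by
    have : 0 < 2 ^ x := by positivity
    nlinarith
  obtain ⟨d, rfl⟩ : ∃ d, C = B + d := ⟨C - B, by omega⟩
  have e : 2 ^ x = d * (2 * B + d) := by nlinarith
  obtain ⟨i, -, hi⟩ := (Nat.dvd_prime_pow Nat.prime_two).1 (Dvd.intro _ e.symm)
  obtain ⟨j, -, hj⟩ := (Nat.dvd_prime_pow Nat.prime_two).1 (Dvd.intro_left _ e.symm)
  have hi1 : i = 1 := by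
    rcases i with _ | _ | i
    · simp at hi; omega
    · rfl
    · exfalso
      rcases j with _ | _ | j
      · simp at hj; omega
      · have : 0 < 2 ^ i := by positivity
        rw [pow_succ, pow_succ] at hi
        omega
      · rw [pow_succ, pow_succ] at hi hj
        omega
  subst hi1
  rcases j with _ | j
  · simp at hj; omega
  · rw [pow_succ] at hj
    refine ⟨j, ?_, by omega, by omega⟩
    rcases j with _ | j
    · simp at hj; omega
    · omega

lemma pow_odd_nat {c : ℕ} (hc : c % 2 = 1) (n : ℕ) : c ^ n % 2 = 1 := 
  Nat.odd_iff.1 (Odd.pow (Nat.odd_iff.2 hc))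

lemma odd_sq_mod8 {c : ℕ} (hc : c % 2 = 1) : c ^ 2 % 8 = 1 := by
  have : c % 8 = 1 ∨ c % 8 = 3 ∨ c % 8 = 5 ∨ c % 8 = 7 := by omega
  rcases this with h | h | h | h <;> rw [Nat.pow_mod, h]

lemma sq_mod3 {c : ℕ} (hc : c % 3 ≠ 0) : c ^ 2 % 3 = 1 := by
  have : c % 3 = 1 ∨ c % 3 = 2 := by omega
  rcases this with h | h <;> rw [Nat.pow_mod, h]

lemma prime_mod3 {b : ℕ} (hb : b.Prime) (h : b ≠ 3) : b % 3 ≠ 0 := by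
  intro h0
  exact h ((Nat.prime_dvd_prime_iff_eq Nat.prime_three hb).1 (Nat.dvd_of_mod_eq_zero h0)).symm

lemma two_pow_mod3 (k : ℕ) : 2 ^ (2 * k) % 3 = 1 ∧ 2 ^ (2 * k + 1) % 3 = 2 := by
  have h : 2 ^ (2 * k) % 3 = 1 := by rw [pow_mul, Nat.pow_mod]; norm_num
  exact ⟨h, by rw [pow_succ]; omega⟩

theorem L1 (b c : ℕ) (hb : b.Prime) (hc : c.Prime) (hb2 : b ≠ 2) (hb3 : b ≠ 3)
    (l Y z : ℕ) (hY : 1 ≤ Y) (hz : 1 ≤ z) (h : 2 ^ (2 * l + 1) + b ^ (2 * Y) = c ^ z) :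
    c = 3 ∧ (b = 5 ∨ b = 7) := by
  have hbo := hb.eq_two_or_odd.resolve_left hb2
  have hc3 : c = 3 := by
    have h1 := (two_pow_mod3 l).2
    have h2 : b ^ (2 * Y) % 3 = 1 := by
      rw [mul_comm, pow_mul]
      apply sq_mod3
      intro h0
      exact prime_mod3 hb hb3 (Nat.mod_eq_zero_of_dvd
        (Nat.prime_three.dvd_of_dvd_pow (Nat.dvd_of_mod_eq_zero h0)))
    have h3 : 3 ∣ c ^ z := by omega
    exact ((Nat.prime_dvd_prime_iff_eq Nat.prime_three hc).1 (Nat.prime_three.dvd_of_dvd_pow h3)).symm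
  subst hc3
  refine ⟨rfl, ?_⟩
  have hBo := pow_odd_nat hbo Y
  rcases Nat.mod_two_eq_zero_or_one z with hz2 | hz2
  · obtain ⟨w, rfl⟩ : ∃ w, z = w * 2 := ⟨z / 2, by omega⟩
    rw [mul_comm 2 Y, pow_mul, pow_mul 3] at h
    obtain ⟨g, hg, h1, h2⟩ := two_pow_factor (3 ^ w) (b ^ Y) _ (pow_odd_nat (by norm_num) w) hBo h
    rcases L0 w g h1 with rfl | rfl
    · exfalso
      have : b ^ Y = 1 := by omega
      have := Nat.one_lt_pow (by omega : Y ≠ 0) hb.one_lt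
      omega
    · right
      exact prime_pow_eq hb (by norm_num : Nat.Prime 7) one_ne_zero (n := Y) (by omega)
  · left
    have hl : l = 0 := by
      by_contra hl
      obtain ⟨l', rfl⟩ : ∃ l', l = l' + 1 := ⟨l - 1, by omega⟩
      have h1 := odd_sq_mod8 hBo
      rw [← pow_mul, mul_comm Y 2] at h1
      have h2 : 2 ^ (2 * (l' + 1) + 1) = 8 * 2 ^ (2 * l') := by ring
      obtain ⟨w, rfl⟩ : ∃ w, z = 2 * w + 1 := ⟨z / 2, by omega⟩
      have h3 : 3 ^ (2 * w + 1) % 8 = 3 := by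
        rw [pow_succ, pow_mul, Nat.mul_mod, Nat.pow_mod]; norm_num
      omega
    subst hl
    have hh : ((b : ℤ) ^ Y) ^ 2 + 2 * 1 ^ 2 = ((3 : ℕ) : ℤ) ^ z := by
      have : (2 : ℤ) ^ (2 * 0 + 1) + (b : ℤ) ^ (2 * Y) = ((3 : ℕ) : ℤ) ^ z := by exact_mod_cast h
      rw [← this]; ring
    have h31 : ¬ ((3 : ℕ) : ℤ) ∣ 1 := by norm_num
    obtain ⟨m, u, v, hg, hall⟩ := G1Z 2 (3 : ℕ) (np Nat.prime_three) (by norm_num) (by norm_num)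
      (by norm_num) 1 1 1 ⟨le_rfl, by norm_num, h31⟩
    obtain ⟨k, hk, hmk, -⟩ := hall 1 1 1 ⟨le_rfl, by norm_num, h31⟩
    have hm : m = 1 := Nat.eq_one_of_mul_eq_one_right hmk.symm
    subst hm
    obtain ⟨k', hk', hzk, -, hs⟩ := hall z _ _ ⟨hz, hh, h31⟩
    rw [one_mul] at hzk
    subst hzk
    have huv := hg.2.1
    have hv0 := hg.ne_zero
    have hv1 : v ^ 2 = 1 := by
      have := pow_two_pos_of_ne_zero hv0
      have := sq_nonneg u
      push_cast at huv
      have : v ^ 2 < 2 := by linarith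
      omega
    have hu1 : u ^ 2 = 1 := by push_cast at huv; linarith
    rw [hv1, abs_mul, (by rcases sq_eq_one_iff_of_side v hv1 with h | h <;> rw [h] <;> norm_num : |v| = 1)] at hs
    have : |Q u (-2) z| = 1 := by
      rw [abs_one, one_mul] at hs
      norm_num at hs
      exact hs.symm
    rcases Q_neg_two u hu1 z hz2 this with rfl | rfl
    · exfalso
      have := Nat.one_lt_pow (by omega : 2 * Y ≠ 0) hb.one_lt
      omega
    · exact prime_pow_eq hb (by norm_num : Nat.Prime 5) two_ne_zero (n := 2 * Y) (by omega)

end QD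


namespace QD

lemma Q_mod3 (r F : ℤ) (hr : r ^ 2 = 1) (hF : F % 3 = 1) (n : ℕ) :
    Q r (-F) (n + 8) % 3 = Q r (-F) n % 3 := by
  obtain ⟨g, hg⟩ : ∃ g, F = 1 + 3 * g := ⟨F / 3, by omega⟩
  have step : ∀ n, ∃ t, P r (-F) (n + 1) = r * P r (-F) n - Q r (-F) n + 3 * t := by
    intro n
    exact ⟨-g * Q r (-F) n, by rw [P_succ, hg]; ring⟩
  obtain ⟨t0, h0⟩ := step n
  obtain ⟨t1, h1⟩ := step (n + 1)
  obtain ⟨t2, h2⟩ := step (n + 2)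
  obtain ⟨t3, h3⟩ := step (n + 3)
  obtain ⟨t4, h4⟩ := step (n + 4)
  obtain ⟨t5, h5⟩ := step (n + 5)
  obtain ⟨t6, h6⟩ := step (n + 6)
  have q0 := Q_succ r (-F) n
  have q1 := Q_succ r (-F) (n + 1)
  have q2 := Q_succ r (-F) (n + 2)
  have q3 := Q_succ r (-F) (n + 3)
  have q4 := Q_succ r (-F) (n + 4)
  have q5 := Q_succ r (-F) (n + 5)
  have q6 := Q_succ r (-F) (n + 6)
  have q7 := Q_succ r (-F) (n + 7)
  simp only [add_assoc, Nat.reduceAdd] at *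
  rcases sq_eq_one_iff_of_side r hr with rfl | rfl <;> omega

lemma Q_seven (r F : ℤ) (hr : r ^ 2 = 1) (hF : F % 3 = 1) (t : ℕ) : Q r (-F) (8 * t + 7) % 3 = 1 := by
  induction t with
  | zero =>
    have h := Q_shift r (-F) 1 3
    have hQ1 : Q r (-F) 1 = 1 := by simp [Q_succ]
    have hP4 : P r (-F) 4 = 1 - 6 * F + F ^ 2 := by
      rw [P_succ, P_three, Q_three']
      linear_combination (r ^ 2 + 1 - 6 * F) * hr
    obtain ⟨g, hg⟩ : ∃ g, F = 1 + 3 * g := ⟨F / 3, by omega⟩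
    norm_num at h ⊢
    rw [h, hQ1, Q_three', hP4, hr, hg]
    ring_nf
    omega
  | succ t ih => rw [show 8 * (t + 1) + 7 = 8 * t + 7 + 8 by ring, Q_mod3 r F hr hF, ih]

lemma four_pow_mod (k : ℕ) : (4 : ℤ) ^ k % 3 = 1 := by
  induction k with
  | zero => norm_num
  | succ k ih => rw [pow_succ]; omega

lemma pow_mod_one (N : ℤ) (m : ℤ) (h : m ∣ N - 1) (j : ℕ) : m ∣ N ^ j - 1 :=
  h.trans (sub_one_dvd_pow_sub_one N j)

lemma Q_neg_four (r : ℤ) (hr : r ^ 2 = 1) (k : ℕ) (hk : 1 ≤ k) (q : ℕ) (hq : q % 2 = 1) (hq1 : q ≠ 1)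
    (h : |Q r (-4 ^ k) q| = 1) : k = 1 ∧ q = 3 := by
  have hr2 : r % 2 = 1 := by
    rcases sq_eq_one_iff_of_side r hr with rfl | rfl <;> norm_num
  obtain ⟨k', rfl⟩ : ∃ k', k = k' + 1 := ⟨k - 1, by omega⟩
  have h4 : (4 : ℤ) ^ (k' + 1) = 4 * 4 ^ k' := by ring
  have hE : (-4 ^ (k' + 1) : ℤ) % 2 = 0 := by omega
  have hN : r ^ 2 - (-4 ^ (k' + 1)) = 1 + 4 ^ (k' + 1) := by rw [hr]; ring
  have hQ1 : Q r (-4 ^ (k' + 1)) 1 = 1 := by simp [Q_succ]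
  obtain ⟨m, rfl⟩ : ∃ m, q = 1 + 2 * m := ⟨q / 2, by omega⟩
  have hm0 : m ≠ 0 := by omega
  have hs := Q_shift r (-4 ^ (k' + 1)) 1 m
  rw [hN, hQ1, mul_one] at hs
  have hP := P_odd r _ hr2 hE (1 + m)
  rcases (abs_eq (by norm_num)).1 h with h1 | h1
  · exfalso
    rw [h1] at hs
    refine val_clash r _ (1 + 4 ^ (k' + 1)) (2 * (k' + 1)) (by omega) 1 (by norm_num)
      (by rw [pow_mul]; norm_num) hr2 hE m hm0 (-P r (-4 ^ (k' + 1)) (1 + m)) (by omega) 1 (by omega) ?_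
    linear_combination -hs
  · rw [h1] at hs
    have hd : (4 : ℤ) ∣ (1 + 4 ^ (k' + 1)) ^ m - 1 := pow_mod_one _ _ ⟨4 ^ k', by rw [h4]; ring⟩ m
    have hmo : m % 2 = 1 := by
      by_contra hmo
      obtain ⟨i, rfl⟩ : ∃ i, m = 2 * i := ⟨m / 2, by omega⟩
      rw [Q_double, mul_assoc] at hs
      omega
    obtain ⟨j, rfl⟩ : ∃ j, m = 1 + 2 * j := ⟨m / 2, by omega⟩
    by_cases hj : j = 0
    · subst hj
      have h3 := Q_three' r (-4 ^ (k' + 1))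
      norm_num at h1
      rw [h1, hr] at h3
      have h5 : (4 : ℤ) ^ k' = 1 := by linarith
      have : k' = 0 := by
        by_contra h0
        have := one_lt_pow₀ (show (1 : ℤ) < 4 by norm_num) h0
        omega
      subst this
      exact ⟨rfl, rfl⟩
    · exfalso
      have hs2 := Q_shift r (-4 ^ (k' + 1)) 3 (2 * j)
      rw [show 3 + 2 * (2 * j) = 1 + 2 * (1 + 2 * j) by ring, h1, hN, Q_three', hr] at hs2
      have hP3 := P_odd r _ hr2 hE (3 + 2 * j)
      by_cases hk0 : k' = 0
      · subst hk0
        norm_num at hs2 hP3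
        refine val_clash r (-4) 5 2 (by norm_num) 1 (by norm_num) (by norm_num) hr2 (by norm_num) (2 * j) (by omega)
          (P r (-4) (3 + 2 * j)) hP3 1 (by norm_num) ?_
        linear_combination hs2
      · obtain ⟨k, rfl⟩ : ∃ k, k' = k + 1 := ⟨k' - 1, by omega⟩
        obtain ⟨s, hs3⟩ : (16 : ℤ) ∣ (1 + 4 ^ (k + 1 + 1)) ^ (2 * j) - 1 :=
          pow_mod_one _ _ ⟨4 ^ k, by ring⟩ _
        have e : (1 + (4 : ℤ) ^ (k + 1 + 1)) ^ (2 * j) = 1 + 16 * s := by linarith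
        have e4 : (4 : ℤ) ^ (k + 1 + 1) = 16 * 4 ^ k := by ring
        have hjo : j % 2 = 1 := by
          by_contra hjo
          obtain ⟨i, rfl⟩ : ∃ i, j = 2 * i := ⟨j / 2, by omega⟩
          rw [Q_double, Q_double, e] at hs2
          have : (-1 : ℤ) = 8 * (2 * s * 3 + (1 + 16 * s) * (-2 * 4 ^ k) + 
            Q r (-4 ^ (k + 1 + 1)) i * P r (-4 ^ (k + 1 + 1)) i * P r (-4 ^ (k + 1 + 1)) (2 * i) 
              * P r (-4 ^ (k + 1 + 1)) (3 + 2 * (2 * i))) + 3 := by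
            rw [e4] at hs2 ⊢
            linear_combination hs2
          omega
        have h7 := Q_seven r (4 ^ (k + 1 + 1)) hr (four_pow_mod _) (j / 2)
        rw [show 8 * (j / 2) + 7 = 1 + 2 * (1 + 2 * j) by omega, h1] at h7
        norm_num at h7

/-- even-even, odd `z` -/
theorem L6odd (b c : ℕ) (hb : b.Prime) (hc : c.Prime) (hb2 : b ≠ 2) (hc2 : c ≠ 2) (hbc : b ≠ c)
    (k Y z : ℕ) (hk : 1 ≤ k) (hY : 1 ≤ Y) (hz : z % 2 = 1) (h : 2 ^ (2 * k) + b ^ (2 * Y) = c ^ z) :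
    z = 1 ∨ (b = 11 ∧ c = 5 ∧ k = 1 ∧ Y = 1 ∧ z = 3) := by
  by_contra hcon
  have hbo := hb.eq_two_or_odd.resolve_left hb2
  have hco := hc.eq_two_or_odd.resolve_left hc2
  obtain ⟨k', rfl⟩ : ∃ k', k = k' + 1 := ⟨k - 1, by omega⟩
  have hh : ((b : ℤ) ^ Y) ^ 2 + 4 * ((2 : ℤ) ^ k') ^ 2 = c ^ z := by
    have : (2 : ℤ) ^ (2 * (k' + 1)) + (b : ℤ) ^ (2 * Y) = (c : ℤ) ^ z := by exact_mod_cast h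
    rw [← this]; ring
  have hc4 : ¬ (c : ℤ) ∣ 4 := fun hd => odd_prime_not_dvd_two hc hc2 ((np hc).dvd_of_dvd_pow
    (show (c : ℤ) ∣ 2 ^ 2 by norm_num; exact hd))
  -- c is 1 mod 4
  have hc1 : c % 4 = 1 := by
    have h1 := odd_sq_mod8 (pow_odd_nat hbo Y)
    rw [← pow_mul, mul_comm Y 2] at h1
    have h2 : 2 ^ (2 * (k' + 1)) = 4 * 2 ^ (2 * k') := by ring
    have h3 : c ^ z % 4 = 1 := by omega
    by_contra hne
    have h4 : c % 4 = 3 := by omega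
    obtain ⟨w, rfl⟩ : ∃ w, z = 2 * w + 1 := ⟨z / 2, by omega⟩
    rw [Nat.pow_mod, h4, pow_succ, pow_mul, Nat.mul_mod, Nat.pow_mod] at h3
    norm_num at h3
  haveI : Fact c.Prime := ⟨hc⟩
  obtain ⟨r0, s0, h0⟩ := Nat.Prime.sq_add_sq (p := c) (by omega)
  obtain ⟨r1, s1, hrs⟩ : ∃ r1 s1 : ℕ, r1 ^ 2 + 4 * s1 ^ 2 = c := by
    rcases Nat.even_or_odd r0 with ⟨r, hr⟩ | ⟨r, hr⟩
    · exact ⟨s0, r, by rw [← h0, hr]; ring⟩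
    · rcases Nat.even_or_odd s0 with ⟨s, hs⟩ | ⟨s, hs⟩
      · exact ⟨r0, s, by rw [← h0, hs]; ring⟩
      · exfalso
        have : c = 2 * (2 * r ^ 2 + 2 * r + 2 * s ^ 2 + 2 * s + 1) := by rw [← h0, hr, hs]; ring
        omega
  have hg0 : GZ 4 c 1 r1 s1 := by
    refine ⟨le_rfl, by rw [pow_one]; exact_mod_cast hrs, ?_⟩
    intro hd
    have hd' : c ∣ s1 := by exact_mod_cast hd
    rcases Nat.eq_zero_or_pos s1 with rfl | hs
    · simp at hrs
      have : ¬ (r1 ^ 2).Prime := by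
        intro hp; exact Nat.Prime.not_prime_pow le_rfl hp
      exact this (hrs ▸ hc)
    · have := Nat.le_of_dvd hs hd'
      nlinarith
  have hg0p : PrimZ 4 c 1 r1 s1 := by
    intro q j u v hq hj
    have : q = 1 := Nat.eq_one_of_mul_eq_one_left hj.symm
    exact absurd (this ▸ hq) (by norm_num)
  have hg : GZ 4 c z (b ^ Y) (2 ^ k') := ⟨by omega, hh, by
    exact_mod_cast prime_not_dvd_pow hc Nat.prime_two hc2 k'⟩
  have hgp : PrimZ 4 c z (b ^ Y) (2 ^ k') := by
    intro q j u v hq hzj hgj h1 h2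
    have hq2 : q ≠ 2 := by rintro rfl; omega
    have hq3 : 3 ≤ q := by have := hq.two_le; omega
    have hN := int_even_or_odd_pow hco j
    rw [← hgj.2.1] at hN
    have hu : ¬ ((2 : ℕ) : ℤ) ∣ u := by
      intro hu
      have : (2 : ℤ) ∣ u ^ 2 := dvd_pow (by exact_mod_cast hu) two_ne_zero
      omega
    have hE2 : ((2 : ℕ) : ℤ) ∣ -4 * v ^ 2 := ⟨-2 * v ^ 2, by push_cast; ring⟩
    obtain ⟨hQ1, -⟩ := Q_adic 2 q Nat.prime_two hq u _ hE2 hu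
    have hQd : Q u (-4 * v ^ 2) q ∣ ((2 : ℕ) : ℤ) ^ k' := by
      push_cast
      rw [← dvd_abs, h2, dvd_abs]; exact dvd_mul_left _ _
    have hQ := abs_one_of_dvd Nat.prime_two hQd (hQ1 (Ne.symm hq2))
    rw [abs_mul, hQ, mul_one] at h2
    have hv2 := sq_eq_of_abs h2
    by_cases h3u : (b : ℤ) ∣ u
    · have hE3 : ¬ (b : ℤ) ∣ -4 * v ^ 2 := by
        intro hd
        have hd' : (b : ℤ) ∣ (c : ℤ) ^ j := by
          rw [← hgj.2.1]
          refine dvd_add (dvd_pow h3u two_ne_zero) ?_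
          rw [← dvd_neg, show -(4 * v ^ 2) = -4 * v ^ 2 by ring]; exact hd
        exact prime_not_dvd_pow hb hc hbc j hd'
      obtain ⟨W, hW, hW1, hW2⟩ := P_adic b q hb hq hq2 u _ h3u hE3
      have hd : (b : ℤ) ^ Y ∣ q * u := by
        refine size_dvd hb ?_ hW1 hW2
        rw [← hW, ← abs_dvd, h1, abs_dvd]
      have hu0 : u ≠ 0 := by rintro rfl; exact hu (dvd_zero _)
      have hle : ((b : ℤ) ^ Y) ^ 2 ≤ (q : ℤ) ^ 2 * u ^ 2 := by
        have := Int.le_of_dvd (by positivity) (pow_dvd_pow_of_dvd hd 2)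
        linarith
      have hN4 : 4 ≤ (c : ℤ) ^ j := by
        rw [← hgj.2.1]
        have := pow_two_pos_of_ne_zero hu0
        have := pow_two_pos_of_ne_zero hgj.ne_zero
        omega
      have hs := size1 _ q hN4 hq3
      rw [← pow_mul, ← hzj, ← hh, ← hgj.2.1, ← hv2] at hs
      have hq1 : (1 : ℤ) ≤ (q : ℤ) ^ 2 := by
        have : (1 : ℤ) ≤ q := by omega
        nlinarith
      nlinarith [mul_le_mul_of_nonneg_right hq1 (sq_nonneg ((2 : ℤ) ^ k'))]
    · have hud : u ∣ (b : ℤ) ^ Y := by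
        rw [← dvd_abs, h1, dvd_abs]
        obtain ⟨i, hi⟩ := hq.odd_of_ne_two hq2
        obtain ⟨⟨t, ht⟩, -⟩ := PQ_odd u (-4 * v ^ 2) i
        rw [hi, ht]; exact dvd_mul_right _ _
      have hu1 := abs_one_of_dvd hb hud h3u
      have hu2 : u ^ 2 = 1 := by rw [← sq_abs, hu1]; norm_num
      have hEE : -4 * v ^ 2 = -4 ^ (k' + 1) := by
        rw [← hv2, ← pow_mul, mul_comm k' 2, pow_mul]; ring
      rw [hEE] at hQ
      obtain ⟨hk1, rfl⟩ := Q_neg_four u hu2 (k' + 1) (by omega) q (by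
        rcases hq.eq_two_or_odd with h | h <;> omega) (by omega) hQ
      have : k' = 0 := by omega
      subst this
      have hcj : (c : ℤ) ^ j = 5 := by rw [← hgj.2.1, hu2, ← hv2]; norm_num
      have hcj' : c ^ j = 5 ^ 1 := by exact_mod_cast hcj
      have hc5 := prime_pow_eq hc (by norm_num : Nat.Prime 5) one_ne_zero hcj'
      subst hc5
      have hj1 := Nat.pow_right_injective (le_refl 2 |>.trans (by norm_num : 2 ≤ 5)) hcj'
      subst hj1
      subst hzj
      norm_num at h
      have hbY : b ^ (2 * Y) = 11 ^ 2 := by omega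
      have hb11 := prime_pow_eq hb (by norm_num : Nat.Prime 11) two_ne_zero hbY
      subst hb11
      have := Nat.pow_right_injective (by norm_num : 2 ≤ 11) hbY
      exact hcon (Or.inr ⟨rfl, rfl, rfl, by omega, rfl⟩)
  have := (G2Z 4 c (np hc) (odd_prime_not_dvd_two hc hc2) hc4 (by norm_num) z 1 _ _ _ _ hg hg0 hgp hg0p).1
  exact hcon (Or.inl this)

theorem L6even (b c : ℕ) (hb : b.Prime) (hc : c.Prime) (hb2 : b ≠ 2) (hc2 : c ≠ 2) (hbc : b ≠ c)
    (k Y z : ℕ) (hk : 1 ≤ k) (hY : 1 ≤ Y) (hz : 1 ≤ z) (hz2 : z % 2 = 0)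
    (h : 2 ^ (2 * k) + b ^ (2 * Y) = c ^ z) : b = 3 ∧ c = 5 := by
  have hbo := hb.eq_two_or_odd.resolve_left hb2
  have hco := hc.eq_two_or_odd.resolve_left hc2
  obtain ⟨w, rfl⟩ : ∃ w, z = 2 * w := ⟨z / 2, by omega⟩
  have h1 := (two_pow_mod3 k).1
  have hb3 : b = 3 := by
    by_contra hb3
    have h2 : b ^ (2 * Y) % 3 = 1 := by
      rw [pow_mul, Nat.pow_mod, sq_mod3 (prime_mod3 hb hb3)]; simp
    by_cases hc3 : c = 3
    · have : 3 ∣ c ^ (2 * w) := by rw [hc3]; exact dvd_pow_self _ (by omega)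
      omega
    · have : c ^ (2 * w) % 3 = 1 := by
        rw [pow_mul, Nat.pow_mod, sq_mod3 (prime_mod3 hc hc3)]; simp
      omega
  subst hb3
  refine ⟨rfl, ?_⟩
  have hlt : 2 ^ k < c ^ w := by
    have : (2 ^ k) ^ 2 < (c ^ w) ^ 2 := by
      rw [← pow_mul, ← pow_mul, mul_comm k, mul_comm w, ← h]
      have : 0 < 3 ^ (2 * Y) := by positivity
      omega
    exact lt_of_pow_lt_pow_left₀ 2 (by positivity) this
  obtain ⟨d, hd⟩ : ∃ d, c ^ w = 2 ^ k + d := ⟨c ^ w - 2 ^ k, by omega⟩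
  have e : 3 ^ (2 * Y) = d * (2 * 2 ^ k + d) := by
    have : (2 ^ k) ^ 2 + 3 ^ (2 * Y) = (2 ^ k + d) ^ 2 := by
      rw [← hd, ← pow_mul, ← pow_mul, mul_comm k, mul_comm w, h]
    nlinarith
  obtain ⟨i, -, hi⟩ := (Nat.dvd_prime_pow Nat.prime_three).1 (Dvd.intro _ e.symm)
  have hi0 : i = 0 := by
    by_contra hi0
    have h3d : 3 ∣ d := by rw [hi]; exact dvd_pow_self _ hi0
    obtain ⟨j, -, hj⟩ := (Nat.dvd_prime_pow Nat.prime_three).1 (Dvd.intro_left _ e.symm)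
    have hj0 : j ≠ 0 := by
      rintro rfl
      have : 0 < 2 ^ k := by positivity
      simp at hj; omega
    have h3j : 3 ∣ 2 * 2 ^ k + d := by rw [hj]; exact dvd_pow_self _ hj0
    have : 3 ∣ 2 ^ (k + 1) := by rw [pow_succ']; omega
    have := Nat.prime_three.dvd_of_dvd_pow this
    omega
  subst hi0
  rw [pow_zero] at hi
  subst hi
  have e2 : 3 ^ (2 * Y) = 2 ^ (k + 1) + 1 := by rw [e]; ring
  rcases L0 _ _ e2 with h | h
  · omega
  · have : k = 2 := by omega
    subst this
    exact prime_pow_eq hc (by norm_num : Nat.Prime 5) one_ne_zero (n := w) (by omega)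

theorem L7 (b c : ℕ) (hb : b.Prime) (hc : c.Prime) (hb2 : b ≠ 2) (hc2 : c ≠ 2) 
    (k Y k' Y' : ℕ) (hk : 1 ≤ k) (hk' : 1 ≤ k')
    (h : 2 ^ (2 * k) + b ^ (2 * Y) = c ^ 1) (h' : 2 ^ (2 * k') + b ^ (2 * Y') = c ^ 1) :
    k = k' ∧ Y = Y' := by
  have hc4 : ¬ (c : ℤ) ∣ 4 := fun hd => odd_prime_not_dvd_two hc hc2 ((np hc).dvd_of_dvd_pow
    (show (c : ℤ) ∣ 2 ^ 2 by norm_num; exact hd))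
  have hg : ∀ k Y : ℕ, 1 ≤ k → 2 ^ (2 * k) + b ^ (2 * Y) = c ^ 1 → GZ 4 c 1 (b ^ Y) (2 ^ (k - 1)) ∧
      PrimZ 4 c 1 (b ^ Y) (2 ^ (k - 1)) := by
    intro k Y hk h
    refine ⟨⟨le_rfl, ?_, by exact_mod_cast prime_not_dvd_pow hc Nat.prime_two hc2 (k - 1)⟩, ?_⟩
    · obtain ⟨k, rfl⟩ : ∃ i, k = i + 1 := ⟨k - 1, by omega⟩
      have : (2 : ℤ) ^ (2 * (k + 1)) + (b : ℤ) ^ (2 * Y) = (c : ℤ) ^ 1 := by exact_mod_cast h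
      rw [← this, Nat.add_sub_cancel]; ring
    · intro q j u v hq hj
      have : q = 1 := Nat.eq_one_of_mul_eq_one_left hj.symm
      exact absurd (this ▸ hq) (by norm_num)
  obtain ⟨-, e2, e3⟩ := G2Z 4 c (np hc) (odd_prime_not_dvd_two hc hc2) hc4 (by norm_num) 1 1 _ _ _ _
    (hg k Y hk h).1 (hg k' Y' hk' h').1 (hg k Y hk h).2 (hg k' Y' hk' h').2
  have hb0 : (0 : ℤ) < b := by exact_mod_cast hb.pos
  rw [abs_of_pos (by positivity), abs_of_pos (by positivity)] at e2 e3
  have := two_pow_inj e3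
  exact ⟨by omega, prime_pow_inj hb e2⟩

end QD


namespace QD

/-! ### L8 -/

lemma geom_odd (b : ℤ) (hb : b % 2 = 1) (t : ℕ) : ∃ S, S % 2 = 1 ∧ b ^ (2 * t + 1) - 1 = (b - 1) * S := by
  induction t with
  | zero => exact ⟨1, by norm_num, by ring⟩
  | succ t ih =>
    obtain ⟨S, hS, h⟩ := ih
    refine ⟨b * b * S + b + 1, ?_, ?_⟩
    · have := odd_mul_mod (odd_mul_mod hb hb) hS
      omega
    · have e : b ^ (2 * (t + 1) + 1) - 1 = b ^ 2 * (b ^ (2 * t + 1) - 1) + (b ^ 2 - 1) := by ring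
      rw [e, h]; ring

lemma two_pow_dvd_of_odd {n : ℕ} {x S : ℤ} (hS : S % 2 = 1) (h : (2 : ℤ) ^ n ∣ x * S) : (2 : ℤ) ^ n ∣ x :=
  Int.prime_two.pow_dvd_of_dvd_mul_right n (by omega) h

lemma L8gen (b : ℕ) (hb : b.Prime) (hb2 : b ≠ 2) (i j y1 y2 : ℕ) (hj : 1 ≤ j) (hij : j < i) (hy1 : 1 ≤ y1)
    (hy : y1 % 2 ≠ y2 % 2) (h : 2 ^ (2 * i) + b ^ y1 = 2 ^ (2 * j) + b ^ y2) : False := by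
  have hbo := hb.eq_two_or_odd.resolve_left hb2
  have hylt : y1 < y2 := by
    have h1 : 2 ^ (2 * j) < 2 ^ (2 * i) := Nat.pow_lt_pow_right (by norm_num) (by omega)
    have h2 : b ^ y1 < b ^ y2 := by omega
    exact (Nat.pow_lt_pow_iff_right hb.one_lt).1 h2
  obtain ⟨t, rfl⟩ : ∃ t, y2 = y1 + (2 * t + 1) := ⟨(y2 - y1) / 2, by omega⟩
  obtain ⟨d, rfl⟩ : ∃ d, i = j + d := ⟨i - j, by omega⟩
  have hz : (2 : ℤ) ^ (2 * (j + d)) + (b : ℤ) ^ y1 = 2 ^ (2 * j) + (b : ℤ) ^ (y1 + (2 * t + 1)) := by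
    exact_mod_cast h
  obtain ⟨S, hS, hbS⟩ := geom_odd b (by omega) t
  have hd : (2 : ℤ) ^ (2 * j) ∣ (b : ℤ) - 1 := by
    refine two_pow_dvd_of_odd (S := (b : ℤ) ^ y1 * S) (odd_mul_mod (int_even_or_odd_pow hbo y1) hS) ?_
    refine ⟨2 ^ (2 * d) - 1, ?_⟩
    rw [show ((b : ℤ) - 1) * (b ^ y1 * S) = b ^ y1 * ((b - 1) * S) by ring, ← hbS]
    rw [pow_add (b : ℤ), mul_add, pow_add (2 : ℤ)] at hz
    linear_combination -hz
  have hle : (2 : ℤ) ^ (2 * j) ≤ b - 1 := Int.le_of_dvd (by have := hb.two_le; omega) hd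
  have hbl : (b : ℤ) ≤ b ^ y1 := by
    exact_mod_cast Nat.le_self_pow (by omega) b
  set D : ℤ := b ^ y1 - 2 ^ (2 * j) with hD
  have h1 : ((2 : ℤ) ^ j) ^ 2 + D * 1 ^ 2 = b ^ y1 := by rw [hD]; ring
  have h2 : ((2 : ℤ) ^ (j + d)) ^ 2 + D * 1 ^ 2 = b ^ (y1 + (2 * t + 1)) := by
    rw [hD]; linear_combination hz
  have hj2 : (2 : ℤ) ∣ 2 ^ (2 * j) := dvd_pow_self _ (by omega)
  have hDo : D % 2 = 1 := by
    have := int_even_or_odd_pow hbo y1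
    omega
  by_cases hD1 : D = 1
  · rw [hD1] at h1 h2
    have hsq : ∀ (A B : ℤ), 2 ≤ A → 0 < B → A ^ 2 + 1 * 1 ^ 2 = B ^ 2 → False := by
      intro A B hA hB h
      have : A < B := by nlinarith
      nlinarith
    have hpos : ∀ n : ℕ, (0 : ℤ) < (b : ℤ) ^ n := fun n => by
      have : (0 : ℤ) < b := by exact_mod_cast hb.pos
      positivity
    have hge : ∀ n : ℕ, 1 ≤ n → (2 : ℤ) ≤ 2 ^ n := fun n hn => by
      exact_mod_cast Nat.le_self_pow (by omega : n ≠ 0) 2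
    rcases Nat.mod_two_eq_zero_or_one y1 with he | he
    · obtain ⟨g, hg⟩ : ∃ g, y1 = g * 2 := ⟨y1 / 2, by omega⟩
      rw [hg, pow_mul] at h1
      exact hsq _ _ (hge j hj) (hpos g) h1
    · obtain ⟨g, hg⟩ : ∃ g, y1 + (2 * t + 1) = g * 2 := ⟨(y1 + (2 * t + 1)) / 2, by omega⟩
      rw [hg, pow_mul] at h2
      exact hsq _ _ (hge (j + d) (by omega)) (hpos g) h2
  · have hbD : ¬ (b : ℤ) ∣ D := by
      intro hbd
      have h3 : (b : ℤ) ∣ (2 : ℤ) ^ (2 * j) := by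
        have := dvd_sub (dvd_pow_self (b : ℤ) (by omega : y1 ≠ 0)) hbd
        rw [hD] at this
        simpa using this
      exact odd_prime_not_dvd_two hb hb2 ((np hb).dvd_of_dvd_pow h3)
    have := L8core D b hb hb2 hDo (by omega) hbD j y1 (j + d) _ hj (by omega) hy1 (by omega) h1 h2
    omega

theorem L8 (b : ℕ) (hb : b.Prime) (hb2 : b ≠ 2) (k Y k' l : ℕ) (hk : 1 ≤ k) (hk' : 1 ≤ k') (hY : 1 ≤ Y)
    (h : 2 ^ (2 * k) + b ^ (2 * Y) = 2 ^ (2 * k') + b ^ (2 * l + 1)) : False := by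
  rcases lt_trichotomy k k' with hlt | rfl | hlt
  · exact L8gen b hb hb2 k' k (2 * l + 1) (2 * Y) hk hlt (by omega) (by omega) h.symm
  · have : 2 * Y = 2 * l + 1 := Nat.pow_right_injective hb.two_le (Nat.add_left_cancel h)
    omega
  · exact L8gen b hb hb2 k k' (2 * Y) (2 * l + 1) hk' hlt (by omega) (by omega) h

/-! ### L3 -/

lemma pm (g p n : ℕ) (h : g ^ 12 % p = 1 % p) : g ^ n % p = g ^ (n % 12) % p := by
  conv_lhs => rw [← Nat.div_add_mod n 12, pow_add, pow_mul, Nat.mul_mod, Nat.pow_mod, h,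
    ← Nat.pow_mod, one_pow, ← Nat.mul_mod, one_mul]

lemma odd12 (n : ℕ) (h : n % 2 = 1) : ∃ x, x < 6 ∧ n % 12 = 2 * x + 1 := ⟨n % 12 / 2, by omega, by omega⟩

lemma L3check : ∀ x y w : Fin 6, ∀ Y : Fin 12,
    ¬ ((2 ^ (2 * x.val + 1) + 3 ^ (2 * y.val + 1)) % 5 = (2 + 9 ^ Y.val) ^ (2 * w.val + 1) % 5 ∧
      (2 ^ (2 * x.val + 1) + 3 ^ (2 * y.val + 1)) % 7 = (2 + 9 ^ Y.val) ^ (2 * w.val + 1) % 7 ∧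
      (2 ^ (2 * x.val + 1) + 3 ^ (2 * y.val + 1)) % 13 = (2 + 9 ^ Y.val) ^ (2 * w.val + 1) % 13 ∧
      3 ^ (2 * y.val + 1) % 16 = (2 + 9 ^ Y.val) ^ (2 * w.val + 1) % 16) := by
  decide +kernel

lemma L3check9 : ∀ c : Fin 9, ∀ i j : Fin 12, i.val % 2 = 1 → j.val % 2 = 1 → j.val % 3 ≠ 0 →
    c.val ^ i.val % 9 = 2 → c.val ^ j.val % 9 ≠ 8 := by
  decide +kernel

lemma cop12 : (∀ c : Fin 5, c.val ≠ 0 → c.val ^ 12 % 5 = 1) ∧ (∀ c : Fin 7, c.val ≠ 0 → c.val ^ 12 % 7 = 1) ∧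
  (∀ c : Fin 13, c.val ≠ 0 → c.val ^ 12 % 13 = 1) ∧ (∀ c : Fin 16, c.val % 2 = 1 → c.val ^ 12 % 16 = 1) ∧ 
  (∀ c : Fin 9, c.val % 3 ≠ 0 → c.val ^ 12 % 9 = 1) := by decide +kernel

lemma cubes9 : ∀ c : Fin 9, c.val ^ 3 % 9 ≠ 2 := by decide +kernel

lemma odd_pow_mod8 {c : ℕ} (hc : c % 2 = 1) {z : ℕ} (hz : z % 2 = 1) : c ^ z % 8 = c % 8 := by
  obtain ⟨w, rfl⟩ : ∃ w, z = 2 * w + 1 := ⟨z / 2, by omega⟩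
  rw [pow_succ, pow_mul, Nat.mul_mod, Nat.pow_mod, odd_sq_mod8 hc]
  simp

lemma cube_minus_eight (w y : ℕ) (h : 8 + 3 ^ y = w ^ 3) : False := by
  have hw : 2 < w := by
    by_contra hw
    have : w ^ 3 ≤ 2 ^ 3 := Nat.pow_le_pow_left (by omega) 3
    have : 0 < 3 ^ y := by positivity
    omega
  obtain ⟨d, rfl⟩ : ∃ d, w = d + 2 := ⟨w - 2, by omega⟩
  have e : 3 ^ y = d * (d ^ 2 + 6 * d + 12) := by nlinarith
  obtain ⟨i, -, hi⟩ := (Nat.dvd_prime_pow Nat.prime_three).1 (Dvd.intro _ e.symm)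
  obtain ⟨j, -, hj⟩ := (Nat.dvd_prime_pow Nat.prime_three).1 (Dvd.intro_left _ e.symm)
  have hd9 : 9 ∣ d ^ 2 + 6 * d + 12 := by
    rw [hj]
    rcases j with _ | _ | j
    · simp at hj
    · simp at hj
    · exact ⟨3 ^ j, by ring⟩
  rcases i with _ | i
  · simp at hi
    subst hi
    omega
  · obtain ⟨m, hm⟩ : ∃ m, d = 3 * m := ⟨3 ^ i, by rw [hi]; ring⟩
    rw [hm] at hd9
    have : (3 * m) ^ 2 + 6 * (3 * m) + 12 = 9 * (m ^ 2 + 2 * m + 1) + 3 := by ring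
    omega

theorem L3 (c : ℕ) (hc : c.Prime) (hc2 : c ≠ 2) (hc3 : c ≠ 3) (l Y z1 m n z2 : ℕ) (hY : 1 ≤ Y)
    (h1 : 2 ^ (2 * l + 1) + 3 ^ (2 * Y) = c ^ z1) (h2 : 2 ^ (2 * m + 1) + 3 ^ (2 * n + 1) = c ^ z2) :
    c = 11 := by
  have hco := hc.eq_two_or_odd.resolve_left hc2
  have hc3' := prime_mod3 hc hc3
  have hodd : ∀ z, c ^ z % 3 = 2 → z % 2 = 1 := by
    intro z hz
    by_contra hne
    obtain ⟨w, rfl⟩ : ∃ w, z = 2 * w := ⟨z / 2, by omega⟩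
    rw [pow_mul, Nat.pow_mod, sq_mod3 hc3'] at hz
    simp at hz
  have h9Y : 3 ^ (2 * Y) = 9 ^ Y := by rw [pow_mul]; norm_num
  have h9n : 3 ^ (2 * n + 1) = 3 * 9 ^ n := by rw [pow_succ', pow_mul]; norm_num
  have h9Y' : 9 ^ Y = 9 * 9 ^ (Y - 1) := by rw [← pow_succ']; congr 1; omega
  have hz1 : z1 % 2 = 1 := by
    apply hodd
    have := (two_pow_mod3 l).2
    omega
  have hz2 : z2 % 2 = 1 := by
    apply hodd
    have := (two_pow_mod3 m).2
    omega
  have m8 : ∀ i, 9 ^ i % 8 = 1 := fun i => by rw [Nat.pow_mod]; simp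
  have e1 := odd_pow_mod8 hco hz1
  have e2 := odd_pow_mod8 hco hz2
  have q1 := m8 Y
  have q2 := m8 n
  have t8 : ∀ l, l ≠ 0 → 8 ∣ 2 ^ (2 * l + 1) := by
    intro l hl
    obtain ⟨l, rfl⟩ : ∃ i, l = i + 1 := ⟨l - 1, by omega⟩
    exact ⟨2 ^ (2 * l), by ring⟩
  have hm0 : m ≠ 0 := by
    rintro rfl
    by_cases hl : l = 0
    · subst hl; norm_num at h1 h2; omega
    · have := t8 l hl; norm_num at h2; omega
  have := t8 m hm0
  have hl : l = 0 := by
    by_contra hl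
    have := t8 l hl
    omega
  subst hl
  norm_num at h1
  have hc8 : c % 8 = 3 := by omega
  have c9 : c ^ 12 % 9 = 1 % 9 := by
    have := cop12.2.2.2.2 ⟨c % 9, Nat.mod_lt _ (by norm_num)⟩ (by simp; omega)
    rw [Nat.pow_mod]; simpa using this
  have hz1_9 : c ^ z1 % 9 = 2 := by omega
  by_cases hm1 : m = 1
  · subst hm1
    norm_num at h2
    by_cases hn : n = 0
    · subst hn
      exact prime_pow_eq hc (by norm_num : Nat.Prime 11) one_ne_zero (n := z2) (by omega)
    · exfalso
      have h9n' : 9 ^ n = 9 * 9 ^ (n - 1) := by rw [← pow_succ']; congr 1; omega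
      have hz2_9 : c ^ z2 % 9 = 8 := by omega
      have hz3 : z2 % 3 = 0 := by
        by_contra hz3
        rw [pm c 9 z1 c9, Nat.pow_mod] at hz1_9
        rw [pm c 9 z2 c9, Nat.pow_mod] at hz2_9
        exact L3check9 ⟨c % 9, Nat.mod_lt _ (by norm_num)⟩ ⟨z1 % 12, Nat.mod_lt _ (by norm_num)⟩
          ⟨z2 % 12, Nat.mod_lt _ (by norm_num)⟩ (by simp; omega) (by simp; omega) (by simp; omega)
          hz1_9 hz2_9
      obtain ⟨t, rfl⟩ : ∃ t, z2 = t * 3 := ⟨z2 / 3, by omega⟩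
      rw [pow_mul] at h2
      exact cube_minus_eight _ _ h2
  · exfalso
    have hz13 : z1 % 3 ≠ 0 := by
      intro h0
      obtain ⟨t, rfl⟩ : ∃ t, z1 = t * 3 := ⟨z1 / 3, by omega⟩
      rw [pow_mul, Nat.pow_mod] at hz1_9
      exact cubes9 ⟨c ^ t % 9, Nat.mod_lt _ (by norm_num)⟩ hz1_9
    have hzz : z1 * z1 % 12 = 1 := by
      have : z1 % 12 = 1 ∨ z1 % 12 = 5 ∨ z1 % 12 = 7 ∨ z1 % 12 = 11 := by omega
      rcases this with h | h | h | h <;> rw [Nat.mul_mod, h]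
    have hne : ∀ p : ℕ, p.Prime → p % 8 ≠ 3 → c % p ≠ 0 := by
      intro p hp hp8 h0
      have := (Nat.prime_dvd_prime_iff_eq hp hc).1 (Nat.dvd_of_mod_eq_zero h0)
      exact hp8 (this ▸ hc8)
    have c5 : c ^ 12 % 5 = 1 % 5 := by
      have := cop12.1 ⟨c % 5, Nat.mod_lt _ (by norm_num)⟩ (hne 5 (by norm_num) (by norm_num))
      rw [Nat.pow_mod]; simpa using this
    have c7 : c ^ 12 % 7 = 1 % 7 := by
      have := cop12.2.1 ⟨c % 7, Nat.mod_lt _ (by norm_num)⟩ (hne 7 (by norm_num) (by norm_num))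
      rw [Nat.pow_mod]; simpa using this
    have c13 : c ^ 12 % 13 = 1 % 13 := by
      have := cop12.2.2.1 ⟨c % 13, Nat.mod_lt _ (by norm_num)⟩ (hne 13 (by norm_num) (by norm_num))
      rw [Nat.pow_mod]; simpa using this
    have c16 : c ^ 12 % 16 = 1 % 16 := by
      have := cop12.2.2.2.1 ⟨c % 16, Nat.mod_lt _ (by norm_num)⟩ (by simp; omega)
      rw [Nat.pow_mod]; simpa using this
    -- transfer
    have key : ∀ p, c ^ 12 % p = 1 % p → 9 ^ 12 % p = 1 % p →
        c ^ z2 % p = (2 + 9 ^ (Y % 12)) ^ (z1 * z2 % 12) % p := by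
      intro p hp h9
      have a1 : (c ^ z1) ^ 12 % p = 1 % p := by
        rw [← pow_mul, mul_comm, pow_mul, Nat.pow_mod, hp, ← Nat.pow_mod, one_pow]
      have a2 : c ^ z2 % p = (c ^ z1) ^ (z1 * z2) % p := by
        have a3 : z1 * (z1 * z2) % 12 = z2 % 12 := by rw [← mul_assoc, Nat.mul_mod, hzz]; simp
        rw [← pow_mul, pm c p z2 hp, pm c p (z1 * (z1 * z2)) hp, a3]
      rw [a2, pm _ p _ a1, Nat.pow_mod, ← h1, h9Y, Nat.add_mod, pm 9 p Y h9, ← Nat.add_mod, ← Nat.pow_mod]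
    have hw : z1 * z2 % 2 = 1 := by rw [Nat.mul_mod, hz1, hz2]
    have red : ∀ p, 2 ^ 12 % p = 1 % p → 3 ^ 12 % p = 1 % p → c ^ z2 % p = 
        (2 ^ ((2 * m + 1) % 12) + 3 ^ ((2 * n + 1) % 12)) % p := by
      intro p h2' h3'
      rw [← h2, Nat.add_mod, pm 2 p _ h2', pm 3 p _ h3', ← Nat.add_mod]
    have red16 : c ^ z2 % 16 = 3 ^ ((2 * n + 1) % 12) % 16 := by
      rw [← pm 3 16 _ (by norm_num), ← h2]
      obtain ⟨i, rfl⟩ : ∃ i, m = i + 2 := ⟨m - 2, by omega⟩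
      have : 2 ^ (2 * (i + 2) + 1) = 16 * (2 * 2 ^ (2 * i)) := by ring
      omega
    have k5 := key 5 c5 (by norm_num)
    have k7 := key 7 c7 (by norm_num)
    have k13 := key 13 c13 (by norm_num)
    have k16 := key 16 c16 (by norm_num)
    rw [red 5 (by norm_num) (by norm_num)] at k5
    rw [red 7 (by norm_num) (by norm_num)] at k7
    rw [red 13 (by norm_num) (by norm_num)] at k13
    rw [red16] at k16
    obtain ⟨x', hx6, hx'⟩ := odd12 (2 * m + 1) (Nat.mul_add_mod _ _ _)
    obtain ⟨y', hy6, hy'⟩ := odd12 (2 * n + 1) (Nat.mul_add_mod _ _ _)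
    obtain ⟨w', hw6, hw'⟩ := odd12 _ hw
    rw [hx', hy', hw'] at k5 k7 k13
    rw [hy', hw'] at k16
    exact L3check ⟨x', hx6⟩ ⟨y', hy6⟩ ⟨w', hw6⟩ ⟨Y % 12, Nat.mod_lt _ (by norm_num)⟩
      ⟨k5, k7, k13, k16⟩

end QD


namespace QD

lemma pow_even_mod3 {b : ℕ} (hb : b % 3 ≠ 0) (n : ℕ) : b ^ (2 * n) % 3 = 1 := by
  rw [pow_mul, Nat.pow_mod, sq_mod3 hb]; simp

lemma pow_odd_mod3 {b : ℕ} (n : ℕ) : b ^ (2 * n + 1) % 3 = b % 3 := by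
  by_cases hb : b % 3 = 0
  · rw [Nat.pow_mod, hb]; simp
  · rw [pow_succ, Nat.mul_mod, pow_even_mod3 hb]; simp

lemma pow_even_mod4 {b : ℕ} (hb : b % 2 = 1) (n : ℕ) : b ^ (2 * n) % 4 = 1 := by
  have h1 := odd_sq_mod8 (pow_odd_nat hb n)
  rw [← pow_mul, mul_comm n 2] at h1
  omega

lemma pow_odd_mod4 {b : ℕ} (hb : b % 2 = 1) (n : ℕ) : b ^ (2 * n + 1) % 4 = b % 4 := by
  rw [pow_succ, Nat.mul_mod, pow_even_mod4 hb]; simp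

/-- solution of the equation with `a = 2` -/
def Sol (b c : ℕ) (s : ℕ × ℕ × ℕ) : Prop :=
  0 < s.1 ∧ 0 < s.2.1 ∧ 0 < s.2.2 ∧ 2 ^ s.1 + b ^ s.2.1 = c ^ s.2.2

def GG (s t : ℕ × ℕ × ℕ) : Prop :=
  2 ∣ s.1 ∧ 2 ∣ s.2.1 ∧ s.2.2 = 1 ∧ ¬ 2 ∣ t.2.1 ∧ 1 < t.2.2

lemma even_or_odd' (n : ℕ) : (∃ k, n = 2 * k) ∨ (∃ k, n = 2 * k + 1) := by
  rcases Nat.mod_two_eq_zero_or_one n with h | h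
  · exact Or.inl ⟨n / 2, by omega⟩
  · exact Or.inr ⟨n / 2, by omega⟩

section
lemma sol_EE {b c : ℕ} (hb : b.Prime) (hc : c.Prime) (hb2 : b ≠ 2) (hc2 : c ≠ 2) (hbc : b ≠ c) (e1 : ¬ (b = 3 ∧ c = 5))
    (k Y z : ℕ) (hk : 0 < 2 * k) (hY : 0 < 2 * Y) (hz : 0 < z)
    (h : 2 ^ (2 * k) + b ^ (2 * Y) = c ^ z) :
    z = 1 ∨ (b = 11 ∧ c = 5 ∧ k = 1 ∧ Y = 1 ∧ z = 3) := by
  rcases Nat.mod_two_eq_zero_or_one z with h2 | h2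
  · exact absurd (L6even b c hb hc hb2 hc2 hbc k Y z (by omega) (by omega) hz h2 h) e1
  · exact L6odd b c hb hc hb2 hc2 hbc k Y z (by omega) (by omega) h2 h

lemma sol_OE {b c : ℕ} (hb : b.Prime) (hc : c.Prime) (hb2 : b ≠ 2) (hbc : b ≠ c) (e3 : ¬ (b = 5 ∧ c = 3)) (e4 : ¬ (b = 7 ∧ c = 3))
    (l Y z : ℕ) (hY : 0 < 2 * Y) (hz : 0 < z)
    (h : 2 ^ (2 * l + 1) + b ^ (2 * Y) = c ^ z) : b = 3 ∧ c % 3 = 2 ∧ z % 2 = 1 := by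
  have hb3 : b = 3 := by
    by_contra hb3
    rcases L1 b c hb hc hb2 hb3 l Y z (by omega) hz h with ⟨h1, h2 | h2⟩
    · exact e3 ⟨h2, h1⟩
    · exact e4 ⟨h2, h1⟩
  subst hb3
  refine ⟨rfl, ?_⟩
  have h1 := (two_pow_mod3 l).2
  have h2 : 3 ∣ 3 ^ (2 * Y) := dvd_pow_self _ (by omega)
  have hc3 := prime_mod3 hc (Ne.symm hbc)
  rcases even_or_odd' z with ⟨w, rfl⟩ | ⟨w, rfl⟩
  · have := pow_even_mod3 hc3 w
    omega
  · have := pow_odd_mod3 (b := c) w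
    omega

lemma sol_EO3 {c : ℕ} (hc : c.Prime) (hc2 : c ≠ 2)
    (k n z : ℕ) (hk : 0 < 2 * k)
    (h : 2 ^ (2 * k) + 3 ^ (2 * n + 1) = c ^ z) : c % 3 = 1 := by
  have hco := hc.eq_two_or_odd.resolve_left hc2
  have h1 := (two_pow_mod3 k).1
  have h2 : 3 ∣ 3 ^ (2 * n + 1) := dvd_pow_self _ (by omega)
  have h3 := pow_odd_mod4 (b := 3) (by norm_num) n
  have h4 : 4 ∣ 2 ^ (2 * k) := by
    obtain ⟨i, rfl⟩ : ∃ i, k = i + 1 := ⟨k - 1, by omega⟩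
    exact ⟨2 ^ (2 * i), by ring⟩
  rcases even_or_odd' z with ⟨w, rfl⟩ | ⟨w, rfl⟩
  · have := pow_even_mod4 hco w
    omega
  · have := pow_odd_mod3 (b := c) w
    omega

lemma pair_EE_EE {b c : ℕ} (hb : b.Prime) (hc : c.Prime) (hb2 : b ≠ 2) (hc2 : c ≠ 2) (hbc : b ≠ c) (e1 : ¬ (b = 3 ∧ c = 5))
    (k Y z k' Y' z' : ℕ) (hk : 0 < 2 * k) (hY : 0 < 2 * Y) (hz : 0 < z)
    (hk' : 0 < 2 * k') (hY' : 0 < 2 * Y') (hz' : 0 < z')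
    (h : 2 ^ (2 * k) + b ^ (2 * Y) = c ^ z) (h' : 2 ^ (2 * k') + b ^ (2 * Y') = c ^ z') :
    k = k' ∧ Y = Y' ∧ z = z' := by
  have big : ∀ k Y, 0 < 2 * Y → 2 ^ (2 * k) + 11 ^ (2 * Y) = 5 ^ 1 → False := by
    intro k Y hY h
    have : 11 ≤ 11 ^ (2 * Y) := Nat.le_self_pow (by omega) 11
    rw [pow_one] at h
    generalize 11 ^ (2 * Y) = A at *
    generalize 2 ^ (2 * k) = B at *
    omega
  rcases sol_EE hb hc hb2 hc2 hbc e1 k Y z hk hY hz h with rfl | ⟨rfl, rfl, rfl, rfl, rfl⟩ <;>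
  rcases sol_EE hb hc hb2 hc2 hbc e1 k' Y' z' hk' hY' hz' h' with h1 | h1
  · subst h1
    obtain ⟨h1, h2⟩ := L7 b c hb hc hb2 hc2 k Y k' Y' (by omega) (by omega) h h'
    exact ⟨h1, h2, rfl⟩
  · obtain ⟨rfl, rfl, -⟩ := h1
    exact (big _ _ hY h).elim
  · subst h1
    exact (big _ _ hY' h').elim
  · omega

lemma pair_EE_EO {b c : ℕ} (hb : b.Prime) (hc : c.Prime) (hb2 : b ≠ 2) (hc2 : c ≠ 2) (hbc : b ≠ c) (e1 : ¬ (b = 3 ∧ c = 5))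
    (k Y z k' l z' : ℕ) (hk : 0 < 2 * k) (hY : 0 < 2 * Y) (hz : 0 < z)
    (hk' : 0 < 2 * k') (hz' : 0 < z')
    (h : 2 ^ (2 * k) + b ^ (2 * Y) = c ^ z) (h' : 2 ^ (2 * k') + b ^ (2 * l + 1) = c ^ z') :
    z = 1 ∧ 1 < z' := by
  rcases sol_EE hb hc hb2 hc2 hbc e1 k Y z hk hY hz h with rfl | ⟨rfl, rfl, rfl, rfl, rfl⟩
  · refine ⟨rfl, ?_⟩
    by_contra hne
    have : z' = 1 := by omega
    subst this
    exact L8 b hb hb2 k Y k' l (by omega) (by omega) (by omega) (h.trans h'.symm)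
  · exfalso
    have h4 : 4 ∣ 2 ^ (2 * k') := by
      obtain ⟨i, rfl⟩ : ∃ i, k' = i + 1 := ⟨k' - 1, by omega⟩
      exact ⟨2 ^ (2 * i), by ring⟩
    have h1 := pow_odd_mod4 (b := 11) (by norm_num) l
    have h2 : 5 ^ z' % 4 = 1 := by rw [Nat.pow_mod]; simp
    omega

lemma pair_EE_OO {b c : ℕ} (hb : b.Prime) (hc : c.Prime) (hb2 : b ≠ 2) (hc2 : c ≠ 2) (hbc : b ≠ c) (e1 : ¬ (b = 3 ∧ c = 5))
    (k Y z m l z' : ℕ) (hk : 0 < 2 * k) (hY : 0 < 2 * Y) (hz : 0 < z) (hz' : 0 < z')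
    (h : 2 ^ (2 * k) + b ^ (2 * Y) = c ^ z) (h' : 2 ^ (2 * m + 1) + b ^ (2 * l + 1) = c ^ z') :
    z = 1 ∧ 1 < z' := by
  rcases sol_EE hb hc hb2 hc2 hbc e1 k Y z hk hY hz h with rfl | ⟨rfl, rfl, rfl, rfl, rfl⟩
  · refine ⟨rfl, ?_⟩
    by_contra hne
    have : z' = 1 := by omega
    subst this
    have h1 := (two_pow_mod3 k).1
    have h2 := (two_pow_mod3 m).2
    have h3 := pow_odd_mod3 (b := b) l
    by_cases hb3 : b % 3 = 0
    · have h4 : b ^ (2 * Y) % 3 = 0 := by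
        rw [Nat.pow_mod, hb3, zero_pow (by omega)]; rfl
      omega
    · have := pow_even_mod3 hb3 Y
      omega
  · exfalso
    have h1 : (2 ^ (2 * m + 1)) ^ 5 % 11 = 10 := by
      rw [← pow_mul, mul_comm, pow_mul, pow_succ, pow_mul, Nat.mul_mod, Nat.pow_mod]
      norm_num
    have h2 : (2 ^ (2 * m + 1) + 11 ^ (2 * l + 1)) ^ 5 % 11 = 10 := by
      rw [Nat.pow_mod, pow_succ 11, Nat.add_mul_mod_self_right, ← Nat.pow_mod]; exact h1
    have h3 : (5 ^ z') ^ 5 % 11 = 1 := by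
      rw [← pow_mul, mul_comm, pow_mul, Nat.pow_mod]; norm_num
    rw [h', h3] at h2
    omega

theorem pair_main {b c : ℕ} (hb : b.Prime) (hc : c.Prime) (hb2 : b ≠ 2) (hc2 : c ≠ 2) (hbc : b ≠ c) (e1 : ¬ (b = 3 ∧ c = 5)) (e2 : ¬ (b = 3 ∧ c = 11)) (e3 : ¬ (b = 5 ∧ c = 3)) (e4 : ¬ (b = 7 ∧ c = 3))
    (s t : ℕ × ℕ × ℕ) (hs : Sol b c s) (ht : Sol b c t) (hne : s ≠ t) : GG s t ∨ GG t s := by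
  have hbo := hb.eq_two_or_odd.resolve_left hb2
  have hco := hc.eq_two_or_odd.resolve_left hc2
  -- no EE/OE
  have EEOE : ∀ k Y z l Y' z', 0 < 2 * k → 0 < 2 * Y → 0 < z → 0 < 2 * Y' → 0 < z' →
      2 ^ (2 * k) + b ^ (2 * Y) = c ^ z → 2 ^ (2 * l + 1) + b ^ (2 * Y') = c ^ z' → False := by
    intro k Y z l Y' z' hk hY hz hY' hz' h h'
    obtain ⟨rfl, h1, h2⟩ := sol_OE hb hc hb2 hbc e3 e4 l Y' z' hY' hz' h'
    rcases sol_EE hb hc hb2 hc2 hbc e1 k Y z hk hY hz h with rfl | ⟨h3, -⟩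
    · have h1 := (two_pow_mod3 k).1
      have h2 : 3 ∣ 3 ^ (2 * Y) := dvd_pow_self _ (by omega)
      rw [pow_one] at h
      generalize 3 ^ (2 * Y) = A at *
      generalize 2 ^ (2 * k) = B at *
      omega
    · omega
  have EOOE : ∀ k n z l Y' z', 0 < 2 * k → 0 < z → 0 < 2 * Y' → 0 < z' →
      2 ^ (2 * k) + b ^ (2 * n + 1) = c ^ z → 2 ^ (2 * l + 1) + b ^ (2 * Y') = c ^ z' → False := by
    intro k n z l Y' z' hk hz hY' hz' h h'
    obtain ⟨rfl, h1, h2⟩ := sol_OE hb hc hb2 hbc e3 e4 l Y' z' hY' hz' h'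
    have := sol_EO3 hc hc2 k n z hk h
    omega
  have EOOO : ∀ k n z l n' z', 0 < 2 * k → 0 < z → 0 < z' →
      2 ^ (2 * k) + b ^ (2 * n + 1) = c ^ z → 2 ^ (2 * l + 1) + b ^ (2 * n' + 1) = c ^ z' → False := by
    intro k n z l n' z' hk hz hz' h h'
    have h1 := (two_pow_mod3 k).1
    have h2 := (two_pow_mod3 l).2
    have h3 := pow_odd_mod3 (b := b) n
    have h4 := pow_odd_mod3 (b := b) n'
    by_cases hb3 : b = 3
    · subst hb3
      have h5 := sol_EO3 hc hc2 k n z hk h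
      have h6 : c ^ z' % 3 = 1 := by rw [Nat.pow_mod, h5]; simp
      omega
    · have hb3' := prime_mod3 hb hb3
      by_cases hc3 : c = 3
      · have h5 : 3 ∣ c ^ z := by rw [hc3]; exact dvd_pow_self _ (by omega)
        have h6 : 3 ∣ c ^ z' := by rw [hc3]; exact dvd_pow_self _ (by omega)
        omega
      · have hn : ∀ z, c ^ z % 3 ≠ 0 := fun z h0 => prime_mod3 hc hc3 (Nat.mod_eq_zero_of_dvd
          (Nat.prime_three.dvd_of_dvd_pow (Nat.dvd_of_mod_eq_zero h0)))
        have h5 := hn z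
        have h6 := hn z'
        rw [← h] at h5
        rw [← h'] at h6
        generalize 2 ^ (2 * l + 1) = A at *
        generalize 2 ^ (2 * k) = B at *
        have h7 : b % 3 = 1 ∨ b % 3 = 2 := by omega
        rcases h7 with h7 | h7 <;> omega
  have OEOO : ∀ k Y z l n z', 0 < 2 * Y → 0 < z → 0 < z' →
      2 ^ (2 * k + 1) + b ^ (2 * Y) = c ^ z → 2 ^ (2 * l + 1) + b ^ (2 * n + 1) = c ^ z' → False := by
    intro k Y z l n z' hY hz hz' h h'
    obtain ⟨rfl, h1, h2⟩ := sol_OE hb hc hb2 hbc e3 e4 k Y z hY hz h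
    exact e2 ⟨rfl, L3 c hc hc2 (Ne.symm hbc) k Y z l n z' (by omega) h h'⟩
  obtain ⟨x, y, z⟩ := s
  obtain ⟨x', y', z'⟩ := t
  obtain ⟨hx, hy, hz, h⟩ := hs
  obtain ⟨hx', hy', hz', h'⟩ := ht
  simp only at hx hy hz h hx' hy' hz' h'
  unfold GG
  simp only
  rcases even_or_odd' x with ⟨k, rfl⟩ | ⟨k, rfl⟩ <;> rcases even_or_odd' y with ⟨l, rfl⟩ | ⟨l, rfl⟩ <;>
  rcases even_or_odd' x' with ⟨k', rfl⟩ | ⟨k', rfl⟩ <;> rcases even_or_odd' y' with ⟨l', rfl⟩ | ⟨l', rfl⟩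
  -- EE
  · obtain ⟨rfl, rfl, rfl⟩ := pair_EE_EE hb hc hb2 hc2 hbc e1 _ _ _ _ _ _ hx hy hz hx' hy' hz' h h'
    exact absurd rfl hne
  · have := pair_EE_EO hb hc hb2 hc2 hbc e1 _ _ _ _ _ _ hx hy hz hx' hz' h h'
    left; omega
  · exact (EEOE _ _ _ _ _ _ hx hy hz hy' hz' h h').elim
  · have := pair_EE_OO hb hc hb2 hc2 hbc e1 _ _ _ _ _ _ hx hy hz hz' h h'
    left; omega
  -- EO
  · have := pair_EE_EO hb hc hb2 hc2 hbc e1 _ _ _ _ _ _ hx' hy' hz' hx hz h' h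
    right; omega
  · obtain ⟨rfl, rfl, rfl⟩ := L5 b c hb hc hb2 hc2 hbc _ _ _ _ _ _ (by omega) (by omega) hz hz' h h'
    exact absurd rfl hne
  · exact (EOOE _ _ _ _ _ _ hx hz hy' hz' h h').elim
  · exact (EOOO _ _ _ _ _ _ hx hz hz' h h').elim
  -- OE
  · exact (EEOE _ _ _ _ _ _ hx' hy' hz' hy hz h' h).elim
  · exact (EOOE _ _ _ _ _ _ hx' hz' hy hz h' h).elim
  · obtain ⟨rfl, h1, h2⟩ := sol_OE hb hc hb2 hbc e3 e4 _ _ _ hy hz h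
    obtain ⟨-, -, h3⟩ := sol_OE hb hc hb2 hbc e3 e4 _ _ _ hy' hz' h'
    obtain ⟨rfl, rfl, rfl⟩ := L2 c hc hc2 (Ne.symm hbc) _ _ _ _ _ _ h2 h3 h h'
    exact absurd rfl hne
  · exact (OEOO _ _ _ _ _ _ hy hz hz' h h').elim
  -- OO
  · have := pair_EE_OO hb hc hb2 hc2 hbc e1 _ _ _ _ _ _ hx' hy' hz' hz h' h
    right; omega
  · exact (EOOO _ _ _ _ _ _ hx' hz' hz h' h).elim
  · exact (OEOO _ _ _ _ _ _ hy' hz' hz h' h).elim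
  · obtain ⟨rfl, rfl, rfl⟩ := L4 b c hb hc hb2 hc2 hbc _ _ _ _ _ _ hz hz' h h'
    exact absurd rfl hne

theorem two_main {b c : ℕ} (hb : b.Prime) (hc : c.Prime) (hb2 : b ≠ 2) (hc2 : c ≠ 2) (hbc : b ≠ c) (e1 : ¬ (b = 3 ∧ c = 5)) (e2 : ¬ (b = 3 ∧ c = 11)) (e3 : ¬ (b = 5 ∧ c = 3)) (e4 : ¬ (b = 7 ∧ c = 3))
    (h : ∃ s t : ℕ × ℕ × ℕ, s ≠ t ∧ Sol b c s ∧ Sol b c t) :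
    ∃ s t, Sol b c s ∧ Sol b c t ∧ s ≠ t ∧ (∀ r, Sol b c r → r = s ∨ r = t) ∧ GG s t := by
  have key : ∀ s t, Sol b c s → Sol b c t → s ≠ t → GG s t → ∀ r, Sol b c r → r = s ∨ r = t := by
    intro s t hs ht hne hG r hr
    by_contra hcon
    push Not at hcon
    have hr2 : ¬ 2 ∣ r.2.1 := by
      rcases pair_main hb hc hb2 hc2 hbc e1 e2 e3 e4 r s hr hs hcon.1 with h | h
      · exact absurd hG.2.1 h.2.2.2.1
      · exact h.2.2.2.1
    rcases pair_main hb hc hb2 hc2 hbc e1 e2 e3 e4 r t hr ht hcon.2 with h | h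
    · exact hr2 h.2.1
    · exact hG.2.2.2.1 h.2.1
  obtain ⟨s, t, hne, hs, ht⟩ := h
  rcases pair_main hb hc hb2 hc2 hbc e1 e2 e3 e4 s t hs ht hne with hG | hG
  · exact ⟨s, t, hs, ht, hne, key s t hs ht hne hG, hG⟩
  · exact ⟨t, s, ht, hs, Ne.symm hne, key t s ht hs (Ne.symm hne) hG, hG⟩

end

end QD


namespace QD

lemma cls_core {a e : ℤ} (ha : a % 2 = 1) (he : e = 1 ∨ e = -1) {Z m t : ℕ}
    (h : (2 : ℤ) ^ Z ∣ a ^ (m + (2 * t + 1)) - e * a ^ m) :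
    (2 : ℤ) ^ Z ∣ a - 1 ∨ (2 : ℤ) ^ Z ∣ a + 1 := by
  have hm : a ^ m % 2 = 1 := Int.odd_iff.1 (Odd.pow (Int.odd_iff.2 ha))
  have h2 : (2 : ℤ) ^ Z ∣ a ^ (2 * t + 1) - e := by
    apply two_pow_dvd_of_odd hm
    convert h using 1
    rw [pow_add]; ring
  rcases he with rfl | rfl
  · left
    obtain ⟨S, hS, h3⟩ := geom_odd a ha t
    rw [h3] at h2
    exact two_pow_dvd_of_odd hS h2
  · right
    obtain ⟨S, hS, h3⟩ := geom_odd (-a) (by omega) t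
    rw [Odd.neg_pow ⟨t, rfl⟩] at h3
    have h4 : a ^ (2 * t + 1) - -1 = (a + 1) * S := by linarith
    rw [h4] at h2
    exact two_pow_dvd_of_odd hS h2

lemma cls {a b : ℕ} (ha : a % 2 = 1) {Z x₁ y₁ x₂ y₂ : ℕ}
    (h₁ : 2 ^ Z ∣ a ^ x₁ + b ^ y₁) (h₂ : 2 ^ Z ∣ a ^ x₂ + b ^ y₂)
    (hp : (x₁ * y₂) % 2 ≠ (x₂ * y₁) % 2) (h1 : 1 < a) (h3 : a + 1 < 2 ^ Z) : False := by
  have g1 : (a : ℤ) ^ x₁ ≡ -(b : ℤ) ^ y₁ [ZMOD 2 ^ Z] := by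
    apply Int.ModEq.symm
    rw [Int.modEq_iff_dvd, sub_neg_eq_add]; exact_mod_cast h₁
  have g2 : (a : ℤ) ^ x₂ ≡ -(b : ℤ) ^ y₂ [ZMOD 2 ^ Z] := by
    apply Int.ModEq.symm
    rw [Int.modEq_iff_dvd, sub_neg_eq_add]; exact_mod_cast h₂
  have g3 := g1.pow y₂
  have g4 := g2.pow y₁
  rw [neg_pow, ← pow_mul, ← pow_mul] at g3 g4
  rw [mul_comm y₂ y₁] at g4
  have key : ∃ e : ℤ, (e = 1 ∨ e = -1) ∧
      (a : ℤ) ^ (x₁ * y₂) ≡ e * (a : ℤ) ^ (x₂ * y₁) [ZMOD 2 ^ Z] := by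
    refine ⟨(-1) ^ y₂ * (-1) ^ y₁, ?_, ?_⟩
    · rw [← pow_add]; exact neg_one_pow_eq_or ℤ _
    · have g5 := g4.mul_left ((-1) ^ y₂ * (-1) ^ y₁)
      refine g3.trans (Int.ModEq.trans ?_ g5.symm)
      have : ((-1 : ℤ) ^ y₁) * (-1) ^ y₁ = 1 := by
        rw [← mul_pow]; norm_num
      have e2 : (-1 : ℤ) ^ y₂ * (-1) ^ y₁ * ((-1) ^ y₁ * (b : ℤ) ^ (y₁ * y₂)) =
          (-1) ^ y₂ * (b : ℤ) ^ (y₁ * y₂) := by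
        linear_combination (-1 : ℤ) ^ y₂ * (b : ℤ) ^ (y₁ * y₂) * this
      rw [e2]
  obtain ⟨e, he, hk⟩ := key
  have ha' : (a : ℤ) % 2 = 1 := by omega
  generalize x₁ * y₂ = M at *
  generalize x₂ * y₁ = N at *
  have fin : (2 : ℤ) ^ Z ∣ (a : ℤ) - 1 ∨ (2 : ℤ) ^ Z ∣ (a : ℤ) + 1 := by
    rcases le_total N M with hle | hle
    · obtain ⟨t, rfl⟩ : ∃ t, M = N + (2 * t + 1) := ⟨(M - N) / 2, by omega⟩
      exact cls_core ha' he hk.symm.dvd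
    · obtain ⟨t, rfl⟩ : ∃ t, N = M + (2 * t + 1) := ⟨(N - M) / 2, by omega⟩
      have h5 := hk.dvd
      apply cls_core ha' he (m := M) (t := t)
      have h6 := h5.mul_left e
      have e1 : e * e = 1 := by rcases he with rfl | rfl <;> norm_num
      have e2 : (a : ℤ) ^ (M + (2 * t + 1)) - e * (a : ℤ) ^ M =
          e * (e * (a : ℤ) ^ (M + (2 * t + 1)) - (a : ℤ) ^ M) := by
        linear_combination (-(a : ℤ) ^ (M + (2 * t + 1))) * e1
      rw [e2]; exact h6
  have h3' : (a : ℤ) + 1 < 2 ^ Z := by exact_mod_cast h3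
  rcases fin with h | h
  · have := Int.le_of_dvd (by omega) h; omega
  · have := Int.le_of_dvd (by omega) h; omega

lemma eo_even {a b : ℕ} (ha : a.Prime) (hb : b.Prime) (ha2 : a % 2 = 1) (hb2 : b % 2 = 1)
    {X l h : ℕ} (hX : 1 ≤ X) (hh : 2 ≤ h) (e : a ^ (2 * X) + b ^ (2 * l + 1) = 2 ^ (2 * h)) :
    a = 3 ∧ b = 7 ∧ X = 1 ∧ l = 0 ∧ h = 2 := by
  have hlt : a ^ X < 2 ^ h := by
    have : (a ^ X) ^ 2 < (2 ^ h) ^ 2 := by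
      rw [← pow_mul, ← pow_mul, mul_comm X 2, mul_comm h 2]
      have := pow_pos hb.pos (2 * l + 1)
      omega
    exact lt_of_pow_lt_pow_left₀ 2 (by positivity) this
  obtain ⟨s, hs⟩ := Nat.exists_eq_add_of_lt hlt
  have hmul : (s + 1) * (2 ^ h + a ^ X) = b ^ (2 * l + 1) := by
    have e' : (a ^ X) ^ 2 + b ^ (2 * l + 1) = (2 ^ h) ^ 2 := by
      rw [← pow_mul, ← pow_mul, mul_comm X 2, mul_comm h 2]; exact e
    rw [hs] at e' ⊢
    nlinarith
  have hs1 : s = 0 := by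
    obtain ⟨i, hi, hi'⟩ := (Nat.dvd_prime_pow hb).1 (Dvd.intro _ hmul)
    obtain ⟨j, hj, hj'⟩ := (Nat.dvd_prime_pow hb).1 (Dvd.intro_left _ hmul)
    by_contra hne
    have hi0 : i ≠ 0 := by rintro rfl; simp at hi'; omega
    have hj0 : j ≠ 0 := by
      rintro rfl
      have := pow_pos ha.pos X
      have := pow_pos (two_pos : 0 < 2) h
      simp at hj'; omega
    have d1 : b ∣ s + 1 := hi' ▸ dvd_pow_self b hi0
    have d2 : b ∣ 2 ^ h + a ^ X := hj' ▸ dvd_pow_self b hj0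
    have d3 : b ∣ 2 ^ (h + 1) := by
      have : 2 ^ (h + 1) = (s + 1) + (2 ^ h + a ^ X) := by rw [pow_succ]; omega
      rw [this]; exact dvd_add d1 d2
    have := (Nat.prime_dvd_prime_iff_eq hb Nat.prime_two).1 (hb.dvd_of_dvd_pow d3)
    omega
  subst hs1
  have hA : a ^ X + 1 = 2 ^ h := by omega
  have hB : b ^ (2 * l + 1) + 1 = 2 * 2 ^ h := by
    rw [← hmul]; omega
  obtain ⟨g, rfl⟩ : ∃ g, h = g + 2 := ⟨h - 2, by omega⟩
  have hb8 : b % 8 = 7 := by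
    rw [← odd_pow_mod8 hb2 (z := 2 * l + 1) (by omega)]
    rw [pow_add 2 g 2] at hB
    generalize b ^ (2 * l + 1) = B at *
    generalize 2 ^ g = G at *
    omega
  have h3 : a = 3 := by
    have m3 : a ^ X % 3 = 0 ∨ b ^ (2 * l + 1) % 3 = 0 := by
      have : ¬ 3 ∣ 2 ^ (g + 2) := fun hd => by
        have := Nat.prime_three.dvd_of_dvd_pow hd; omega
      generalize b ^ (2 * l + 1) = B at *
      generalize 2 ^ (g + 2) = G at *
      have : G % 3 = 1 ∨ G % 3 = 2 := by omega
      rcases this with h | h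
      · left; omega
      · right; omega
    rcases m3 with m | m
    · have := Nat.prime_three.dvd_of_dvd_pow (Nat.dvd_of_mod_eq_zero m)
      exact ((Nat.prime_dvd_prime_iff_eq Nat.prime_three ha).1 this).symm
    · have := Nat.prime_three.dvd_of_dvd_pow (Nat.dvd_of_mod_eq_zero m)
      have := ((Nat.prime_dvd_prime_iff_eq Nat.prime_three hb).1 this).symm
      omega
  subst h3
  have hg : g = 0 := by
    by_contra hg
    obtain ⟨f, rfl⟩ : ∃ f, g = f + 1 := ⟨g - 1, by omega⟩
    have h8 : 3 ^ X % 8 = 1 ∨ 3 ^ X % 8 = 3 := by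
      clear * -
      induction X with
      | zero => simp
      | succ n ih => rw [pow_succ]; omega
    have : 2 ^ (f + 1 + 2) = 8 * 2 ^ f := by ring
    omega
  subst hg
  have hX1 : X = 1 := by
    have : 3 ^ X = 3 ^ 1 := by omega
    exact Nat.pow_right_injective (le_refl _ |>.trans (by norm_num : 2 ≤ 3)) this
  have hB7 : b ^ (2 * l + 1) = 7 ^ 1 := by omega
  have hb7 := prime_pow_eq hb (by norm_num : Nat.Prime 7) (by norm_num) hB7
  subst hb7
  have : 2 * l + 1 = 1 := Nat.pow_right_injective (by norm_num : 2 ≤ 7) hB7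
  refine ⟨rfl, rfl, hX1, by omega, rfl⟩

lemma P_shift (r E : ℤ) (n j : ℕ) :
    P r E (n + 2 * j) = 2 * (P r E j * P r E (n + j)) - (r ^ 2 - E) ^ j * P r E n := by
  rw [← PQ_norm, two_mul, (PQ_add r E n (j + j)).1, (PQ_add r E j j).1, (PQ_add r E j j).2,
    (PQ_add r E n j).1]
  ring

lemma P_gcd {a : ℕ} (ha : a.Prime) (r E : ℤ) (hN : ¬ (a : ℤ) ∣ r ^ 2 - E) :
    ∀ s m n : ℕ, m + n ≤ s → m % 2 = 1 → n % 2 = 1 → (a : ℤ) ∣ P r E m → (a : ℤ) ∣ P r E n →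
      ∃ g, g % 2 = 1 ∧ g ∣ m ∧ g ∣ n ∧ (a : ℤ) ∣ P r E g := by
  have hp : Prime (a : ℤ) := Nat.prime_iff_prime_int.1 ha
  have hdrop : ∀ t j, (a : ℤ) ∣ P r E (t + 2 * j) → (a : ℤ) ∣ P r E j * P r E (t + j) →
      (a : ℤ) ∣ P r E t := by
    intro t j h1 h2
    rw [P_shift] at h1
    have h4 : (a : ℤ) ∣ (r ^ 2 - E) ^ j * P r E t := by
      have := dvd_sub (h2.mul_left 2) h1
      simpa using this
    rcases hp.dvd_or_dvd h4 with h | h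
    · exact absurd (hp.dvd_of_dvd_pow h) hN
    · exact h
  intro s
  induction s with
  | zero => intro m n h hm; omega
  | succ s ih =>
    have main : ∀ m n : ℕ, n < m → m + n ≤ s + 1 → m % 2 = 1 → n % 2 = 1 → (a : ℤ) ∣ P r E m →
        (a : ℤ) ∣ P r E n → ∃ g, g % 2 = 1 ∧ g ∣ m ∧ g ∣ n ∧ (a : ℤ) ∣ P r E g := by
      intro m n hlt hs hm hn dm dn
      by_cases h2 : 2 * n ≤ m
      · obtain ⟨t, rfl⟩ : ∃ t, m = t + 2 * n := ⟨m - 2 * n, by omega⟩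
        have dt := hdrop t n dm (dn.mul_right _)
        obtain ⟨g, g1, g2, g3, g4⟩ := ih t n (by omega) (by omega) hn dt dn
        exact ⟨g, g1, dvd_add g2 (g3.mul_left 2), g3, g4⟩
      · obtain ⟨d, rfl⟩ : ∃ d, m = n + d := ⟨m - n, by omega⟩
        obtain ⟨t, rfl⟩ : ∃ t, n = t + d := ⟨n - d, by omega⟩
        have e : t + d + d = t + 2 * d := by ring
        rw [e] at dm
        have dt := hdrop t d dm (dn.mul_left _)
        obtain ⟨g, g1, g2, g3, g4⟩ := ih t (t + d) (by omega) (by omega) hn dt dn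
        refine ⟨g, g1, ?_, g3, g4⟩
        exact dvd_add g3 ((Nat.dvd_add_right g2).1 g3)
    intro m n hs hm hn dm dn
    rcases lt_trichotomy n m with h | h | h
    · exact main m n h hs hm hn dm dn
    · subst h; exact ⟨n, hn, dvd_rfl, dvd_rfl, dn⟩
    · obtain ⟨g, g1, g2, g3, g4⟩ := main n m h (by omega) hn hm dn dm
      exact ⟨g, g1, g3, g2, g4⟩

lemma P_mul_dvd {a : ℤ} (r E : ℤ) (g : ℕ) (h : a ∣ P r E g) (i : ℕ) :
    a ∣ P r E (g * (2 * i + 1)) := by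
  induction i with
  | zero => simpa using h
  | succ i ih =>
    have e : g * (2 * (i + 1) + 1) = g * (2 * i + 1) + 2 * g := by ring
    rw [e, P_shift]
    exact dvd_sub ((h.mul_right _).mul_left 2) (ih.mul_left _)

end QD


namespace QD
open QuadraticAlgebra

lemma claimA {a b : ℕ} (ha : a.Prime) (hb : b.Prime) (ha2 : a % 2 = 1) (hab : a ≠ b)
    (hb2 : b % 2 = 1) (K : ℤ) (hK : 2 ≤ K) (hbK : (b : ℤ) = 4 * K - 1)
    (δ : QuadraticAlgebra ℤ (-K) 1) (N : ℕ) (hδ : Good 2 N δ)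
    (q : ℕ) (hq : q.Prime) (hq2 : q ≠ 2) (X l : ℕ)
    (h1 : |tr (δ ^ q)| = (a : ℤ) ^ X) (h2 : |(δ ^ q).im| = (b : ℤ) ^ l)
    (hd : (a : ℤ) ∣ tr δ) : False := by
  have hpa : Prime (a : ℤ) := Nat.prime_iff_prime_int.1 ha
  have hpb : Prime (b : ℤ) := Nat.prime_iff_prime_int.1 hb
  have hn := norm4 K δ
  have hnq := norm4 K (δ ^ q)
  obtain ⟨hN1, hN2, hN3⟩ := hδ
  rw [map_pow] at hnq
  rw [hN2] at hn hnq
  rw [← sq_abs (tr (δ ^ q)), ← sq_abs (δ ^ q).im, h1, h2] at hnq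
  obtain ⟨t1, t2⟩ := pow_tr_im δ q
  have eE : (4 * -K + 1 ^ 2) * δ.im ^ 2 = -((b : ℤ) * δ.im ^ 2) := by rw [hbK]; ring
  rw [eE] at t1 t2
  rw [← hbK] at hn hnq
  generalize tr δ = u at *
  generalize δ.im = v at *
  generalize tr (δ ^ q) = U at *
  generalize (δ ^ q).im = V at *
  have ha2' : ¬ (a : ℤ) ∣ 2 := by
    intro h
    have := Int.le_of_dvd (by norm_num) h
    have := ha.two_le
    omega
  have hb2' : ¬ (b : ℤ) ∣ 2 := by
    intro h
    have := Int.le_of_dvd (by norm_num) h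
    have := hb.two_le
    omega
  have h4 : (4 : ℤ) * 2 ^ N = 2 ^ (N + 2) := by ring
  have hav : ¬ (a : ℤ) ∣ -((b : ℤ) * v ^ 2) := by
    intro h
    have h5 : (a : ℤ) ∣ 2 ^ (N + 2) := by
      rw [← h4, hn]
      exact dvd_add (dvd_pow hd two_ne_zero) ((dvd_neg).1 h)
    exact ha2' (hpa.dvd_of_dvd_pow h5)
  have hbu : ¬ (b : ℤ) ∣ u := by
    intro h
    have h5 : (b : ℤ) ∣ 2 ^ (N + 2) := by
      rw [← h4, hn]
      exact dvd_add (dvd_pow h two_ne_zero) (Dvd.intro _ rfl)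
    exact hb2' (hpb.dvd_of_dvd_pow h5)
  have hq3 : 3 ≤ q := by have := hq.two_le; omega
  obtain ⟨W, hW, hW1, hW2⟩ := P_adic a q ha hq hq2 u (-((b : ℤ) * v ^ 2)) hd hav
  obtain ⟨Q1, Q2⟩ := Q_adic b q hb hq u (-((b : ℤ) * v ^ 2)) ((dvd_neg).2 (Dvd.intro _ rfl)) hbu
  have Q3 : ¬ (b : ℤ) ^ 2 ∣ Q u (-((b : ℤ) * v ^ 2)) q := by
    by_cases h5 : 5 ≤ q
    · exact Q2 h5
    · have hq3' : q = 3 := by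
        have : q ≠ 4 := by rintro rfl; exact absurd hq (by norm_num)
        omega
      intro h
      refine Q1 ?_ (dvd_trans (dvd_pow_self _ two_ne_zero) h)
      omega
  have cop : ∀ {p : ℕ}, p.Prime → p % 2 = 1 → ∀ {n : ℕ} {w : ℤ}, (p : ℤ) ^ n ∣ 2 * w →
      (p : ℤ) ^ n ∣ w := by
    intro p hp hp2 n w h
    refine IsCoprime.dvd_of_dvd_mul_left ?_ h
    apply IsCoprime.pow_left
    rw [Int.isCoprime_iff_gcd_eq_one]
    have : Nat.Coprime p 2 := (Nat.coprime_primes hp Nat.prime_two).2 (by omega)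
    simpa [Int.gcd] using this
  have da : (a : ℤ) ^ X ∣ q * u := by
    refine size_dvd ha (W := W) (cop ha ha2 ?_) hW1 hW2
    rw [← hW, ← t1]
    exact ((h1 ▸ (abs_dvd _ _).2 dvd_rfl : (a : ℤ) ^ X ∣ U)).mul_left _
  have db : (b : ℤ) ^ l ∣ q * v := by
    refine size_dvd hb (W := Q u (-((b : ℤ) * v ^ 2)) q) (cop hb hb2 ?_) Q1 Q3
    rw [← t2]
    exact ((h2 ▸ (abs_dvd _ _).2 dvd_rfl : (b : ℤ) ^ l ∣ V)).mul_left _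
  have hu0 : u ≠ 0 := by
    rintro rfl
    rw [hW] at t1
    have : U = 0 := by
      have : (2 : ℤ) ^ q ≠ 0 := by positivity
      simpa using t1
    rw [this] at h1
    have := pow_pos (by exact_mod_cast ha.pos : (0 : ℤ) < a) X
    simp at h1; omega
  have hv0 : v ≠ 0 := by rintro rfl; simp at hN3
  have hq0 : (q : ℤ) ≠ 0 := by exact_mod_cast hq.ne_zero
  have sa : ((a : ℤ) ^ X) ^ 2 ≤ (q * u) ^ 2 :=
    Int.le_of_dvd (by positivity) (pow_dvd_pow_of_dvd da 2)
  have sb : ((b : ℤ) ^ l) ^ 2 ≤ (q * v) ^ 2 :=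
    Int.le_of_dvd (by positivity) (pow_dvd_pow_of_dvd db 2)
  have hu9 : 9 ≤ u ^ 2 := by
    have h5 : (a : ℤ) ^ 2 ≤ u ^ 2 := Int.le_of_dvd (by positivity) (pow_dvd_pow_of_dvd hd 2)
    have : (3 : ℤ) ≤ a := by have := ha.two_le; omega
    nlinarith
  have hv1 : 1 ≤ v ^ 2 := by have : 0 < v ^ 2 := by positivity
                             omega
  have hb7 : (7 : ℤ) ≤ b := by omega
  have hM4 : 4 ≤ (2 : ℤ) ^ N := by nlinarith
  have := size1 _ q hM4 hq3
  have : (b : ℤ) * ((b : ℤ) ^ l) ^ 2 ≤ b * (q * v) ^ 2 := mul_le_mul_of_nonneg_left sb (by omega)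
  nlinarith

lemma good_pow {K : ℤ} {m : ℕ} {ε : QuadraticAlgebra ℤ (-K) 1} (h : Good 2 m ε) {k' q n : ℕ}
    (hk : 1 ≤ k') (hq : 1 ≤ q) (hg : Good 2 n ((ε ^ k') ^ q)) : Good 2 (m * k') (ε ^ k') := by
  refine good_of_pow 2 Int.prime_two (ε ^ k') n (m * k') q hq (Nat.mul_pos h.1 hk) ?_ _ hg ?_
  · rw [map_pow, h.2.1, pow_mul]
  · first | exact Or.inl rfl | simp [Sim]

lemma eo_odd {a b : ℕ} (ha : a.Prime) (hb : b.Prime) (ha2 : a % 2 = 1) (hb2 : b % 2 = 1)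
    (hab : a ≠ b) {X₁ l₁ w₁ X₂ l₂ w₂ : ℕ} (hX₁ : 1 ≤ X₁) (hX₂ : 1 ≤ X₂)
    (e₁ : a ^ (2 * X₁) + b ^ (2 * l₁ + 1) = 2 ^ (2 * w₁ + 3))
    (e₂ : a ^ (2 * X₂) + b ^ (2 * l₂ + 1) = 2 ^ (2 * w₂ + 3)) :
    X₁ = X₂ ∧ l₁ = l₂ ∧ w₁ = w₂ := by
  have hpa : Prime (a : ℤ) := Nat.prime_iff_prime_int.1 ha
  have hb8 : b % 8 = 7 := by
    have g1 := odd_sq_mod8 (pow_odd_nat ha2 X₁)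
    rw [← pow_mul, mul_comm X₁ 2] at g1
    rw [← odd_pow_mod8 hb2 (z := 2 * l₁ + 1) (by omega)]
    have : 2 ^ (2 * w₁ + 3) = 8 * 2 ^ (2 * w₁) := by ring
    omega
  obtain ⟨K, hK⟩ : ∃ K : ℤ, (b : ℤ) = 4 * K - 1 := ⟨((b : ℤ) + 1) / 4, by omega⟩
  have hK2 : 2 ≤ K := by omega
  have mk : ∀ {X l w : ℕ}, a ^ (2 * X) + b ^ (2 * l + 1) = 2 ^ (2 * w + 3) →
      GT (4 * K - 1) (2 * w + 1) ((a : ℤ) ^ X) ((b : ℤ) ^ l) := by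
    intro X l w e
    refine ⟨by omega, ?_, ?_⟩
    · rw [← hK, ← pow_mul, ← pow_mul, mul_comm X 2, mul_comm l 2, ← pow_succ']
      exact_mod_cast e
    · have := int_even_or_odd_pow hb2 l
      omega
  obtain ⟨m, ε, hε, hall⟩ := G1T K hK2 _ _ _ (mk e₁)
  obtain ⟨k₁, hk1, hn1, ht1, hi1⟩ := hall _ _ _ (mk e₁)
  obtain ⟨k₂, hk2, hn2, ht2, hi2⟩ := hall _ _ _ (mk e₂)
  have absp : ∀ (p n : ℕ), |(p : ℤ) ^ n| = (p : ℤ) ^ n := fun p n => abs_of_nonneg (by positivity)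
  rw [absp] at ht1 ht2 hi1 hi2
  have odd_of : ∀ {w k : ℕ}, 2 * w + 1 = m * k → k % 2 = 1 := by
    intro w k h
    by_contra hk
    obtain ⟨j, rfl⟩ : ∃ j, k = 2 * j := ⟨k / 2, by omega⟩
    have : m * (2 * j) = 2 * (m * j) := by ring
    omega
  have o1 := odd_of hn1
  have o2 := odd_of hn2
  obtain ⟨r, hr⟩ : ∃ r, r = tr ε := ⟨_, rfl⟩
  obtain ⟨E, hE⟩ : ∃ E, E = (4 * -K + 1 ^ 2) * ε.im ^ 2 := ⟨_, rfl⟩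
  have ha2' : ¬ (a : ℤ) ∣ 2 := by
    intro h
    have := Int.le_of_dvd (by norm_num) h
    have := ha.two_le
    omega
  have trP : ∀ k, (a : ℤ) ∣ tr (ε ^ k) ↔ (a : ℤ) ∣ P r E k := by
    intro k
    have := (pow_tr_im ε k).1
    rw [← hr, ← hE] at this
    constructor
    · intro h
      have h2 : (a : ℤ) ∣ 2 * P r E k := this ▸ h.mul_left _
      exact (hpa.dvd_or_dvd h2).resolve_left ha2'
    · intro h
      have h2 : (a : ℤ) ∣ 2 ^ k * tr (ε ^ k) := this ▸ h.mul_left _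
      exact (hpa.dvd_or_dvd h2).resolve_left (fun h => ha2' (hpa.dvd_of_dvd_pow h))
  have hN : ¬ (a : ℤ) ∣ r ^ 2 - E := by
    have h5 := norm4 K ε
    rw [hε.2.1] at h5
    have h6 : r ^ 2 - E = 2 ^ (m + 2) := by
      rw [hr, hE]; rw [pow_add]; linarith
    rw [h6]
    exact fun h => ha2' (hpa.dvd_of_dvd_pow h)
  have d1 : (a : ℤ) ∣ P r E k₁ := by
    rw [← trP, ← dvd_abs, ← ht1]; exact dvd_pow_self _ (by omega)
  have d2 : (a : ℤ) ∣ P r E k₂ := by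
    rw [← trP, ← dvd_abs, ← ht2]; exact dvd_pow_self _ (by omega)
  obtain ⟨g, g1, g2, g3, g4⟩ := P_gcd ha r E hN _ k₁ k₂ le_rfl o1 o2 d1 d2
  have eqg : ∀ {X l w k : ℕ}, a ^ (2 * X) + b ^ (2 * l + 1) = 2 ^ (2 * w + 3) →
      2 * w + 1 = m * k → (a : ℤ) ^ X = |tr (ε ^ k)| → (b : ℤ) ^ l = |(ε ^ k).im| → g ∣ k →
      k = g := by
    rintro X l w k e hn ht hi ⟨c, rfl⟩
    by_contra hne
    have hc : c ≠ 1 := by rintro rfl; simp at hne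
    have hk := odd_of hn
    obtain ⟨q, hq, c', rfl⟩ := Nat.exists_prime_and_dvd hc
    have hoq : q % 2 = 1 ∧ c' % 2 = 1 := by
      have h1 : Odd (g * (q * c')) := Nat.odd_iff.2 hk
      rw [Nat.odd_mul, Nat.odd_mul] at h1
      exact ⟨Nat.odd_iff.1 h1.2.1, Nat.odd_iff.1 h1.2.2⟩
    have e2 : ε ^ (g * (q * c')) = (ε ^ (g * c')) ^ q := by rw [← pow_mul]; congr 1; ring
    rw [e2] at ht hi
    have hg : Good 2 (m * (g * (q * c'))) ((ε ^ (g * c')) ^ q) := by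
      refine ⟨by omega, ?_, ?_⟩
      · rw [← e2, map_pow, hε.2.1, ← pow_mul]
      · intro h
        rw [← dvd_abs, ← hi] at h
        have := int_even_or_odd_pow hb2 l
        omega
    have hgc : 1 ≤ g * c' := Nat.mul_pos (by omega) (by omega)
    have hgood := good_pow hε hgc hq.one_le hg
    refine claimA ha hb ha2 hab hb2 K hK2 hK _ _ hgood q hq (by omega) X l ht.symm hi.symm ?_
    rw [trP]
    obtain ⟨i, rfl⟩ : ∃ i, c' = 2 * i + 1 := ⟨c' / 2, by omega⟩
    exact P_mul_dvd r E g g4 i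
  have k1 := eqg e₁ hn1 ht1 hi1 g2
  have k2 := eqg e₂ hn2 ht2 hi2 g3
  rw [k1] at ht1 hi1 hn1
  rw [k2] at ht2 hi2 hn2
  exact ⟨prime_pow_inj ha (ht1.trans ht2.symm), prime_pow_inj hb (hi1.trans hi2.symm), by omega⟩

lemma eo_eo {a b : ℕ} (ha : a.Prime) (hb : b.Prime) (ha2 : a % 2 = 1) (hb2 : b % 2 = 1)
    (hab : a ≠ b) {X₁ l₁ z₁ X₂ l₂ z₂ : ℕ} (hX₁ : 1 ≤ X₁) (hX₂ : 1 ≤ X₂)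
    (hz₁ : 3 ≤ z₁) (hz₂ : 3 ≤ z₂)
    (e₁ : a ^ (2 * X₁) + b ^ (2 * l₁ + 1) = 2 ^ z₁)
    (e₂ : a ^ (2 * X₂) + b ^ (2 * l₂ + 1) = 2 ^ z₂) :
    X₁ = X₂ ∧ l₁ = l₂ ∧ z₁ = z₂ := by
  have bad : ∀ {X l w : ℕ}, 1 ≤ X → 3 ^ (2 * X) + 7 ^ (2 * l + 1) = 2 ^ (2 * w + 1) → False := by
    intro X l w hX h
    have h1 : 3 ^ (2 * X) % 3 = 0 := by
      obtain ⟨Y, rfl⟩ : ∃ Y, X = Y + 1 := ⟨X - 1, by omega⟩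
      rw [show 2 * (Y + 1) = 2 * Y + 1 + 1 by ring, pow_succ]; omega
    have h2 : 7 ^ (2 * l + 1) % 3 = 1 := by rw [pow_odd_mod3]
    have h3 : 2 ^ (2 * w + 1) % 3 = 2 := by rw [pow_odd_mod3]
    generalize 3 ^ (2 * X) = A at *
    generalize 7 ^ (2 * l + 1) = B at *
    generalize 2 ^ (2 * w + 1) = C at *
    omega
  rcases even_or_odd' z₁ with ⟨h₁, rfl⟩ | ⟨h₁, rfl⟩
  · obtain ⟨rfl, rfl, rfl, rfl, rfl⟩ := eo_even ha hb ha2 hb2 hX₁ (by omega) e₁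
    rcases even_or_odd' z₂ with ⟨h₂, rfl⟩ | ⟨h₂, rfl⟩
    · obtain ⟨-, -, rfl, rfl, rfl⟩ := eo_even ha hb ha2 hb2 hX₂ (by omega) e₂
      simp
    · exact (bad hX₂ e₂).elim
  · rcases even_or_odd' z₂ with ⟨h₂, rfl⟩ | ⟨h₂, rfl⟩
    · obtain ⟨rfl, rfl, rfl, rfl, rfl⟩ := eo_even ha hb ha2 hb2 hX₂ (by omega) e₂
      exact (bad hX₁ e₁).elim
    · obtain ⟨w₁, rfl⟩ : ∃ w, h₁ = w + 1 := ⟨h₁ - 1, by omega⟩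
      obtain ⟨w₂, rfl⟩ : ∃ w, h₂ = w + 1 := ⟨h₂ - 1, by omega⟩
      obtain ⟨i, j, k⟩ := eo_odd ha hb ha2 hb2 hab hX₁ hX₂ (w₁ := w₁) (w₂ := w₂) e₁ e₂
      omega

end QD


namespace QD

lemma size_oo (m q : ℕ) (hm : 2 ≤ m) (hq : 5 ≤ q) (h : 12 * m ^ q ≤ 4 * m ^ 2 * q ^ 2 + 8) :
    m = 2 ∧ q = 5 := by
  obtain ⟨r, rfl⟩ : ∃ r, q = r + 2 := ⟨q - 2, by omega⟩
  have h1 : 3 * m ^ r ≤ (r + 2) ^ 2 := by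
    by_contra hc
    push Not at hc
    rw [pow_add] at h
    have h4 : 4 ≤ m ^ 2 := by nlinarith
    have : m ^ 2 * ((r + 2) ^ 2 + 1) ≤ m ^ 2 * (3 * m ^ r) := Nat.mul_le_mul_left _ hc
    nlinarith
  have hr : r = 3 := by
    by_contra hr
    obtain ⟨s, rfl⟩ : ∃ s, r = s + 4 := ⟨r - 4, by omega⟩
    have h2 : 2 ^ (s + 4) ≤ m ^ (s + 4) := Nat.pow_le_pow_left hm _
    have h3 : (s + 4 + 2) ^ 2 < 3 * 2 ^ (s + 4) := by
      clear * -
      induction s with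
      | zero => norm_num
      | succ s ih => rw [show s + 1 + 4 = s + 4 + 1 by ring, pow_succ 2]; generalize 2 ^ (s + 4) = G at *; ring_nf at ih ⊢; nlinarith [sq_nonneg s]
    omega
  subst hr
  refine ⟨?_, rfl⟩
  by_contra hc
  have h3 : 3 ≤ m := by omega
  have : 3 ^ 3 ≤ m ^ 3 := Nat.pow_le_pow_left h3 3
  omega

lemma factor3 {x y t : ℕ} (hx : x * y = 3 ^ t) (h : ¬ 3 ∣ x + y) (hxy : x ≤ y) : x = 1 := by
  obtain ⟨i, hi, rfl⟩ := (Nat.dvd_prime_pow Nat.prime_three).1 (Dvd.intro _ hx)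
  obtain ⟨j, hj, rfl⟩ := (Nat.dvd_prime_pow Nat.prime_three).1 (Dvd.intro_left _ hx)
  rcases Nat.eq_zero_or_pos i with rfl | h0
  · simp
  · have hj0 : j ≠ 0 := by
      rintro rfl
      have : 3 ^ 1 ≤ 3 ^ i := Nat.pow_le_pow_right (by norm_num) h0
      omega
    exact absurd (dvd_add (dvd_pow_self 3 h0.ne') (dvd_pow_self 3 hj0)) h

lemma not3_two_pow (n : ℕ) : ¬ 3 ∣ 2 ^ n := fun hd => by
  have := Nat.prime_three.dvd_of_dvd_pow hd; omega

/-- The exceptional descent with exponent three. -/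
lemma oo_three {b : ℕ} (hb : b.Prime) (u v : ℤ) (j t : ℕ) (hj : 1 ≤ j)
    (hn : 4 * ((2 : ℤ) ^ j) ^ 2 = u ^ 2 + 3 * b * v ^ 2)
    (hq : |u ^ 2 - b * v ^ 2| = 4 * 3 ^ t) : b = 5 ∨ b = 13 := by
  have hbv : ∀ p : ℕ, p.Prime → (b : ℤ) * v ^ 2 = p → b = p := by
    intro p hp h
    have : (b : ℤ) ∣ (p : ℤ) := Dvd.intro _ h
    exact (Nat.prime_dvd_prime_iff_eq hb hp).1 (by exact_mod_cast this)
  obtain ⟨w, hw⟩ : ∃ w : ℕ, (w : ℤ) = |u| := ⟨u.natAbs, by simp⟩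
  have hw2 : (w : ℤ) ^ 2 = u ^ 2 := by rw [hw, sq_abs]
  rw [← hw2] at hn hq
  have hm3 := not3_two_pow j
  have e2 : (2 : ℤ) ^ j = ((2 ^ j : ℕ) : ℤ) := by push_cast; rfl
  rw [e2] at hn
  rcases abs_eq (by positivity : (0 : ℤ) ≤ 4 * 3 ^ t) |>.1 hq with h | h
  · -- plus sign
    have h1 : (w : ℤ) ^ 2 = ((2 ^ j : ℕ) : ℤ) ^ 2 + 3 ^ (t + 1) := by rw [pow_succ 3 t]; linarith
    have h1' : w ^ 2 = (2 ^ j) ^ 2 + 3 ^ (t + 1) := by exact_mod_cast h1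
    have hlt : 2 ^ j < w := by
      have := pow_pos (by norm_num : 0 < 3) (t + 1)
      exact lt_of_pow_lt_pow_left₀ 2 (by positivity) (by omega)
    obtain ⟨d, rfl⟩ := Nat.exists_eq_add_of_lt hlt
    have h2 : (d + 1) * (2 * 2 ^ j + d + 1) = 3 ^ (t + 1) := by nlinarith
    have h3 := factor3 h2 (by
      intro hd
      have hd' : 3 ∣ (d + 1) * (2 * 2 ^ j + d + 1) := by rw [h2]; exact dvd_pow_self 3 (by omega)
      rcases Nat.prime_three.dvd_or_dvd hd' with h5 | h5 <;> omega) (by omega)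
    have h4 : d = 0 := by omega
    subst h4
    have h5 : 3 ^ (t + 1) = 2 ^ (j + 1) + 1 := by rw [← h2, pow_succ 2 j]; ring
    have hj2 : j = 2 := by rcases L0 _ _ h5 with h | h <;> omega
    subst hj2
    right
    have h6 : 3 ^ t = 3 := by rw [pow_succ] at h5; omega
    have h7 : (3 : ℤ) ^ t = 3 := by exact_mod_cast h6
    rw [h7] at h
    refine hbv 13 (by norm_num) ?_
    push_cast at h hn ⊢
    linarith
  · have h1 : ((2 ^ j : ℕ) : ℤ) ^ 2 = (w : ℤ) ^ 2 + 3 ^ (t + 1) := by rw [pow_succ 3 t]; linarith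
    have h1' : (2 ^ j) ^ 2 = w ^ 2 + 3 ^ (t + 1) := by exact_mod_cast h1
    have hlt : w < 2 ^ j := by
      have := pow_pos (by norm_num : 0 < 3) (t + 1)
      exact lt_of_pow_lt_pow_left₀ 2 (by positivity) (by omega)
    obtain ⟨d, hd⟩ := Nat.exists_eq_add_of_lt hlt
    rw [hd] at h1' hm3
    have h2 : (d + 1) * (2 * w + d + 1) = 3 ^ (t + 1) := by nlinarith
    have h3 := factor3 h2 (by intro hd; omega) (by omega)
    have h4 : d = 0 := by omega
    subst h4
    have h5 : 3 ^ (t + 1) + 1 = 2 * 2 ^ j := by rw [← h2, hd]; ring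
    have hj2 : j = 1 := by
      by_contra hj1
      obtain ⟨f, rfl⟩ : ∃ f, j = f + 2 := ⟨j - 2, by omega⟩
      have h8 : 3 ^ (t + 1) % 8 = 1 ∨ 3 ^ (t + 1) % 8 = 3 := by
        clear * -
        generalize t + 1 = X
        induction X with
        | zero => simp
        | succ n ih => rw [pow_succ]; omega
      have : 2 * 2 ^ (f + 2) = 8 * 2 ^ f := by ring
      omega
    subst hj2
    left
    have h6 : 3 ^ t = 1 := by rw [pow_succ] at h5; omega
    have h7 : (3 : ℤ) ^ t = 1 := by exact_mod_cast h6
    rw [h7] at h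
    refine hbv 5 (by norm_num) ?_
    push_cast at h hn ⊢
    linarith

end QD


namespace QD

set_option maxHeartbeats 1000000 in
lemma oo_prim {a b : ℕ} (ha : a.Prime) (hb : b.Prime) (ha2 : a % 2 = 1) (hb2 : b % 2 = 1)
    (hab : a < b) (x5 : ¬ (a = 3 ∧ b = 5)) (x13 : ¬ (a = 3 ∧ b = 13)) (K : ℤ)
    (hK : (a : ℤ) * b = 4 * K - 1)
    {i j w : ℕ} (u₀ : ℤ) (hu₀ : 2 * u₀ = (a : ℤ) ^ (2 * i + 1) - (b : ℤ) ^ (2 * j + 1))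
    (e : a ^ (2 * i + 1) + b ^ (2 * j + 1) = 2 ^ (w + 2)) :
    PrimT (4 * K - 1) (2 * w) u₀ ((a : ℤ) ^ i * (b : ℤ) ^ j) := by
  intro q J u v hq hJ hGT hP hQ
  rw [← hK] at hGT hP hQ
  obtain ⟨hJ1, hn, hv⟩ := hGT
  have hpa : Prime (a : ℤ) := Nat.prime_iff_prime_int.1 ha
  have hpb : Prime (b : ℤ) := Nat.prime_iff_prime_int.1 hb
  have ha3 : 3 ≤ a := by have := ha.two_le; omega
  have hb3 : 5 ≤ b := by omega
  have e' : (a : ℤ) ^ (2 * i + 1) + (b : ℤ) ^ (2 * j + 1) = 2 ^ (w + 2) := by exact_mod_cast e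
  have v0pos : (0 : ℤ) < (a : ℤ) ^ i * (b : ℤ) ^ j := by
    have : (0 : ℤ) < a := by omega
    have : (0 : ℤ) < b := by omega
    positivity
  rw [abs_of_pos v0pos] at hQ
  have v0odd : ((a : ℤ) ^ i * (b : ℤ) ^ j) % 2 = 1 :=
    odd_mul_mod (int_even_or_odd_pow ha2 i) (int_even_or_odd_pow hb2 j)
  have hAB : (a : ℤ) ^ (2 * i + 1) * (b : ℤ) ^ (2 * j + 1) =
      a * b * ((a : ℤ) ^ i * (b : ℤ) ^ j) ^ 2 := by ring
  by_cases hq2 : q = 2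
  · subst hq2
    rw [P_two] at hP
    have hw : w = J := by omega
    subst hw
    have e1 : |(a : ℤ) ^ (2 * i + 1) - (b : ℤ) ^ (2 * j + 1)| = |u ^ 2 - a * b * v ^ 2| := by
      rw [← hu₀, abs_mul]
      have : u ^ 2 + -(a * b : ℤ) * v ^ 2 = u ^ 2 - a * b * v ^ 2 := by ring
      rw [this] at hP
      norm_num at hP ⊢
      linarith
    rcases sum_prod_eq (e'.trans hn.symm) e1 with ⟨h, -⟩ | ⟨-, h⟩
    · exact odd_pow_not_sq ha i u h.symm
    · exact odd_pow_not_sq hb j u h.symm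
  have hq3 : 3 ≤ q := by have := hq.two_le; omega
  have hqo : q % 2 = 1 := by
    rcases hq.eq_two_or_odd with h | h <;> omega
  -- `J` is even
  obtain ⟨k, rfl⟩ : ∃ k, J = 2 * k := by
    rcases even_or_odd' J with h | ⟨k, rfl⟩
    · exact h
    · exfalso
      have h1 : Odd ((2 * k + 1) * q) := Odd.mul ⟨k, rfl⟩ (Nat.odd_iff.2 hqo)
      rw [← hJ, Nat.odd_iff] at h1
      omega
  have hw : w = k * q := by
    have : 2 * k * q = 2 * (k * q) := by ring
    omega
  have hk1 : 1 ≤ k := by omega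
  have hn' : 4 * ((2 : ℤ) ^ k) ^ 2 = u ^ 2 + a * b * v ^ 2 := by rw [hn]; ring
  have hsum : (a : ℤ) ^ (2 * i + 1) + (b : ℤ) ^ (2 * j + 1) = 4 * ((2 : ℤ) ^ k) ^ q := by
    rw [e', hw, pow_add, pow_mul]; ring
  obtain ⟨s, rfl⟩ : ∃ s, q = s + 1 := ⟨q - 1, by omega⟩
  have hvo : v % 2 = 1 := by omega
  obtain ⟨Qv, hQv⟩ : ∃ Qv, Qv = Q u (-(a * b : ℤ) * v ^ 2) (s + 1) := ⟨_, rfl⟩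
  rw [← hQv] at hQ
  have hQ' : (2 : ℤ) ^ s * ((a : ℤ) ^ i * (b : ℤ) ^ j) = |v| * |Qv| := by
    rw [abs_mul, pow_succ] at hQ; linarith
  obtain ⟨U, hU⟩ : (2 : ℤ) ^ s ∣ |Qv| := by
    have h1 : |v| % 2 = 1 := by rcases abs_choice v with h | h <;> rw [h] <;> omega
    apply two_pow_dvd_of_odd h1
    rw [mul_comm, ← hQ']; exact Dvd.intro _ rfl
  have h2s : (0 : ℤ) < 2 ^ s := by positivity
  have hv0 : (a : ℤ) ^ i * (b : ℤ) ^ j = |v| * U := by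
    rw [hU] at hQ'
    apply mul_left_cancel₀ h2s.ne'
    linarith
  have hvpos : 0 < |v| := abs_pos.2 (by rintro rfl; simp at hvo)
  have hUpos : 0 < U := (mul_pos_iff_of_pos_left hvpos).1 (hv0 ▸ v0pos)
  have dvdQ : ∀ d : ℤ, d ∣ U → d ∣ Qv := fun d hd => (dvd_abs _ _).1 (hU ▸ hd.mul_left _)
  have ndu : ∀ p : ℕ, p.Prime → p % 2 = 1 → (p : ℤ) ∣ (a : ℤ) * b → ¬ (p : ℤ) ∣ u := by
    intro p hp hp2 hd h
    have h5 : (p : ℤ) ∣ 2 ^ (2 * k + 2) := by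
      rw [← hn]; exact dvd_add (dvd_pow h two_ne_zero) (hd.mul_right _)
    have h6 := (Nat.prime_iff_prime_int.1 hp).dvd_of_dvd_pow h5
    have := Int.le_of_dvd (by norm_num) h6
    have := hp.two_le
    omega
  have adic : ∀ p : ℕ, p.Prime → p % 2 = 1 → (p : ℤ) ∣ (a : ℤ) * b →
      (p ≠ s + 1 → ¬ (p : ℤ) ∣ U) ∧ (5 ≤ s + 1 → ¬ (p : ℤ) ^ 2 ∣ U) := by
    intro p hp hp2 hd
    have h := Q_adic p (s + 1) hp hq u (-(a * b : ℤ) * v ^ 2)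
      (((dvd_neg).2 hd).mul_right _) (ndu p hp hp2 hd)
    rw [← hQv] at h
    exact ⟨fun h1 h2 => h.1 h1 (dvdQ _ h2), fun h1 h2 => h.2 h1 (dvdQ _ h2)⟩
  have aA := adic a ha ha2 (Dvd.intro _ rfl)
  have aB := adic b hb hb2 (Dvd.intro_left _ rfl)
  have hUd : U ∣ (a : ℤ) ^ i * (b : ℤ) ^ j := hv0 ▸ Dvd.intro_left _ rfl
  have strip : ∀ (p r : ℕ) (n m : ℕ), p.Prime → ¬ (p : ℤ) ∣ U →
      U ∣ (p : ℤ) ^ n * (r : ℤ) ^ m → U ∣ (r : ℤ) ^ m := by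
    intro p r n m hp hnd h
    refine IsCoprime.dvd_of_dvd_mul_left ?_ h
    apply IsCoprime.pow_right
    exact ((Prime.coprime_iff_not_dvd (Nat.prime_iff_prime_int.1 hp)).2 hnd).symm
  have small : ∀ (r m : ℕ), r.Prime → U ∣ (r : ℤ) ^ m → (r ≠ s + 1 → ¬ (r : ℤ) ∣ U) →
      ¬ (r : ℤ) ^ 2 ∣ U → U ≤ ((s + 1 : ℕ) : ℤ) := by
    intro r m hr h h1 h2
    by_cases hrq : r = s + 1
    · obtain ⟨t, -, ht⟩ := abs_eq_pow_of_dvd hr h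
      rw [abs_of_pos hUpos] at ht
      have ht1 : t ≤ 1 := by
        by_contra hc
        exact h2 (ht ▸ pow_dvd_pow _ (by omega))
      rw [ht, hrq]
      have : t = 0 ∨ t = 1 := by omega
      rcases this with rfl | rfl
      · simp
      · simp
    · have := abs_one_of_dvd hr h (h1 hrq)
      rw [abs_of_pos hUpos] at this
      rw [this]; push_cast; omega
  have hv2 : 1 ≤ v ^ 2 := by
    have : 0 < v ^ 2 := by rw [← sq_abs]; positivity
    omega
  -- the product
  have hprod : (a : ℤ) ^ (2 * i + 1) * (b : ℤ) ^ (2 * j + 1) = a * b * v ^ 2 * U ^ 2 := by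
    rw [hAB, hv0, mul_pow, sq_abs]; ring
  have huodd : 1 ≤ u ^ 2 := by
    have h0 : u ≠ 0 := by
      rintro rfl
      exact ndu a ha ha2 (Dvd.intro _ rfl) (dvd_zero _)
    have : 0 < u ^ 2 := by positivity
    omega
  have hA3 : (3 : ℤ) ≤ (a : ℤ) ^ (2 * i + 1) := by
    have h1 := Nat.le_self_pow (by omega : 2 * i + 1 ≠ 0) a
    exact_mod_cast ha3.trans h1
  have hB3 : (3 : ℤ) ≤ (b : ℤ) ^ (2 * j + 1) := by
    have h1 := Nat.le_self_pow (by omega : 2 * j + 1 ≠ 0) b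
    have : 3 ≤ b := by omega
    exact_mod_cast this.trans h1
  have hlow : 12 * ((2 : ℤ) ^ k) ^ (s + 1) - 9 ≤ (4 * ((2 : ℤ) ^ k) ^ 2 - 1) * U ^ 2 := by
    have h1 : a * b * v ^ 2 * U ^ 2 ≤ (4 * ((2 : ℤ) ^ k) ^ 2 - 1) * U ^ 2 :=
      mul_le_mul_of_nonneg_right (by linarith) (by positivity)
    have h2 := mul_nonneg (sub_nonneg.2 hA3) (sub_nonneg.2 hB3)
    rw [← hprod] at h1
    generalize (a : ℤ) ^ (2 * i + 1) = A at *
    generalize (b : ℤ) ^ (2 * j + 1) = B at *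
    have h3 : (A - 3) * (B - 3) = A * B - 3 * (A + B) + 9 := by ring
    rw [h3, hsum] at h2
    linarith
  have hm2 : 2 ≤ 2 ^ k := by
    calc 2 = 2 ^ 1 := by norm_num
      _ ≤ 2 ^ k := Nat.pow_le_pow_right (by norm_num) hk1
  have hm2' : (2 : ℤ) ≤ 2 ^ k := by exact_mod_cast hm2
  have hU1 : U ≠ 1 := by
    intro h
    rw [h] at hlow
    have h3 : ((2 : ℤ) ^ k) ^ 2 * 1 ≤ ((2 : ℤ) ^ k) ^ (s + 1) := by
      rw [mul_one]
      exact pow_le_pow_right₀ (by linarith) (by omega)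
    have h4 : (2 : ℤ) ^ 2 ≤ ((2 : ℤ) ^ k) ^ 2 := pow_le_pow_left₀ (by norm_num) hm2' 2
    linarith
  by_cases h5 : 5 ≤ s + 1
  · have hUq : U ≤ ((s + 1 : ℕ) : ℤ) := by
      by_cases hbq : b = s + 1
      · exact small b j hb (strip a b i j ha (aA.1 (by omega)) hUd) aB.1 (aB.2 h5)
      · exact small a i ha (strip b a j i hb (aB.1 hbq) (by rw [mul_comm]; exact hUd)) aA.1 (aA.2 h5)
    have hU2 : U ^ 2 ≤ ((s + 1 : ℕ) : ℤ) ^ 2 := pow_le_pow_left₀ hUpos.le hUq 2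
    have hs25 : (25 : ℤ) ≤ ((s + 1 : ℕ) : ℤ) ^ 2 := by
      have : (5 : ℤ) ≤ ((s + 1 : ℕ) : ℤ) := by exact_mod_cast h5
      nlinarith
    have hsz : 12 * ((2 : ℤ) ^ k) ^ (s + 1) ≤
        4 * ((2 : ℤ) ^ k) ^ 2 * ((s + 1 : ℕ) : ℤ) ^ 2 + 8 := by
      have : (4 * ((2 : ℤ) ^ k) ^ 2 - 1) * U ^ 2 ≤
          (4 * ((2 : ℤ) ^ k) ^ 2 - 1) * ((s + 1 : ℕ) : ℤ) ^ 2 :=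
        mul_le_mul_of_nonneg_left hU2 (by
          have h4 : (2 : ℤ) ^ 2 ≤ ((2 : ℤ) ^ k) ^ 2 := pow_le_pow_left₀ (by norm_num) hm2' 2
          linarith)
      linarith
    obtain ⟨hm, -⟩ := size_oo (2 ^ k) (s + 1) hm2 h5 (by exact_mod_cast hsz)
    have hm' : (2 : ℤ) ^ k = 2 := by exact_mod_cast hm
    rw [hm'] at hn'
    have hab16 : (a : ℤ) * b ≤ 15 := by
      have h0 : (0 : ℤ) ≤ (a : ℤ) * b := by positivity
      have h1 := le_mul_of_one_le_right h0 hv2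
      linarith
    have hab16' : a * b ≤ 15 := by exact_mod_cast hab16
    have : a = 3 := by
      by_contra hc
      have : 4 * 5 ≤ a * b := Nat.mul_le_mul (by omega) hb3
      omega
    have : b = 5 := by subst this; omega
    omega
  · have hs : s = 2 := by omega
    subst hs
    by_cases ha3' : a = 3
    · subst ha3'
      have hUd' : U ∣ ((3 : ℕ) : ℤ) ^ i :=
        strip b 3 j i hb (aB.1 (by omega)) (by rw [mul_comm]; exact hUd)
      obtain ⟨t, -, ht⟩ := abs_eq_pow_of_dvd Nat.prime_three hUd'
      rw [abs_of_pos hUpos] at ht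
      obtain ⟨t', rfl⟩ : ∃ t', t = t' + 1 := by
        refine ⟨t - 1, ?_⟩
        have : t ≠ 0 := by rintro rfl; simp at ht; exact hU1 ht
        omega
      rw [hQv, Q_three', ht] at hU
      have e4 : 3 * u ^ 2 + -(((3 : ℕ) : ℤ) * b) * v ^ 2 = 3 * (u ^ 2 - b * v ^ 2) := by
        push_cast; ring
      rw [e4, abs_mul, pow_succ ((3 : ℕ) : ℤ) t'] at hU
      push_cast at hU hn'
      have h3 : |u ^ 2 - b * v ^ 2| = 4 * 3 ^ t' := by
        norm_num at hU; linarith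
      rcases oo_three hb u v k t' hk1 hn' h3 with h | h
      · exact x5 ⟨rfl, h⟩
      · exact x13 ⟨rfl, h⟩
    · have h1 := abs_one_of_dvd ha
        (strip b a j i hb (aB.1 (by omega)) (by rw [mul_comm]; exact hUd)) (aA.1 (by omega))
      rw [abs_of_pos hUpos] at h1
      exact hU1 h1

lemma oo_oo {a b : ℕ} (ha : a.Prime) (hb : b.Prime) (ha2 : a % 2 = 1) (hb2 : b % 2 = 1)
    (hab : a < b) (x5 : ¬ (a = 3 ∧ b = 5)) (x13 : ¬ (a = 3 ∧ b = 13))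
    {i₁ j₁ z₁ i₂ j₂ z₂ : ℕ} (hz₁ : 3 ≤ z₁) (hz₂ : 3 ≤ z₂)
    (e₁ : a ^ (2 * i₁ + 1) + b ^ (2 * j₁ + 1) = 2 ^ z₁)
    (e₂ : a ^ (2 * i₂ + 1) + b ^ (2 * j₂ + 1) = 2 ^ z₂) :
    i₁ = i₂ ∧ j₁ = j₂ ∧ z₁ = z₂ := by
  have hab4 : (a * b) % 4 = 3 := by
    have h1 : (a ^ (2 * i₁ + 1)) % 4 = a % 4 := pow_odd_mod4 ha2 i₁
    have h2 : (b ^ (2 * j₁ + 1)) % 4 = b % 4 := pow_odd_mod4 hb2 j₁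
    obtain ⟨f, rfl⟩ : ∃ f, z₁ = f + 2 := ⟨z₁ - 2, by omega⟩
    rw [pow_add 2 f] at e₁
    generalize a ^ (2 * i₁ + 1) = A at *
    generalize b ^ (2 * j₁ + 1) = B at *
    have h3 : a % 4 = 1 ∧ b % 4 = 3 ∨ a % 4 = 3 ∧ b % 4 = 1 := by omega
    rw [Nat.mul_mod]
    rcases h3 with ⟨h, h'⟩ | ⟨h, h'⟩ <;> rw [h, h']
  have hab15 : 15 ≤ a * b := by
    have h1 : 3 ≤ a := by have := ha.two_le; omega
    have h2 : 5 ≤ b := by omega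
    exact Nat.mul_le_mul h1 h2
  obtain ⟨K, hK⟩ : ∃ K : ℤ, ((a * b : ℕ) : ℤ) = 4 * K - 1 := ⟨(((a * b : ℕ) : ℤ) + 1) / 4, by omega⟩
  have hK2 : 2 ≤ K := by omega
  rw [Nat.cast_mul] at hK
  have mk : ∀ {i j w : ℕ} (u₀ : ℤ), 1 ≤ w →
      2 * u₀ = (a : ℤ) ^ (2 * i + 1) - (b : ℤ) ^ (2 * j + 1) →
      a ^ (2 * i + 1) + b ^ (2 * j + 1) = 2 ^ (w + 2) →
      GT (4 * K - 1) (2 * w) u₀ ((a : ℤ) ^ i * (b : ℤ) ^ j) := by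
    intro i j w u₀ hw hu e
    have e' : (a : ℤ) ^ (2 * i + 1) + (b : ℤ) ^ (2 * j + 1) = 2 ^ (w + 2) := by exact_mod_cast e
    refine ⟨by omega, ?_, ?_⟩
    · rw [← hK]
      have h1 : (2 : ℤ) ^ (2 * w + 2) * 4 = (2 ^ (w + 2)) ^ 2 := by ring
      have h2 : (2 * u₀) ^ 2 + 4 * ((a : ℤ) ^ (2 * i + 1) * (b : ℤ) ^ (2 * j + 1)) =
          (2 ^ (w + 2)) ^ 2 := by rw [hu, ← e']; ring
      have hAB : (a : ℤ) ^ (2 * i + 1) * (b : ℤ) ^ (2 * j + 1) =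
        a * b * ((a : ℤ) ^ i * (b : ℤ) ^ j) ^ 2 := by ring
      rw [hAB] at h2
      linarith
    · have := odd_mul_mod (int_even_or_odd_pow ha2 i) (int_even_or_odd_pow hb2 j)
      omega
  have half : ∀ (i j : ℕ), ∃ u₀ : ℤ, 2 * u₀ = (a : ℤ) ^ (2 * i + 1) - (b : ℤ) ^ (2 * j + 1) := by
    intro i j
    have h1 := int_even_or_odd_pow ha2 (2 * i + 1)
    have h2 := int_even_or_odd_pow hb2 (2 * j + 1)
    generalize (a : ℤ) ^ (2 * i + 1) = A at *
    generalize (b : ℤ) ^ (2 * j + 1) = B at *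
    exact ⟨(A - B) / 2, by omega⟩
  obtain ⟨w₁, rfl⟩ : ∃ w, z₁ = w + 2 := ⟨z₁ - 2, by omega⟩
  obtain ⟨w₂, rfl⟩ : ∃ w, z₂ = w + 2 := ⟨z₂ - 2, by omega⟩
  obtain ⟨u₁, hu₁⟩ := half i₁ j₁
  obtain ⟨u₂, hu₂⟩ := half i₂ j₂
  obtain ⟨g1, g2, -⟩ := G2T K hK2 _ _ _ _ _ _ (mk u₁ (by omega) hu₁ e₁) (mk u₂ (by omega) hu₂ e₂)
    (oo_prim ha hb ha2 hb2 hab x5 x13 K hK u₁ hu₁ e₁)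
    (oo_prim ha hb ha2 hb2 hab x5 x13 K hK u₂ hu₂ e₂)
  have hw : w₁ = w₂ := by omega
  subst hw
  have s : (a : ℤ) ^ (2 * i₁ + 1) + (b : ℤ) ^ (2 * j₁ + 1) =
      (a : ℤ) ^ (2 * i₂ + 1) + (b : ℤ) ^ (2 * j₂ + 1) := by exact_mod_cast e₁.trans e₂.symm
  have d : |(a : ℤ) ^ (2 * i₁ + 1) - (b : ℤ) ^ (2 * j₁ + 1)| =
      |(a : ℤ) ^ (2 * i₂ + 1) - (b : ℤ) ^ (2 * j₂ + 1)| := by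
    rw [← hu₁, ← hu₂, abs_mul, abs_mul, g2]
  rcases sum_prod_eq s d with ⟨h, h'⟩ | ⟨h, -⟩
  · have := prime_pow_inj ha h
    have := prime_pow_inj hb h'
    omega
  · have h' : a ^ (2 * i₁ + 1) = b ^ (2 * j₂ + 1) := by exact_mod_cast h
    have := prime_pow_eq ha hb (by omega) h'
    omega

/-- at most one solution when `c = 2` -/
lemma c_two {a b : ℕ} (ha : a.Prime) (hb : b.Prime) (ha2 : a % 2 = 1) (hb2 : b % 2 = 1)
    (hab : a < b) (x5 : ¬ (a = 3 ∧ b = 5)) (x13 : ¬ (a = 3 ∧ b = 13))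
    {x₁ y₁ z₁ x₂ y₂ z₂ : ℕ} (hx₁ : 0 < x₁) (hy₁ : 0 < y₁) (hx₂ : 0 < x₂) (hy₂ : 0 < y₂)
    (e₁ : a ^ x₁ + b ^ y₁ = 2 ^ z₁) (e₂ : a ^ x₂ + b ^ y₂ = 2 ^ z₂) :
    x₁ = x₂ ∧ y₁ = y₂ ∧ z₁ = z₂ := by
  have ha3 : 3 ≤ a := by have := ha.two_le; omega
  have big : ∀ {x y z : ℕ}, 0 < x → 0 < y → a ^ x + b ^ y = 2 ^ z → a + 1 < 2 ^ z ∧ 3 ≤ z := by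
    intro x y z hx hy e
    have h1 := Nat.le_self_pow hx.ne' a
    have h2 := Nat.le_self_pow hy.ne' b
    refine ⟨by omega, ?_⟩
    by_contra hc
    have : 2 ^ z ≤ 2 ^ 2 := Nat.pow_le_pow_right (by norm_num) (by omega)
    omega
  obtain ⟨b1, zz1⟩ := big hx₁ hy₁ e₁
  obtain ⟨b2, zz2⟩ := big hx₂ hy₂ e₂
  have notEE : ∀ {X Y z : ℕ}, 3 ≤ z → a ^ (2 * X) + b ^ (2 * Y) = 2 ^ z → False := by
    intro X Y z hz e
    have h1 := pow_even_mod4 ha2 X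
    have h2 := pow_even_mod4 hb2 Y
    obtain ⟨f, rfl⟩ : ∃ f, z = f + 2 := ⟨z - 2, by omega⟩
    rw [pow_add 2 f] at e
    omega
  have same : (x₁ * y₂) % 2 = (x₂ * y₁) % 2 := by
    by_contra hne
    rcases le_total z₁ z₂ with h | h
    · exact cls ha2 (Z := z₁) (e₁ ▸ dvd_rfl) (e₂ ▸ pow_dvd_pow 2 h) hne (by omega) b1
    · exact cls ha2 (Z := z₂) (e₁ ▸ pow_dvd_pow 2 h) (e₂ ▸ dvd_rfl) hne (by omega) b2
  rcases even_or_odd' x₁ with ⟨X₁, rfl⟩ | ⟨X₁, rfl⟩ <;>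
  rcases even_or_odd' y₁ with ⟨Y₁, rfl⟩ | ⟨Y₁, rfl⟩ <;>
  rcases even_or_odd' x₂ with ⟨X₂, rfl⟩ | ⟨X₂, rfl⟩ <;>
  rcases even_or_odd' y₂ with ⟨Y₂, rfl⟩ | ⟨Y₂, rfl⟩
  any_goals exact (notEE zz1 e₁).elim
  any_goals exact (notEE zz2 e₂).elim
  any_goals (exfalso; simp [Nat.mul_mod, Nat.add_mod] at same; done)
  · obtain ⟨h1, h2, h3⟩ := eo_eo ha hb ha2 hb2 hab.ne (by omega) (by omega) zz1 zz2 e₁ e₂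
    omega
  · obtain ⟨h1, h2, h3⟩ := eo_eo hb ha hb2 ha2 hab.ne' (X₁ := Y₁) (X₂ := Y₂) (by omega) (by omega) zz1 zz2
      (by rw [add_comm]; exact e₁) (by rw [add_comm]; exact e₂)
    omega
  · obtain ⟨h1, h2, h3⟩ := oo_oo ha hb ha2 hb2 hab x5 x13 zz1 zz2 e₁ e₂
    omega

end QD


/-- Corollary 1.6: For distinct primes `a < b` with more than one solution of
`a^x + b^y = c^z` and `(a,b,c)` not an exceptional triple, there are exactly two
solutions, with `2 ∣ x₁`, `2 ∣ y₁`, `z₁ = 1`, `2 ∤ y₂`, and `z₂ > 1`. -/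
theorem stmt_3 (a b c : ℕ) (ha : Nat.Prime a) (hb : Nat.Prime b) (hc : Nat.Prime c)
    (hab : a < b) (hac : a ≠ c) (hbc : b ≠ c)
    (hmany : ∃ s t : ℕ × ℕ × ℕ, s ≠ t ∧
        (0 < s.1 ∧ 0 < s.2.1 ∧ 0 < s.2.2 ∧ a ^ s.1 + b ^ s.2.1 = c ^ s.2.2) ∧
        (0 < t.1 ∧ 0 < t.2.1 ∧ 0 < t.2.2 ∧ a ^ t.1 + b ^ t.2.1 = c ^ t.2.2))
    (hexc : (a, b, c) ≠ (2, 3, 5) ∧ (a, b, c) ≠ (2, 3, 11) ∧ (a, b, c) ≠ (2, 5, 3) ∧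
        (a, b, c) ≠ (2, 7, 3) ∧ (a, b, c) ≠ (3, 5, 2) ∧ (a, b, c) ≠ (3, 13, 2)) :
    ∃ x₁ y₁ z₁ x₂ y₂ z₂ : ℕ,
        (0 < x₁ ∧ 0 < y₁ ∧ 0 < z₁ ∧ a ^ x₁ + b ^ y₁ = c ^ z₁) ∧
        (0 < x₂ ∧ 0 < y₂ ∧ 0 < z₂ ∧ a ^ x₂ + b ^ y₂ = c ^ z₂) ∧
        (x₁, y₁, z₁) ≠ (x₂, y₂, z₂) ∧
        (∀ x y z : ℕ, 0 < x → 0 < y → 0 < z → a ^ x + b ^ y = c ^ z →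
          (x, y, z) = (x₁, y₁, z₁) ∨ (x, y, z) = (x₂, y₂, z₂)) ∧
        2 ∣ x₁ ∧ 2 ∣ y₁ ∧ z₁ = 1 ∧ ¬ (2 ∣ y₂) ∧ 1 < z₂ := by
  
  have podd : ∀ {p : ℕ}, p.Prime → p ≠ 2 → p % 2 = 1 := fun hp h =>
    hp.eq_two_or_odd.resolve_left h
  have hb2 : b ≠ 2 := by have := ha.two_le; omega
  obtain ⟨s, t, hst, hs, ht⟩ := hmany
  by_cases ha2 : a = 2
  · subst ha2
    obtain ⟨s', t', hs', ht', hne, hall, h1, h2, h3, h4, h5⟩ :=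
      QD.two_main hb hc hb2 (Ne.symm hac) hbc
        (fun h => hexc.1 (by rw [h.1, h.2])) (fun h => hexc.2.1 (by rw [h.1, h.2]))
        (fun h => hexc.2.2.1 (by rw [h.1, h.2])) (fun h => hexc.2.2.2.1 (by rw [h.1, h.2]))
        ⟨s, t, hst, hs, ht⟩
    refine ⟨s'.1, s'.2.1, s'.2.2, t'.1, t'.2.1, t'.2.2, hs', ht', hne, ?_, h1, h2, h3, h4, h5⟩
    intro x y z hx hy hz e
    exact hall (x, y, z) ⟨hx, hy, hz, e⟩
  · exfalso
    have hao := podd ha ha2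
    have hbo := podd hb hb2
    have hc2 : c = 2 := by
      by_contra hc2
      have h1 := QD.pow_odd_nat hao s.1
      have h2 := QD.pow_odd_nat hbo s.2.1
      have h3 := QD.pow_odd_nat (podd hc hc2) s.2.2
      have h4 := hs.2.2.2
      omega
    subst hc2
    obtain ⟨h1, h2, h3⟩ := QD.c_two ha hb hao hbo hab
      (fun h => hexc.2.2.2.2.1 (by rw [h.1, h.2])) (fun h => hexc.2.2.2.2.2 (by rw [h.1, h.2]))
      hs.1 hs.2.1 ht.1 ht.2.1 hs.2.2.2 ht.2.2.2
    exact hst (Prod.ext h1 (Prod.ext h2 h3))
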